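/- arXiv:1902.01303 — 2 statements merged into one kernel-verified Lean document; each statement's English description precedes it below -/
import Mathlib

section
/- Given C > 1, μ > 0, c > 0, d ≥ 2 and p ∈ {1,…,d−1}, there exist L ∈ ℕ and δ > 0 with the following property. Let I ⊆ ℤ be an interval and (g_i)_{i∈I} elements of GL(d,ℝ) with ‖g_i‖ ≤ C and ‖g_i⁻¹‖ ≤ C for all i ∈ I, such that σ_{p+1}(g_m⋯g_{n+1}g_n)/σ_p(g_m⋯g_{n+1}g_n) ≤ c·e^{−μ(m−n+1)} for all n ≤ m in I. Then for all n < k < m in I with min{k−n, m−k} > L, the products g_{k−1}⋯g_{n+1}g_n and g_k⁻¹g_{k+1}⁻¹⋯g_{m−1}⁻¹ have gaps of index p and d−p respectively, and ∠(U_p(g_{k−1}⋯g_{n+1}g_n), U_{d−p}(g_k⁻¹g_{k+1}⁻¹⋯g_{m−1}⁻¹)) > δ. -/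
noncomputable section

open scoped Matrix RealInnerProductSpace
open Filter Topology

namespace Paper

abbrev Euc (d : ℕ) : Type := EuclideanSpace ℝ (Fin d)

/-- The action of a `d × d` real matrix on Euclidean space. -/
def act {d : ℕ} (g : Matrix (Fin d) (Fin d) ℝ) (v : Euc d) : Euc d :=
  Matrix.toEuclideanCLM (𝕜 := ℝ) g v

/-- The operator norm of a matrix acting on Euclidean space. -/
def opNorm {d : ℕ} (g : Matrix (Fin d) (Fin d) ℝ) : ℝ :=
  ‖(Matrix.toEuclideanCLM (𝕜 := ℝ) g : Euc d →L[ℝ] Euc d)‖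

/-- The underlying matrix of an element of `GL (Fin d) ℝ`. -/
def mat {d : ℕ} (g : GL (Fin d) ℝ) : Matrix (Fin d) (Fin d) ℝ := ↑g

/-- The `p`-th singular value (`1`-indexed), via the min-max characterization:
`σ_p(g)` is the largest, over `p`-dimensional subspaces `P`, of the minimal
stretch of unit vectors of `P`. -/
def sv {d : ℕ} (g : Matrix (Fin d) (Fin d) ℝ) (p : ℕ) : ℝ :=
  sSup { r | ∃ P : Submodule ℝ (Euc d), Module.finrank ℝ P = p ∧
      r = sInf { t | ∃ v ∈ P, ‖v‖ = 1 ∧ t = ‖act g v‖ } }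

/-- `g` has a gap of index `p` if `σ_p(g) > σ_{p+1}(g)`. -/
def HasGap {d : ℕ} (g : Matrix (Fin d) (Fin d) ℝ) (p : ℕ) : Prop :=
  sv g (p + 1) < sv g p

/-- `U` is a Cartan attractor of index `p` for `g`: for some singular value
decomposition `g = k·a·l` (`k`, `l` orthogonal, `a` diagonal with decreasing
nonnegative entries), `U` is the span of the first `p` columns of `k`. -/
def IsCartanAttractor {d : ℕ} (g : Matrix (Fin d) (Fin d) ℝ) (p : ℕ)
    (U : Submodule ℝ (Euc d)) : Prop :=
  ∃ k l : Matrix (Fin d) (Fin d) ℝ, ∃ σ : Fin d → ℝ,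
    k ∈ Matrix.unitaryGroup (Fin d) ℝ ∧ l ∈ Matrix.unitaryGroup (Fin d) ℝ ∧
    (∀ i j : Fin d, i ≤ j → σ j ≤ σ i) ∧ (∀ i, 0 ≤ σ i) ∧
    g = k * Matrix.diagonal σ * l ∧
    U = Submodule.span ℝ { x : Euc d | ∃ i : Fin d, (i : ℕ) < p ∧
          x = (EuclideanSpace.equiv (Fin d) ℝ).symm (fun j => k j i) }

/-- The Cartan attractor `U_p(g)`; when `g` has a gap of index `p` it is the
unique subspace satisfying `IsCartanAttractor g p`. -/
def cartanAttractor {d : ℕ} (g : Matrix (Fin d) (Fin d) ℝ) (p : ℕ) :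
    Submodule ℝ (Euc d) :=
  letI := Classical.propDecidable (∃ U, IsCartanAttractor g p U)
  if h : ∃ U, IsCartanAttractor g p U then h.choose else ⊥

/-- The angle `∠(P,Q)` between two subspaces: the infimum of angles between
nonzero vectors of `P` and `Q`. -/
def subAngle {d : ℕ} (P Q : Submodule ℝ (Euc d)) : ℝ :=
  sInf { θ | ∃ v ∈ P, v ≠ 0 ∧ ∃ w ∈ Q, w ≠ 0 ∧ θ = InnerProductGeometry.angle v w }

/-- `sin ∠(v,w)`. -/
def sinAngle {d : ℕ} (v w : Euc d) : ℝ := Real.sin (InnerProductGeometry.angle v w)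

/-- The distance `d(P,Q) = max_{v ∈ P∖{0}} min_{w ∈ Q∖{0}} sin ∠(v,w)`. -/
def grassDist {d : ℕ} (P Q : Submodule ℝ (Euc d)) : ℝ :=
  sSup { r | ∃ v ∈ P, v ≠ 0 ∧
      r = sInf { s | ∃ w ∈ Q, w ≠ 0 ∧ s = sinAngle v w } }

/-- The image `g·P` of a subspace under a matrix. -/
def mapMat {d : ℕ} (g : Matrix (Fin d) (Fin d) ℝ) (P : Submodule ℝ (Euc d)) :
    Submodule ℝ (Euc d) :=
  P.map ((Matrix.toEuclideanCLM (𝕜 := ℝ) g : Euc d →L[ℝ] Euc d) : Euc d →ₗ[ℝ] Euc d)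

/-- `m(g|_W)`, the minimal stretch of unit vectors of `W` under `g`. -/
def minRestrict {d : ℕ} (g : Matrix (Fin d) (Fin d) ℝ) (W : Submodule ℝ (Euc d)) : ℝ :=
  sInf { t | ∃ v ∈ W, ‖v‖ = 1 ∧ t = ‖act g v‖ }

/-- `‖g|_W‖`, the maximal stretch of unit vectors of `W` under `g`. -/
def normRestrict {d : ℕ} (g : Matrix (Fin d) (Fin d) ℝ) (W : Submodule ℝ (Euc d)) : ℝ :=
  sSup { t | ∃ v ∈ W, ‖v‖ = 1 ∧ t = ‖act g v‖ }


/-- `prodSeq g n k = g (n+k-1) * ⋯ * g (n+1) * g n`. -/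
def prodSeq {d : ℕ} (g : ℤ → GL (Fin d) ℝ) (n : ℤ) : ℕ → GL (Fin d) ℝ
  | 0 => 1
  | k + 1 => g (n + k) * prodSeq g n k

/-!
Let `π` be the orthogonal projection onto the top `p` left singular directions of a product and `ρ`
the one onto its top `p` right singular directions, so that the attracting subspace of the product
is the range of `π` and the Cartan attractor of index `d - p` of its inverse is the kernel of `ρ`.
Domination makes `π` converge exponentially fast as the product is extended into the past, and `ρ`
as it is extended into the future.

If unit vectors `u ∈ U_p` of the past and `y ∈ U_{d-p}` of the inverse of the future were too close,
then for a long time `T = 2 ^ N` the orbit of `u` would stay close both to the attracting subspaces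
of the past products and to the repelling subspaces of the future products. By a Cauchy–Binet
expansion, the largest `p`-dimensional volume expansion of a product over a window of length `2 * ℓ`
would then be at most `M * exp (-μ * ℓ)` times the product of those of its two halves. Iterating
over dyadic windows bounds the volume expansion over `[s, s + T)` by
`exp (-(N * μ / 2 - const) * T)`. As the factors and their inverses are bounded, it is also at least
`exp (-const * T)`, which is absurd once `N` is large.
-/

open scoped Matrix.Norms.L2Operator

section StarProjection

variable {R : Type*} [NormedRing R] [StarRing R] [CStarRing R]

/-- Telescoping: `(1 - π₀) π₂ = (1 - π₀) π₁ π₂ + (1 - π₀) (1 - π₁) π₂`. -/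
lemma norm_one_sub_mul_le_sum {π : ℕ → R} (hπ : ∀ i, IsStarProjection (π i)) (N : ℕ) :
    ‖(1 - π 0) * π N‖ ≤ ∑ i ∈ Finset.range N, ‖(1 - π i) * π (i + 1)‖ := by
  induction N with
  | zero => simp [(hπ 0).one_sub_mul_self]
  | succ N ih =>
    have split : (1 - π 0) * π (N + 1) =
        (1 - π 0) * π N * π (N + 1) + (1 - π 0) * ((1 - π N) * π (N + 1)) := by noncomm_ring
    rw [Finset.sum_range_succ, split]
    refine (norm_add_le _ _).trans (add_le_add ((norm_mul_le _ _).trans ?_)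
      ((norm_mul_le _ _).trans ?_))
    · exact (mul_le_of_le_one_right (norm_nonneg _) (hπ _).norm_le).trans ih
    · exact mul_le_of_le_one_left (norm_nonneg _) (hπ 0).one_sub.norm_le

lemma norm_one_sub_mul_le_geometric {π : ℕ → R} (hπ : ∀ i, IsStarProjection (π i)) {N : ℕ}
    {B r : ℝ} (hB : 0 ≤ B) (hr0 : 0 ≤ r) (hr1 : r < 1)
    (hstep : ∀ i < N, ‖(1 - π i) * π (i + 1)‖ ≤ B * r ^ i) :
    ‖(1 - π 0) * π N‖ ≤ B / (1 - r) :=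
  calc ‖(1 - π 0) * π N‖ ≤ ∑ i ∈ Finset.range N, ‖(1 - π i) * π (i + 1)‖ :=
        norm_one_sub_mul_le_sum hπ N
    _ ≤ ∑ i ∈ Finset.range N, B * r ^ i :=
        Finset.sum_le_sum fun i hi => hstep i (Finset.mem_range.1 hi)
    _ = B * ∑ i ∈ Finset.range N, r ^ i := (Finset.mul_sum ..).symm
    _ ≤ B * (1 - r)⁻¹ := by
        rw [← tsum_geometric_of_lt_one hr0 hr1]
        gcongr
        exact (summable_geometric_of_lt_one hr0 hr1).sum_le_tsum _ fun i _ => pow_nonneg hr0 i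
    _ = B / (1 - r) := (div_eq_mul_inv ..).symm

end StarProjection

/-! ### Singular value decompositions -/

section Act

variable {d : ℕ} (g h : Matrix (Fin d) (Fin d) ℝ) (v w : Euc d)

lemma act_mul : act (g * h) v = act g (act h v) := by simp [act]

lemma act_one : act (1 : Matrix (Fin d) (Fin d) ℝ) v = v := by simp [act]

lemma act_zero : act g (0 : Euc d) = 0 := map_zero _

lemma act_sub : act g (v - w) = act g v - act g w := map_sub _ v w

lemma act_add : act g (v + w) = act g v + act g w := map_add _ v w

lemma act_smul (r : ℝ) : act g (r • v) = r • act g v := map_smul _ r v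

lemma add_act : act (g + h) v = act g v + act h v := by simp [act]

lemma sub_act : act (g - h) v = act g v - act h v := by simp [act]

lemma norm_act_le : ‖act g v‖ ≤ ‖g‖ * ‖v‖ :=
  (Matrix.toEuclideanCLM (𝕜 := ℝ) g).le_opNorm v

lemma act_apply (i : Fin d) : act g v i = ∑ j, g i j * v j := by
  simp [act, Matrix.mulVec, dotProduct]

lemma act_diagonal_apply (s : Fin d → ℝ) (i : Fin d) :
    act (Matrix.diagonal s) v i = s i * v i := by
  simp [act, Matrix.mulVec_diagonal]

variable {g h v w}

lemma norm_act_le_of_norm_le_one (hg : ‖g‖ ≤ 1) : ‖act g v‖ ≤ ‖v‖ :=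
  (norm_act_le g v).trans (mul_le_of_le_one_left (norm_nonneg v) hg)

lemma norm_act_le_of_le {r : ℝ} (hg : ‖g‖ ≤ r) : ‖act g v‖ ≤ r * ‖v‖ :=
  (norm_act_le g v).trans (mul_le_mul_of_nonneg_right hg (norm_nonneg v))

end Act

section Unitary

variable {d : ℕ} {k : Matrix (Fin d) (Fin d) ℝ}

lemma norm_diagonal_le {s : Fin d → ℝ} {r : ℝ} (hr : 0 ≤ r) (hs : ∀ i, |s i| ≤ r) :
    ‖Matrix.diagonal s‖ ≤ r := by
  rw [Matrix.l2_opNorm_diagonal]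
  exact (pi_norm_le_iff_of_nonneg hr).2 hs

lemma act_star_act (hk : k ∈ Matrix.unitaryGroup (Fin d) ℝ) (v : Euc d) :
    act (star k) (act k v) = v := by
  rw [← act_mul, Unitary.star_mul_self_of_mem hk, act_one]

lemma act_act_star (hk : k ∈ Matrix.unitaryGroup (Fin d) ℝ) (v : Euc d) :
    act k (act (star k) v) = v := by
  rw [← act_mul, Unitary.mul_star_self_of_mem hk, act_one]

lemma norm_le_one_of_mem_unitary (hk : k ∈ Matrix.unitaryGroup (Fin d) ℝ) : ‖k‖ ≤ 1 := by
  rw [← mul_one k, CStarRing.norm_mem_unitary_mul _ hk]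
  exact IsStarProjection.norm_le _ (.one _)

lemma norm_act_of_mem_unitary (hk : k ∈ Matrix.unitaryGroup (Fin d) ℝ) (v : Euc d) :
    ‖act k v‖ = ‖v‖ := by
  refine le_antisymm (norm_act_le_of_norm_le_one (norm_le_one_of_mem_unitary hk)) ?_
  conv_lhs => rw [← act_star_act hk v]
  exact norm_act_le_of_norm_le_one (norm_le_one_of_mem_unitary (Unitary.star_mem hk))

lemma submatrix_mem_unitaryGroup (hk : k ∈ Matrix.unitaryGroup (Fin d) ℝ)
    (e f : Fin d ≃ Fin d) : k.submatrix e f ∈ Matrix.unitaryGroup (Fin d) ℝ := by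
  rw [Matrix.mem_unitaryGroup_iff'] at hk ⊢
  rw [Matrix.star_eq_conjTranspose, Matrix.conjTranspose_submatrix, Matrix.submatrix_mul_equiv,
    ← Matrix.star_eq_conjTranspose, hk, Matrix.submatrix_one_equiv]

lemma submatrix_mul_diagonal_mul_submatrix (a b : Matrix (Fin d) (Fin d) ℝ) (s : Fin d → ℝ)
    (e : Fin d ≃ Fin d) :
    a.submatrix id e * Matrix.diagonal (s ∘ e) * b.submatrix e id =
      a * Matrix.diagonal s * b := by
  rw [← Matrix.submatrix_diagonal_equiv, Matrix.submatrix_mul_equiv, Matrix.submatrix_mul_equiv,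
    Matrix.submatrix_id_id]

end Unitary

/-- A singular value decomposition `A = k * diagonal s * l`, with the singular values listed in
decreasing order and indexed from `0`. It is a structure rather than an existence statement because
the projections below depend on the choice of `k` and `l`. -/
structure SVD {d : ℕ} (A : Matrix (Fin d) (Fin d) ℝ) where
  /-- The orthogonal factor whose columns are the left singular vectors. -/
  k : Matrix (Fin d) (Fin d) ℝ
  /-- The orthogonal factor whose rows are the right singular vectors. -/
  l : Matrix (Fin d) (Fin d) ℝ
  /-- The singular values. -/
  s : Fin d → ℝ
  k_mem : k ∈ Matrix.unitaryGroup (Fin d) ℝ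
  l_mem : l ∈ Matrix.unitaryGroup (Fin d) ℝ
  antitone : Antitone s
  nonneg : ∀ i, 0 ≤ s i
  eq : A = k * Matrix.diagonal s * l

/-- The orthogonal projection of `ℝ^d` onto the span of the first `p` basis vectors. -/
def coordProj (d p : ℕ) : Matrix (Fin d) (Fin d) ℝ :=
  Matrix.diagonal fun i => if (i : ℕ) < p then 1 else 0

section CoordProj

variable {d p : ℕ}

lemma isStarProjection_coordProj : IsStarProjection (coordProj d p) where
  isIdempotentElem := by simp [IsIdempotentElem, coordProj, Matrix.diagonal_mul_diagonal]
  isSelfAdjoint := by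
    rw [IsSelfAdjoint, coordProj, Matrix.star_eq_conjTranspose, Matrix.diagonal_conjTranspose]
    rfl

lemma one_sub_coordProj :
    1 - coordProj d p = Matrix.diagonal fun i : Fin d => if (i : ℕ) < p then 0 else 1 := by
  rw [coordProj, ← Matrix.diagonal_one, Matrix.diagonal_sub]
  congr! 2 with i
  split_ifs <;> simp

lemma act_coordProj_apply (v : Euc d) (i : Fin d) :
    act (coordProj d p) v i = if (i : ℕ) < p then v i else 0 := by
  simp [coordProj, act_diagonal_apply]

lemma isStarProjection_star_mul_coordProj_mul {k : Matrix (Fin d) (Fin d) ℝ}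
    (hk : k ∈ Matrix.unitaryGroup (Fin d) ℝ) :
    IsStarProjection (star k * coordProj d p * k) where
  isIdempotentElem := by
    have hJ := (isStarProjection_coordProj (d := d) (p := p)).isIdempotentElem.eq
    calc star k * coordProj d p * k * (star k * coordProj d p * k)
        = star k * (coordProj d p * (k * star k) * coordProj d p) * k := by noncomm_ring
      _ = star k * coordProj d p * k := by
        rw [Unitary.mul_star_self_of_mem hk, mul_one, hJ]
  isSelfAdjoint := isStarProjection_coordProj.isSelfAdjoint.conjugate' k

end CoordProj

section DimensionCount

variable {d : ℕ} {s : Fin d → ℝ} {v : Euc d}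

lemma exists_mem_act_apply_eq_zero {P : Submodule ℝ (Euc d)} {q : ℕ}
    (hq : q < Module.finrank ℝ P) (T : Matrix (Fin d) (Fin d) ℝ) :
    ∃ x ∈ P, ‖x‖ = 1 ∧ ∀ j : Fin d, (j : ℕ) < q → act T x j = 0 := by
  let restrict : Euc d →ₗ[ℝ] ({j : Fin d // (j : ℕ) < q} → ℝ) :=
    LinearMap.funLeft ℝ ℝ Subtype.val ∘ₗ (WithLp.linearEquiv 2 ℝ (Fin d → ℝ)).toLinearMap
      ∘ₗ (Matrix.toEuclideanCLM (𝕜 := ℝ) T).toLinearMap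
  have hcard : Fintype.card {j : Fin d // (j : ℕ) < q} ≤ q := by
    simpa using Fintype.card_le_of_injective
      (fun j : {j : Fin d // (j : ℕ) < q} => (⟨j.1, j.2⟩ : Fin q))
      fun i j hij => Subtype.ext (Fin.ext (by simpa using hij))
  have hker : LinearMap.ker (restrict ∘ₗ P.subtype) ≠ ⊥ :=
    LinearMap.ker_ne_bot_of_finrank_lt (by simpa using hcard.trans_lt hq)
  obtain ⟨x, hx, hx0⟩ := (Submodule.ne_bot_iff _).1 hker
  have hx0' : (x : Euc d) ≠ 0 := by simpa using hx0
  refine ⟨‖(x : Euc d)‖⁻¹ • (x : Euc d), P.smul_mem _ x.2, norm_smul_inv_norm hx0',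
    fun j hj => ?_⟩
  have hTx : act T (x : Euc d) j = 0 := congrFun (LinearMap.mem_ker.1 hx) ⟨j, hj⟩
  rw [act_smul, PiLp.smul_apply, hTx, smul_zero]

lemma mul_norm_le_norm_act_diagonal {i : Fin d} (hs : Antitone s) (hi : 0 ≤ s i)
    (hv : ∀ j, i < j → v j = 0) : s i * ‖v‖ ≤ ‖act (Matrix.diagonal s) v‖ := by
  rw [← abs_of_nonneg hi, ← Real.norm_eq_abs, ← norm_smul, EuclideanSpace.norm_eq,
    EuclideanSpace.norm_eq]
  refine Real.sqrt_le_sqrt (Finset.sum_le_sum fun j _ => ?_)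
  rw [act_diagonal_apply, PiLp.smul_apply, smul_eq_mul, norm_mul, norm_mul]
  rcases lt_or_ge i j with hij | hji
  · simp [hv j hij]
  · have : ‖s i‖ ≤ ‖s j‖ := by
      simpa only [Real.norm_eq_abs, abs_of_nonneg hi, abs_of_nonneg (hi.trans (hs hji))]
        using hs hji
    gcongr

lemma norm_act_diagonal_le {i : Fin d} (hs : Antitone s) (h0 : ∀ j, 0 ≤ s j)
    (hv : ∀ j, j < i → v j = 0) : ‖act (Matrix.diagonal s) v‖ ≤ s i * ‖v‖ := by
  rw [← abs_of_nonneg (h0 i), ← Real.norm_eq_abs, ← norm_smul, EuclideanSpace.norm_eq,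
    EuclideanSpace.norm_eq]
  refine Real.sqrt_le_sqrt (Finset.sum_le_sum fun j _ => ?_)
  rw [act_diagonal_apply, PiLp.smul_apply, smul_eq_mul, norm_mul, norm_mul]
  rcases lt_or_ge j i with hji | hij
  · simp [hv j hji]
  · have : ‖s j‖ ≤ ‖s i‖ := by
      simpa only [Real.norm_eq_abs, abs_of_nonneg (h0 _)] using hs hij
    gcongr

end DimensionCount

/-- The span of the first `q` columns of `k`, in the form used by `IsCartanAttractor`. -/
def colSpan {d : ℕ} (k : Matrix (Fin d) (Fin d) ℝ) (q : ℕ) : Submodule ℝ (Euc d) :=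
  Submodule.span ℝ { x : Euc d | ∃ i : Fin d, (i : ℕ) < q ∧
    x = (EuclideanSpace.equiv (Fin d) ℝ).symm (fun j => k j i) }

section ColSpan

variable {d q : ℕ} {k : Matrix (Fin d) (Fin d) ℝ}

lemma act_single (i : Fin d) : act k (EuclideanSpace.single i 1) =
    (EuclideanSpace.equiv (Fin d) ℝ).symm (fun j => k j i) := by
  ext j
  simp [act_apply]

lemma act_star_apply_eq_zero_of_mem_colSpan (hk : k ∈ Matrix.unitaryGroup (Fin d) ℝ) {v : Euc d}
    (hv : v ∈ colSpan k q) {j : Fin d} (hj : q ≤ j) : act (star k) v j = 0 := by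
  induction hv using Submodule.span_induction with
  | mem x hx =>
    obtain ⟨i, hi, rfl⟩ := hx
    rw [← act_single, act_star_act hk, PiLp.single_apply, if_neg]
    rintro rfl
    omega
  | zero => rw [act_zero]; rfl
  | add x y _ _ hx hy => rw [act_add, PiLp.add_apply, hx, hy, add_zero]
  | smul r x _ hx => rw [act_smul, PiLp.smul_apply, hx, smul_zero]

lemma finrank_colSpan (hk : k ∈ Matrix.unitaryGroup (Fin d) ℝ) (hq : q ≤ d) :
    Module.finrank ℝ (colSpan k q) = q := by
  have hindep : LinearIndependent ℝ fun i : Fin d => act k (EuclideanSpace.single i 1) := by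
    have hinj : LinearMap.ker (Matrix.toEuclideanCLM (𝕜 := ℝ) k).toLinearMap = ⊥ :=
      LinearMap.ker_eq_bot.2 (Function.LeftInverse.injective (act_star_act hk))
    simpa only [Function.comp_def, OrthonormalBasis.coe_toBasis, EuclideanSpace.basisFun_apply,
      ContinuousLinearMap.coe_coe, act] using
      (EuclideanSpace.basisFun (Fin d) ℝ).toBasis.linearIndependent.map' _ hinj
  have hspan : colSpan k q = Submodule.span ℝ
      (Set.range fun i : Fin q => act k (EuclideanSpace.single (Fin.castLE hq i) 1)) := by
    rw [colSpan]
    congr 1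
    ext x
    simp only [Set.mem_ofPred_eq, Set.mem_range, act_single]
    exact ⟨fun ⟨i, hi, hx⟩ => ⟨⟨i, hi⟩, hx.symm⟩, fun ⟨i, hx⟩ => ⟨_, i.2, hx.symm⟩⟩
  rw [hspan]
  exact (finrank_span_eq_card (hindep.comp _ (Fin.castLE_injective hq))).trans
    (Fintype.card_fin q)

end ColSpan

section MinMax

variable {d q : ℕ} {A : Matrix (Fin d) (Fin d) ℝ} {r : ℝ}

lemma sInf_norm_act_le {P : Submodule ℝ (Euc d)} {v : Euc d} (hv : v ∈ P) (hv1 : ‖v‖ = 1) :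
    sInf { t | ∃ v ∈ P, ‖v‖ = 1 ∧ t = ‖act A v‖ } ≤ ‖act A v‖ := by
  refine csInf_le ⟨0, ?_⟩ ⟨v, hv, hv1, rfl⟩
  rintro t ⟨w, _, _, rfl⟩
  exact norm_nonneg _

lemma sv_nonneg (A : Matrix (Fin d) (Fin d) ℝ) (q : ℕ) : 0 ≤ sv A q := by
  refine Real.sSup_nonneg ?_
  rintro _ ⟨P, _, rfl⟩
  refine Real.sInf_nonneg ?_
  rintro _ ⟨v, _, _, rfl⟩
  exact norm_nonneg _

lemma sv_le (hr : 0 ≤ r) (hstretch : ∀ P : Submodule ℝ (Euc d), Module.finrank ℝ P = q →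
    ∃ v ∈ P, ‖v‖ = 1 ∧ ‖act A v‖ ≤ r) : sv A q ≤ r := by
  refine Real.sSup_le ?_ hr
  rintro _ ⟨P, hP, rfl⟩
  obtain ⟨v, hv, hv1, hvr⟩ := hstretch P hP
  exact (sInf_norm_act_le hv hv1).trans hvr

lemma le_sv {P : Submodule ℝ (Euc d)} (hP : Module.finrank ℝ P = q) (hq : 0 < q)
    (hstretch : ∀ v ∈ P, r * ‖v‖ ≤ ‖act A v‖) : r ≤ sv A q := by
  have unit_mem (Q : Submodule ℝ (Euc d)) (hQ : Module.finrank ℝ Q = q) : ∃ v ∈ Q, ‖v‖ = 1 := by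
    obtain ⟨v, hv, hv1, -⟩ := exists_mem_act_apply_eq_zero (hQ ▸ hq) 1
    exact ⟨v, hv, hv1⟩
  have hbdd : BddAbove { r | ∃ P : Submodule ℝ (Euc d), Module.finrank ℝ P = q ∧
      r = sInf { t | ∃ v ∈ P, ‖v‖ = 1 ∧ t = ‖act A v‖ } } := by
    refine ⟨‖A‖, ?_⟩
    rintro _ ⟨Q, hQ, rfl⟩
    obtain ⟨v, hv, hv1⟩ := unit_mem Q hQ
    simpa [hv1] using (sInf_norm_act_le hv hv1).trans (norm_act_le A v)
  refine le_trans ?_ (le_csSup hbdd ⟨P, hP, rfl⟩)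
  obtain ⟨v, hv, hv1⟩ := unit_mem P hP
  refine le_csInf ⟨_, v, hv, hv1, rfl⟩ ?_
  rintro t ⟨w, hw, hw1, rfl⟩
  simpa [hw1] using hstretch w hw

end MinMax

namespace SVD

variable {d p : ℕ} {A B : Matrix (Fin d) (Fin d) ℝ} (h : SVD A)

lemma norm_act (v : Euc d) : ‖act A v‖ = ‖act (Matrix.diagonal h.s) (act h.l v)‖ := by
  conv_lhs => rw [h.eq, act_mul, act_mul, norm_act_of_mem_unitary h.k_mem]

lemma norm_act_le_of_apply_eq_zero {i : Fin d} {v : Euc d} (hv : ∀ j, j < i → act h.l v j = 0) :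
    ‖act A v‖ ≤ h.s i * ‖v‖ := by
  rw [h.norm_act, ← norm_act_of_mem_unitary h.l_mem v]
  exact norm_act_diagonal_le h.antitone h.nonneg hv

lemma le_norm_act_of_apply_eq_zero {i : Fin d} {v : Euc d} (hv : ∀ j, i < j → act h.l v j = 0) :
    h.s i * ‖v‖ ≤ ‖act A v‖ := by
  rw [h.norm_act, ← norm_act_of_mem_unitary h.l_mem v]
  exact mul_norm_le_norm_act_diagonal h.antitone (h.nonneg i) hv

lemma sv_mul_mul_le (D G : Matrix (Fin d) (Fin d) ℝ) (q : Fin d) :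
    sv (D * A * G) (q + 1) ≤ ‖D‖ * h.s q * ‖G‖ := by
  have hq := h.nonneg q
  refine sv_le (by positivity) fun P hP => ?_
  obtain ⟨v, hv, hv1, hlG⟩ := exists_mem_act_apply_eq_zero (P := P) (q := q) (by omega) (h.l * G)
  refine ⟨v, hv, hv1, ?_⟩
  calc ‖act (D * A * G) v‖ ≤ ‖D‖ * ‖act A (act G v)‖ := by
        rw [act_mul, act_mul]
        exact norm_act_le D _
    _ ≤ ‖D‖ * (h.s q * ‖act G v‖) := by
        gcongr
        exact h.norm_act_le_of_apply_eq_zero fun j hj => by rw [← act_mul]; exact hlG j hj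
    _ ≤ ‖D‖ * (h.s q * (‖G‖ * ‖v‖)) := by
        gcongr
        exact norm_act_le G v
    _ = ‖D‖ * h.s q * ‖G‖ := by rw [hv1]; ring

lemma sv_eq (q : Fin d) : sv A (q + 1) = h.s q := by
  apply le_antisymm
  · have norm_one_le : ‖(1 : Matrix (Fin d) (Fin d) ℝ)‖ ≤ 1 :=
      norm_le_one_of_mem_unitary (one_mem _)
    have hq := h.nonneg q
    calc sv A (q + 1) = sv (1 * A * 1) (q + 1) := by rw [one_mul, mul_one]
      _ ≤ 1 * h.s q * 1 := (h.sv_mul_mul_le 1 1 q).trans (by gcongr)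
      _ = h.s q := by ring
  · refine le_sv (finrank_colSpan (Unitary.star_mem h.l_mem) q.2) q.val.succ_pos fun v hv => ?_
    refine h.le_norm_act_of_apply_eq_zero fun j hj => ?_
    simpa only [star_star] using
      act_star_apply_eq_zero_of_mem_colSpan (Unitary.star_mem h.l_mem) hv (Nat.succ_le_of_lt hj)

lemma s_le_sv {i : Fin d} (hi : p ≤ i) : h.s i ≤ sv A (p + 1) := by
  rw [h.sv_eq ⟨p, hi.trans_lt i.2⟩]
  exact h.antitone hi

lemma sv_le_s {i : Fin d} (hi : i < p) (hp : p ≤ d) : sv A p ≤ h.s i := by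
  obtain ⟨q, rfl⟩ := Nat.exists_eq_add_of_lt hi
  have := h.sv_eq ⟨i + q, by omega⟩
  simp only at this
  rw [this]
  exact h.antitone (by simp [Fin.le_def])

end SVD

section Existence

variable {d : ℕ} {A : Matrix (Fin d) (Fin d) ℝ}

lemma exists_antitone_diagonalization {H : Matrix (Fin d) (Fin d) ℝ} (hH : H.PosDef) :
    ∃ V ∈ Matrix.unitaryGroup (Fin d) ℝ, ∃ ev : Fin d → ℝ, Antitone ev ∧ (∀ i, 0 < ev i) ∧
      H = V * Matrix.diagonal ev * star V := by
  let ev := hH.isHermitian.eigenvalues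
  let U : Matrix (Fin d) (Fin d) ℝ := hH.isHermitian.eigenvectorUnitary
  let e : Fin d ≃ Fin d := Tuple.sort fun i => -ev i
  refine ⟨U.submatrix id e, submatrix_mem_unitaryGroup (SetLike.coe_mem _) (Equiv.refl _) e,
    ev ∘ e, fun i j hij => neg_le_neg_iff.1 (Tuple.monotone_sort (fun i => -ev i) hij),
    fun i => hH.eigenvalues_pos _, ?_⟩
  rw [Matrix.star_eq_conjTranspose, Matrix.conjTranspose_submatrix,
    submatrix_mul_diagonal_mul_submatrix]
  exact hH.isHermitian.spectral_theorem

lemma nonempty_svd (hA : IsUnit A) : Nonempty (SVD A) := by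
  obtain ⟨V, hV, ev, hev, hpos, hspec⟩ := exists_antitone_diagonalization
    (Matrix.PosDef.conjTranspose_mul_self A (Matrix.mulVec_injective_of_isUnit hA))
  let s : Fin d → ℝ := fun i => √(ev i)
  have hs (i : Fin d) : s i ≠ 0 := (Real.sqrt_pos.2 (hpos i)).ne'
  let E : Matrix (Fin d) (Fin d) ℝ := Matrix.diagonal s⁻¹
  have hE : star E = E := by simp [E, Matrix.star_eq_conjTranspose]
  have hEs : E * Matrix.diagonal s = 1 := by
    rw [Matrix.diagonal_mul_diagonal, ← Matrix.diagonal_one]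
    congr! 2 with i
    exact inv_mul_cancel₀ (hs i)
  have hEevE : E * Matrix.diagonal ev * E = 1 := by
    rw [Matrix.diagonal_mul_diagonal, Matrix.diagonal_mul_diagonal, ← Matrix.diagonal_one]
    congr! 2 with i
    have hsi := hs i
    rw [← Real.mul_self_sqrt (hpos i).le]
    change (s i)⁻¹ * (s i * s i) * (s i)⁻¹ = 1
    field_simp
  refine ⟨⟨A * V * E, star V, s, ?_, Unitary.star_mem hV,
    fun i j hij => Real.sqrt_le_sqrt (hev hij), fun i => Real.sqrt_nonneg _, ?_⟩⟩
  · rw [Matrix.mem_unitaryGroup_iff']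
    calc star (A * V * E) * (A * V * E) = E * star V * (Aᴴ * A) * V * E := by
          rw [star_mul, star_mul, hE, Matrix.star_eq_conjTranspose A]
          noncomm_ring
      _ = E * (star V * V) * Matrix.diagonal ev * (star V * V) * E := by
          rw [hspec]
          noncomm_ring
      _ = 1 := by rw [Unitary.star_mul_self_of_mem hV, mul_one, mul_one, hEevE]
  · calc A = A * (V * star V) := by rw [Unitary.mul_star_self_of_mem hV, mul_one]
      _ = A * V * (E * Matrix.diagonal s) * star V := by rw [hEs]; noncomm_ring
      _ = A * V * E * Matrix.diagonal s * star V := by noncomm_ring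

end Existence

lemma mul_mul_mul_mul_of_mul_eq_one {M : Type*} [Monoid M] {u v : M} (huv : u * v = 1)
    (a x y b : M) : a * x * u * (v * y * b) = a * (x * y) * b := by
  simp only [mul_assoc]
  rw [← mul_assoc u, huv, one_mul]

namespace SVD

variable {d p : ℕ} {A : Matrix (Fin d) (Fin d) ℝ} (h : SVD A)

lemma s_pos (hA : IsUnit A) (i : Fin d) : 0 < h.s i := by
  have hdet : A.det ≠ 0 := ((Matrix.isUnit_iff_isUnit_det A).1 hA).ne_zero
  refine (h.nonneg i).lt_of_ne' fun h0 => hdet ?_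
  rw [h.eq, Matrix.det_mul, Matrix.det_mul, Matrix.det_diagonal,
    Finset.prod_eq_zero (Finset.mem_univ i) h0, mul_zero, zero_mul]

end SVD

lemma sv_pos {d p : ℕ} {A : Matrix (Fin d) (Fin d) ℝ} (hA : IsUnit A) (hp : p < d) :
    0 < sv A (p + 1) := by
  obtain ⟨h⟩ := nonempty_svd hA
  exact (h.s_pos hA ⟨p, hp⟩).trans_eq (h.sv_eq ⟨p, hp⟩).symm

lemma sv_mul_mul_le_of_isUnit {d p : ℕ} {A : Matrix (Fin d) (Fin d) ℝ} (hA : IsUnit A)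
    (D G : Matrix (Fin d) (Fin d) ℝ) (hp : p < d) :
    sv (D * A * G) (p + 1) ≤ ‖D‖ * sv A (p + 1) * ‖G‖ := by
  obtain ⟨h⟩ := nonempty_svd hA
  simpa only [h.sv_eq ⟨p, hp⟩] using h.sv_mul_mul_le D G ⟨p, hp⟩

/-! ### Attracting and repelling projections -/

namespace SVD

variable {d p : ℕ} {A : Matrix (Fin d) (Fin d) ℝ} (h : SVD A)

/-- The orthogonal projection onto the span of the first `p` left singular vectors; when `A` has
a gap of index `p` its range is the Cartan attractor `U_p(A)`. -/
def leftProj (p : ℕ) : Matrix (Fin d) (Fin d) ℝ := h.k * coordProj d p * star h.k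

/-- The orthogonal projection onto the span of the first `p` right singular vectors; when `A` is
invertible with a gap of index `p` its kernel is the Cartan attractor `U_{d-p}(A⁻¹)`. -/
def rightProj (p : ℕ) : Matrix (Fin d) (Fin d) ℝ := star h.l * coordProj d p * h.l

/-- The inverse of `A` between the spans of the first `p` left and right singular vectors, extended
by zero to the orthogonal complement. -/
def truncInv (p : ℕ) : Matrix (Fin d) (Fin d) ℝ :=
  star h.l * Matrix.diagonal (fun i : Fin d => if (i : ℕ) < p then (h.s i)⁻¹ else 0) * star h.k

lemma isStarProjection_leftProj : IsStarProjection (h.leftProj p) := by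
  simpa only [leftProj, star_star] using
    isStarProjection_star_mul_coordProj_mul (p := p) (Unitary.star_mem h.k_mem)

lemma isStarProjection_rightProj : IsStarProjection (h.rightProj p) :=
  isStarProjection_star_mul_coordProj_mul h.l_mem

lemma one_sub_leftProj : 1 - h.leftProj p = h.k * (1 - coordProj d p) * star h.k := by
  rw [mul_sub, sub_mul, mul_one, Unitary.mul_star_self_of_mem h.k_mem, leftProj]

lemma one_sub_rightProj : 1 - h.rightProj p = star h.l * (1 - coordProj d p) * h.l := by
  rw [mul_sub, sub_mul, mul_one, Unitary.star_mul_self_of_mem h.l_mem, rightProj]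

lemma mul_star_l_mul_mul (X b : Matrix (Fin d) (Fin d) ℝ) :
    A * (star h.l * X * b) = h.k * (Matrix.diagonal h.s * X) * b :=
  (congrArg (· * (star h.l * X * b)) h.eq).trans
    (mul_mul_mul_mul_of_mul_eq_one (Unitary.mul_star_self_of_mem h.l_mem) ..)

lemma mul_mul_star_k_mul (a X : Matrix (Fin d) (Fin d) ℝ) :
    a * X * star h.k * A = a * (X * Matrix.diagonal h.s) * h.l :=
  (congrArg (a * X * star h.k * ·) h.eq).trans
    (mul_mul_mul_mul_of_mul_eq_one (Unitary.star_mul_self_of_mem h.k_mem) ..)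

lemma mul_one_sub_rightProj : A * (1 - h.rightProj p) =
    h.k * Matrix.diagonal (fun i : Fin d => if (i : ℕ) < p then 0 else h.s i) * h.l := by
  rw [one_sub_rightProj, mul_star_l_mul_mul, one_sub_coordProj, Matrix.diagonal_mul_diagonal]
  simp only [mul_ite, mul_zero, mul_one]

lemma one_sub_leftProj_mul : (1 - h.leftProj p) * A = A * (1 - h.rightProj p) := by
  rw [mul_one_sub_rightProj, one_sub_leftProj, mul_mul_star_k_mul, one_sub_coordProj,
    Matrix.diagonal_mul_diagonal]
  simp only [ite_mul, zero_mul, one_mul]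

lemma mul_truncInv (hA : IsUnit A) : A * h.truncInv p = h.leftProj p := by
  rw [truncInv, mul_star_l_mul_mul, Matrix.diagonal_mul_diagonal]
  simp only [mul_ite, mul_zero, mul_inv_cancel₀ (h.s_pos hA _).ne', leftProj, coordProj]

lemma truncInv_mul (hA : IsUnit A) : h.truncInv p * A = h.rightProj p := by
  rw [truncInv, mul_mul_star_k_mul, Matrix.diagonal_mul_diagonal]
  simp only [ite_mul, zero_mul, inv_mul_cancel₀ (h.s_pos hA _).ne', rightProj, coordProj]

lemma norm_mul_one_sub_rightProj_le : ‖A * (1 - h.rightProj p)‖ ≤ sv A (p + 1) := by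
  rw [mul_one_sub_rightProj, CStarRing.norm_mul_mem_unitary _ h.l_mem,
    CStarRing.norm_mem_unitary_mul _ h.k_mem]
  refine norm_diagonal_le (sv_nonneg A _) fun i => ?_
  split_ifs with hi
  · simpa using sv_nonneg A _
  · rw [abs_of_nonneg (h.nonneg i)]
    exact h.s_le_sv (not_lt.1 hi)

lemma norm_truncInv_le (hA : IsUnit A) (hp : p < d) : ‖h.truncInv (p + 1)‖ ≤ (sv A (p + 1))⁻¹ := by
  rw [truncInv, CStarRing.norm_mul_mem_unitary _ (Unitary.star_mem h.k_mem),
    CStarRing.norm_mem_unitary_mul _ (Unitary.star_mem h.l_mem)]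
  have hpos := sv_pos hA hp
  refine norm_diagonal_le (inv_nonneg.2 hpos.le) fun i => ?_
  split_ifs with hi
  · rw [abs_of_nonneg (inv_nonneg.2 (h.nonneg i))]
    exact inv_anti₀ hpos (h.sv_le_s hi hp)
  · simpa using hpos.le

end SVD

namespace SVD

variable {d p : ℕ} {A B : Matrix (Fin d) (Fin d) ℝ}

lemma eq_of_mul_eq_one (h : SVD A) (hAB : A * B = 1) :
    B = star h.l * Matrix.diagonal (fun i => (h.s i)⁻¹) * star h.k := by
  have hA : IsUnit A := .of_mul_eq_one B hAB
  have hright : A * (star h.l * Matrix.diagonal (fun i => (h.s i)⁻¹) * star h.k) = 1 := by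
    rw [h.mul_star_l_mul_mul, Matrix.diagonal_mul_diagonal]
    simp only [mul_inv_cancel₀ (h.s_pos hA _).ne', Matrix.diagonal_one, mul_one,
      Unitary.mul_star_self_of_mem h.k_mem]
  exact left_inv_eq_right_inv (mul_eq_one_comm.1 hAB) hright

/-- The singular value decomposition of the inverse: the roles of `k` and `l` are exchanged, and
all indices are reversed so that the singular values decrease again. -/
def inv (h : SVD A) (hAB : A * B = 1) : SVD B where
  k := (star h.l).submatrix id Fin.revPerm
  l := (star h.k).submatrix Fin.revPerm id
  s := (fun i => (h.s i)⁻¹) ∘ Fin.revPerm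
  k_mem := submatrix_mem_unitaryGroup (Unitary.star_mem h.l_mem) (Equiv.refl _) _
  l_mem := submatrix_mem_unitaryGroup (Unitary.star_mem h.k_mem) _ (Equiv.refl _)
  antitone _ _ hij := inv_anti₀ (h.s_pos (.of_mul_eq_one B hAB) _)
    (h.antitone (Fin.rev_le_rev.2 hij))
  nonneg _ := inv_nonneg.2 (h.nonneg _)
  eq := by rw [submatrix_mul_diagonal_mul_submatrix, ← h.eq_of_mul_eq_one hAB]

lemma rightProj_inv (h : SVD A) (hAB : A * B = 1) (hp : p ≤ d) :
    (h.inv hAB).rightProj p = 1 - h.leftProj (d - p) := by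
  have hk : star ((star h.k).submatrix Fin.revPerm id) = h.k.submatrix id Fin.revPerm := by
    rw [Matrix.star_eq_conjTranspose, Matrix.conjTranspose_submatrix,
      ← Matrix.star_eq_conjTranspose, star_star]
  have hJ : coordProj d p =
      Matrix.diagonal ((fun i : Fin d => if (i : ℕ) < d - p then 0 else 1) ∘ Fin.revPerm) := by
    rw [coordProj]
    congr! 2 with i
    have hrev : (Fin.rev i : ℕ) < d - p ↔ ¬ (i : ℕ) < p := by
      rw [Fin.val_rev]
      omega
    simp only [Function.comp_apply, Fin.revPerm_apply, hrev, ite_not]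
  rw [rightProj, inv, hk, hJ, submatrix_mul_diagonal_mul_submatrix, one_sub_leftProj,
    one_sub_coordProj]

end SVD

section Inverse

variable {d p : ℕ} {A B : Matrix (Fin d) (Fin d) ℝ}

lemma sv_of_mul_eq_one (hAB : A * B = 1) (hp : p < d) : sv B (d - p) = (sv A (p + 1))⁻¹ := by
  obtain ⟨h⟩ := nonempty_svd (.of_mul_eq_one B hAB)
  have hrev : d - p = Fin.rev ⟨p, hp⟩ + 1 := by
    simp only [Fin.val_rev]
    omega
  rw [hrev, (h.inv hAB).sv_eq, h.sv_eq ⟨p, hp⟩]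
  simp [SVD.inv]

lemma HasGap.of_mul_eq_one (hAB : A * B = 1) (hp : p + 1 < d) (hgap : HasGap A (p + 1)) :
    HasGap B (d - (p + 1)) := by
  rw [HasGap, show d - (p + 1) + 1 = d - p by omega, sv_of_mul_eq_one hAB hp,
    sv_of_mul_eq_one hAB (Nat.lt_of_succ_lt hp)]
  exact inv_strictAnti₀ (sv_pos (.of_mul_eq_one B hAB) hp) hgap

end Inverse

namespace SVD

variable {d p : ℕ} {A₁ A₂ D G : Matrix (Fin d) (Fin d) ℝ}

lemma norm_one_sub_leftProj_mul_mul_le (h₁ : SVD A₁) (h₂ : SVD A₂) (hA₁ : IsUnit A₁)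
    (hDG : D * A₁ = A₂ * G) (hp : p < d) :
    ‖(1 - h₂.leftProj (p + 1)) * D * h₁.leftProj (p + 1)‖ ≤
      sv A₂ (p + 2) / sv A₁ (p + 1) * ‖G‖ := by
  have factor : (1 - h₂.leftProj (p + 1)) * D * h₁.leftProj (p + 1) =
      A₂ * (1 - h₂.rightProj (p + 1)) * G * h₁.truncInv (p + 1) := by
    rw [← h₁.mul_truncInv hA₁, ← h₂.one_sub_leftProj_mul, mul_assoc (1 - _) D, ← mul_assoc D, hDG]
    noncomm_ring
  have hpos := sv_nonneg A₂ (p + 2)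
  calc _ ≤ ‖A₂ * (1 - h₂.rightProj (p + 1))‖ * ‖G‖ * ‖h₁.truncInv (p + 1)‖ :=
        factor ▸ norm_mul₃_le
    _ ≤ sv A₂ (p + 2) * ‖G‖ * (sv A₁ (p + 1))⁻¹ := by
        gcongr
        exacts [h₂.norm_mul_one_sub_rightProj_le, h₁.norm_truncInv_le hA₁ hp]
    _ = sv A₂ (p + 2) / sv A₁ (p + 1) * ‖G‖ := by rw [div_eq_mul_inv]; ring

lemma norm_rightProj_mul_mul_le (h₁ : SVD A₁) (h₂ : SVD A₂) (hA₂ : IsUnit A₂)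
    (hDG : D * A₁ = A₂ * G) (hp : p < d) :
    ‖h₂.rightProj (p + 1) * G * (1 - h₁.rightProj (p + 1))‖ ≤
      sv A₁ (p + 2) / sv A₂ (p + 1) * ‖D‖ := by
  have factor : h₂.rightProj (p + 1) * G * (1 - h₁.rightProj (p + 1)) =
      h₂.truncInv (p + 1) * D * (A₁ * (1 - h₁.rightProj (p + 1))) := by
    rw [← h₂.truncInv_mul hA₂, mul_assoc _ A₂, ← hDG]
    noncomm_ring
  have hinv : 0 ≤ (sv A₂ (p + 1))⁻¹ := inv_nonneg.2 (sv_nonneg A₂ _)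
  calc _ ≤ ‖h₂.truncInv (p + 1)‖ * ‖D‖ * ‖A₁ * (1 - h₁.rightProj (p + 1))‖ :=
        factor ▸ norm_mul₃_le
    _ ≤ (sv A₂ (p + 1))⁻¹ * ‖D‖ * sv A₁ (p + 2) := by
        gcongr
        exacts [h₂.norm_truncInv_le hA₂ hp, h₁.norm_mul_one_sub_rightProj_le]
    _ = sv A₁ (p + 2) / sv A₂ (p + 1) * ‖D‖ := by rw [div_eq_mul_inv]; ring

end SVD

section CartanAttractor

variable {d p : ℕ} {A : Matrix (Fin d) (Fin d) ℝ} {U : Submodule ℝ (Euc d)}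

lemma isCartanAttractor_cartanAttractor (hA : IsUnit A) (p : ℕ) :
    IsCartanAttractor A p (cartanAttractor A p) := by
  have hex : ∃ U, IsCartanAttractor A p U := by
    obtain ⟨h⟩ := nonempty_svd hA
    exact ⟨_, h.k, h.l, h.s, h.k_mem, h.l_mem, fun _ _ hij => h.antitone hij, h.nonneg, h.eq, rfl⟩
  rw [cartanAttractor, dif_pos hex]
  exact hex.choose_spec

lemma SVD.act_leftProj_of_mem_colSpan (h : SVD A) {u : Euc d} (hu : u ∈ colSpan h.k p) :
    act (h.leftProj p) u = u := by
  have hfix : act (coordProj d p) (act (star h.k) u) = act (star h.k) u := by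
    ext j
    rw [act_coordProj_apply]
    split_ifs with hj
    · rfl
    · rw [act_star_apply_eq_zero_of_mem_colSpan h.k_mem hu (not_lt.1 hj)]
  rw [leftProj, act_mul, act_mul, hfix, act_act_star h.k_mem]

lemma IsCartanAttractor.exists_svd (hU : IsCartanAttractor A p U) :
    ∃ h : SVD A, U = colSpan h.k p := by
  obtain ⟨k, l, s, hk, hl, hs, hs0, hA, rfl⟩ := hU
  exact ⟨⟨k, l, s, hk, hl, fun _ _ hij => hs _ _ hij, hs0, hA⟩, rfl⟩

lemma IsCartanAttractor.finrank_eq (hU : IsCartanAttractor A p U) (hp : p ≤ d) :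
    Module.finrank ℝ U = p := by
  obtain ⟨h, rfl⟩ := hU.exists_svd
  exact finrank_colSpan h.k_mem hp

end CartanAttractor

section Angle

variable {d : ℕ} {U V : Submodule ℝ (Euc d)} {η : ℝ}

lemma norm_sub_le_angle {u y : Euc d} (hu : ‖u‖ = 1) (hy : ‖y‖ = 1) :
    ‖u - y‖ ≤ InnerProductGeometry.angle u y := by
  have hinner := InnerProductGeometry.cos_angle_mul_norm_mul_norm u y
  have hcos := Real.one_sub_sq_div_two_le_cos (x := InnerProductGeometry.angle u y)
  have hnorm := norm_sub_sq_real u y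
  rw [hu, hy] at *
  exact le_of_sq_le_sq (by nlinarith) (InnerProductGeometry.angle_nonneg u y)

lemma le_subAngle_of_forall_le_norm_sub (hU : 0 < Module.finrank ℝ U) (hV : 0 < Module.finrank ℝ V)
    (hη : ∀ u ∈ U, ∀ v ∈ V, ‖u‖ = 1 → ‖v‖ = 1 → η ≤ ‖u - v‖) : η ≤ subAngle U V := by
  have exists_ne_zero {W : Submodule ℝ (Euc d)} (hW : 0 < Module.finrank ℝ W) :
      ∃ w ∈ W, w ≠ 0 :=
    W.ne_bot_iff.1 (Submodule.one_le_finrank_iff.1 hW)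
  obtain ⟨u, hu, hu0⟩ := exists_ne_zero hU
  obtain ⟨v, hv, hv0⟩ := exists_ne_zero hV
  refine le_csInf ⟨_, u, hu, hu0, v, hv, hv0, rfl⟩ ?_
  rintro _ ⟨u, hu, hu0, v, hv, hv0, rfl⟩
  rw [← InnerProductGeometry.angle_smul_left_of_pos u v (inv_pos.2 (norm_pos_iff.2 hu0)),
    ← InnerProductGeometry.angle_smul_right_of_pos _ v (inv_pos.2 (norm_pos_iff.2 hv0))]
  exact (hη _ (U.smul_mem _ hu) _ (V.smul_mem _ hv) (norm_smul_inv_norm hu0)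
    (norm_smul_inv_norm hv0)).trans (norm_sub_le_angle (norm_smul_inv_norm hu0)
    (norm_smul_inv_norm hv0))

end Angle

/-! ### Loss of volume -/

section CauchyBinet

variable {m n : Type*} [Fintype m] [DecidableEq m] [Fintype n]

/-- The unsymmetrized Cauchy–Binet formula: each row of `X * Y` is a combination of the rows
of `Y`. -/
lemma det_mul_eq_sum {R : Type*} [CommRing R] (X : Matrix m n R) (Y : Matrix n m R) :
    (X * Y).det = ∑ f : m → n, (∏ i, X i (f i)) * (Y.submatrix f id).det := by
  have hrows : X * Y = Matrix.of fun i => ∑ j, X i j • Y j := by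
    ext i k
    simp [Matrix.mul_apply]
  have expand := (Matrix.detRowAlternating (n := m) (R := R)).toMultilinearMap.map_sum
    fun i j => X i j • Y j
  simp only [MultilinearMap.map_smul_univ] at expand
  rw [hrows]
  exact expand

lemma abs_det_mul_diagonal_mul_le [DecidableEq n] {X : Matrix m n ℝ} {s : n → ℝ}
    {Z : Matrix n m ℝ} {r : ℝ} (hX : ∀ i j, |X i j| ≤ 1) (hs : ∀ j, 0 ≤ s j)
    (hr : ∀ f : m → n, (∏ i, s (f i)) * |(Z.submatrix f id).det| ≤ r) :
    |(X * Matrix.diagonal s * Z).det| ≤ Fintype.card n ^ Fintype.card m * r := by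
  rw [det_mul_eq_sum]
  calc _ ≤ ∑ f : m → n, |(∏ i, (X * Matrix.diagonal s) i (f i)) * (Z.submatrix f id).det| :=
        Finset.abs_sum_le_sum_abs _ _
    _ ≤ ∑ _f : m → n, r := by
        refine Finset.sum_le_sum fun f _ => le_trans ?_ (hr f)
        have hprod : 0 ≤ ∏ i, s (f i) := Finset.prod_nonneg fun i _ => hs _
        simp only [Matrix.mul_diagonal, Finset.prod_mul_distrib, abs_mul, abs_of_nonneg hprod,
          Finset.abs_prod]
        gcongr
        exact mul_le_of_le_one_left hprod
          (Finset.prod_le_one (fun i _ => abs_nonneg _) fun i _ => hX i (f i))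
    _ = _ := by simp [Fintype.card_pi, Finset.prod_const, Finset.card_univ]

end CauchyBinet

section LeadingMinor

variable {d p : ℕ} {s : Fin d → ℝ} {ε : ℝ}

lemma le_strictMono_apply {f : Fin p → Fin d} (hf : StrictMono f) (i : Fin p) : (i : ℕ) ≤ f i := by
  obtain ⟨i, hi⟩ := i
  induction i with
  | zero => exact Nat.zero_le _
  | succ i ih =>
    have hlt : f ⟨i, by omega⟩ < f ⟨i + 1, hi⟩ := hf (Fin.mk_lt_mk.2 i.lt_succ_self)
    exact (ih (by omega)).trans_lt hlt

lemma strictMono_eq_castLE (hp : p ≤ d) {f : Fin p → Fin d} (hf : StrictMono f)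
    (hlt : ∀ i, (f i : ℕ) < p) : f = Fin.castLE hp := by
  have hid : (fun i => (⟨f i, hlt i⟩ : Fin p)) = id := StrictMono.eq_id fun _ _ hij => hf hij
  funext i
  exact Fin.ext (congrArg (fun j : Fin p => (j : ℕ)) (congrFun hid i))

lemma prod_comp_le_of_gap (hp : p ≤ d) (hs : Antitone s) (hs0 : ∀ i, 0 ≤ s i)
    (hgap : ∀ i j : Fin d, i < p → p ≤ j → s j ≤ ε * s i) {f : Fin p → Fin d} (hf : StrictMono f)
    (hne : f ≠ Fin.castLE hp) : ∏ i, s (f i) ≤ ε * ∏ i, s (Fin.castLE hp i) := by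
  obtain ⟨i₀, hi₀⟩ : ∃ i, p ≤ (f i : ℕ) := by
    by_contra! hlt
    exact hne (strictMono_eq_castLE hp hf hlt)
  rw [← Finset.mul_prod_erase _ _ (Finset.mem_univ i₀),
    ← Finset.mul_prod_erase _ _ (Finset.mem_univ i₀), ← mul_assoc]
  have hfirst : s (f i₀) ≤ ε * s (Fin.castLE hp i₀) := hgap _ _ i₀.2 hi₀
  have hrest : ∏ i ∈ Finset.univ.erase i₀, s (f i) ≤
      ∏ i ∈ Finset.univ.erase i₀, s (Fin.castLE hp i) :=
    Finset.prod_le_prod (fun i _ => hs0 _) fun i _ => hs (le_strictMono_apply hf i)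
  exact mul_le_mul hfirst hrest (Finset.prod_nonneg fun i _ => hs0 _)
    ((hs0 _).trans hfirst)

lemma exists_perm_strictMono_comp {f : Fin p → Fin d} (hf : Function.Injective f) :
    ∃ σ : Equiv.Perm (Fin p), StrictMono (f ∘ σ) :=
  ⟨Tuple.sort f, (Tuple.monotone_sort f).strictMono_of_injective (hf.comp (Equiv.injective _))⟩

lemma abs_det_mul_diagonal_mul_le_of_gap (hp : p ≤ d) {X : Matrix (Fin p) (Fin d) ℝ}
    {Z : Matrix (Fin d) (Fin p) ℝ} {ζ : ℝ} (hX : ∀ i j, |X i j| ≤ 1) (hs : Antitone s)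
    (hs0 : ∀ i, 0 ≤ s i) (hε : 0 ≤ ε) (hgap : ∀ i j : Fin d, i < p → p ≤ j → s j ≤ ε * s i)
    (hζ : ∀ f : Fin p → Fin d, |(Z.submatrix f id).det| ≤ ζ) :
    |(X * Matrix.diagonal s * Z).det| ≤ d ^ p * ((∏ i, s (Fin.castLE hp i)) *
      (|(Z.submatrix (Fin.castLE hp) id).det| + ε * ζ)) := by
  have hζ0 : 0 ≤ ζ := (abs_nonneg _).trans (hζ (Fin.castLE hp))
  have htop : 0 ≤ ∏ i, s (Fin.castLE hp i) := Finset.prod_nonneg fun i _ => hs0 _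
  have key (f : Fin p → Fin d) : (∏ i, s (f i)) * |(Z.submatrix f id).det| ≤
      (∏ i, s (Fin.castLE hp i)) * (|(Z.submatrix (Fin.castLE hp) id).det| + ε * ζ) := by
    by_cases hf : Function.Injective f
    · obtain ⟨σ, hσ⟩ := exists_perm_strictMono_comp hf
      rw [← Equiv.prod_comp σ, ← Matrix.abs_det_submatrix_equiv_equiv σ (Equiv.refl _)]
      rw [Matrix.submatrix_submatrix]
      change (∏ i, s ((f ∘ σ) i)) * |(Z.submatrix (f ∘ σ) id).det| ≤ _
      by_cases hne : f ∘ σ = Fin.castLE hp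
      · rw [hne]
        gcongr
        exact le_add_of_nonneg_right (by positivity)
      · calc _ ≤ (ε * ∏ i, s (Fin.castLE hp i)) * ζ := by
              gcongr
              · exact prod_comp_le_of_gap hp hs hs0 hgap hσ hne
              · exact hζ _
          _ = (∏ i, s (Fin.castLE hp i)) * (ε * ζ) := by ring
          _ ≤ _ := by
              gcongr
              exact le_add_of_nonneg_left (abs_nonneg _)
    · simp only [Function.Injective, not_forall] at hf
      obtain ⟨i, j, hij, hne⟩ := hf
      rw [Matrix.det_zero_of_row_eq hne (funext fun _ => congrArg (Z · _) hij), abs_zero, mul_zero]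
      positivity
  simpa using abs_det_mul_diagonal_mul_le hX hs0 key

end LeadingMinor

section Determinant

variable {d : ℕ} {A : Matrix (Fin d) (Fin d) ℝ}

lemma abs_det_of_mem_unitary {k : Matrix (Fin d) (Fin d) ℝ}
    (hk : k ∈ Matrix.unitaryGroup (Fin d) ℝ) : |k.det| = 1 :=
  CStarRing.norm_of_mem_unitary (Matrix.det_of_mem_unitary hk)

lemma SVD.abs_det_eq (h : SVD A) : |A.det| = ∏ i, h.s i := by
  conv_lhs => rw [h.eq]
  rw [Matrix.det_mul, Matrix.det_mul, abs_mul, abs_mul, abs_det_of_mem_unitary h.k_mem,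
    abs_det_of_mem_unitary h.l_mem, Matrix.det_diagonal,
    abs_of_nonneg (Finset.prod_nonneg fun i _ => h.nonneg i), one_mul, mul_one]

lemma SVD.s_le_norm (h : SVD A) (i : Fin d) : h.s i ≤ ‖A‖ := by
  calc h.s i ≤ ‖h.s‖ := (le_abs_self _).trans (norm_le_pi_norm h.s i)
    _ = ‖A‖ := by
      conv_rhs => rw [h.eq]
      rw [CStarRing.norm_mul_mem_unitary _ h.l_mem, CStarRing.norm_mem_unitary_mul _ h.k_mem,
        Matrix.l2_opNorm_diagonal]

lemma abs_det_le_one (hA : ‖A‖ ≤ 1) : |A.det| ≤ 1 := by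
  by_cases hdet : A.det = 0
  · simp [hdet]
  obtain ⟨h⟩ := nonempty_svd ((Matrix.isUnit_iff_isUnit_det A).2 (isUnit_iff_ne_zero.2 hdet))
  rw [h.abs_det_eq]
  exact Finset.prod_le_one (fun i _ => h.nonneg i) fun i _ => (h.s_le_norm i).trans hA

/-- The determinant is the product of the singular values, hence at most the smallest one. -/
lemma abs_det_mul_norm_le (hA : ‖A‖ ≤ 1) (v : Euc d) : |A.det| * ‖v‖ ≤ ‖act A v‖ := by
  by_cases hdet : A.det = 0
  · simp [hdet]
  obtain ⟨h⟩ := nonempty_svd ((Matrix.isUnit_iff_isUnit_det A).2 (isUnit_iff_ne_zero.2 hdet))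
  have hprod (i : Fin d) : ∏ j, h.s j ≤ h.s i := by
    rw [← Finset.mul_prod_erase _ _ (Finset.mem_univ i)]
    exact mul_le_of_le_one_right (h.nonneg i)
      (Finset.prod_le_one (fun j _ => h.nonneg j) fun j _ => (h.s_le_norm j).trans hA)
  rw [h.norm_act, ← norm_act_of_mem_unitary h.l_mem v, ← abs_abs, ← Real.norm_eq_abs, ← norm_smul,
    EuclideanSpace.norm_eq, EuclideanSpace.norm_eq, h.abs_det_eq]
  refine Real.sqrt_le_sqrt (Finset.sum_le_sum fun i _ => ?_)
  rw [act_diagonal_apply, PiLp.smul_apply, smul_eq_mul, norm_mul, norm_mul]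
  have := Finset.prod_nonneg fun i (_ : i ∈ Finset.univ) => h.nonneg i
  gcongr
  simpa only [Real.norm_eq_abs, abs_of_nonneg this, abs_of_nonneg (h.nonneg i)] using hprod i

lemma norm_one_submatrix_id_le {m n : Type*} [Fintype m] [Fintype n] [DecidableEq n]
    (e : m ↪ n) : ‖(1 : Matrix n n ℝ).submatrix e id‖ ≤ 1 := by
  classical
  have hone : ‖(1 : Matrix m m ℝ)‖ ≤ 1 := IsStarProjection.norm_le _ (.one _)
  have hmul : (1 : Matrix n n ℝ).submatrix e id * ((1 : Matrix n n ℝ).submatrix e id)ᴴ = 1 := by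
    ext i j
    simp [Matrix.mul_apply, Matrix.one_apply]
  have hsq := Matrix.l2_opNorm_conjTranspose_mul_self ((1 : Matrix n n ℝ).submatrix e id)ᴴ
  rw [Matrix.conjTranspose_conjTranspose, hmul, Matrix.l2_opNorm_conjTranspose] at hsq
  nlinarith [norm_nonneg ((1 : Matrix n n ℝ).submatrix e id)]

lemma norm_submatrix_le {m n : Type*} [Fintype m] [DecidableEq m] [Fintype n] [DecidableEq n]
    (M : Matrix n n ℝ) (e : m ↪ n) : ‖M.submatrix e e‖ ≤ ‖M‖ := by
  set E := (1 : Matrix n n ℝ).submatrix e id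
  have hE : ‖E‖ ≤ 1 := norm_one_submatrix_id_le e
  have heq : M.submatrix e e = E * M * Eᴴ := by
    ext i j
    simp [E, Matrix.mul_apply, Matrix.one_apply]
  calc ‖M.submatrix e e‖ ≤ ‖E‖ * ‖M‖ * ‖Eᴴ‖ := by
        rw [heq]
        exact (Matrix.l2_opNorm_mul _ _).trans
          (mul_le_mul_of_nonneg_right (Matrix.l2_opNorm_mul _ _) (norm_nonneg _))
    _ ≤ 1 * ‖M‖ * 1 := by
        rw [Matrix.l2_opNorm_conjTranspose]
        gcongr
    _ = ‖M‖ := by ring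

end Determinant

/-- The product of the `p` largest singular values of `A`: the largest factor by which `A` scales
a `p`-dimensional volume. -/
def maxVol {d : ℕ} (A : Matrix (Fin d) (Fin d) ℝ) (p : ℕ) : ℝ := ∏ i : Fin p, sv A (i + 1)

lemma maxVol_nonneg {d : ℕ} (A : Matrix (Fin d) (Fin d) ℝ) (p : ℕ) : 0 ≤ maxVol A p :=
  Finset.prod_nonneg fun _ _ => sv_nonneg A _

/-- The size of the determinant of the pairing between the leading left singular vectors of `A` and
the leading right singular vectors of `B`. It vanishes exactly when some combination of the former
is orthogonal to all of the latter. -/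
def SVD.overlap {d p : ℕ} {A B : Matrix (Fin d) (Fin d) ℝ} (hB : SVD B) (hA : SVD A)
    (hp : p ≤ d) : ℝ :=
  |((hB.l * hA.k).submatrix (Fin.castLE hp) (Fin.castLE hp)).det|

section UnitaryEntries

variable {d p : ℕ} {k : Matrix (Fin d) (Fin d) ℝ}

lemma abs_apply_le_one_of_mem_unitary (hk : k ∈ Matrix.unitaryGroup (Fin d) ℝ) (i j : Fin d) :
    |k i j| ≤ 1 := entry_norm_bound_of_unitary hk i j

lemma abs_det_submatrix_le (hk : k ∈ Matrix.unitaryGroup (Fin d) ℝ) (e f : Fin p → Fin d) :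
    |(k.submatrix e f).det| ≤ p.factorial := by
  simpa using Matrix.det_le (abv := IsAbsoluteValue.toAbsoluteValue (abs : ℝ → ℝ))
    (A := k.submatrix e f) (x := 1) fun i j => abs_apply_le_one_of_mem_unitary hk (e i) (f j)

end UnitaryEntries

section LeadingBlock

variable {d p : ℕ}

lemma sum_castLE (hp : p ≤ d) {f : Fin d → ℝ} (hf : ∀ i : Fin d, p ≤ i → f i = 0) :
    ∑ i, f (Fin.castLE hp i) = ∑ i, f i := by
  refine Fintype.sum_of_injective _ (Fin.castLE_injective hp) _ f (fun i hi => hf i ?_)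
    fun _ => rfl
  by_contra! hlt
  exact hi ⟨⟨i, hlt⟩, rfl⟩

lemma norm_act_coordProj (hp : p ≤ d) (v : Euc d) :
    ‖act (coordProj d p) v‖ = ‖(WithLp.toLp 2 (v ∘ Fin.castLE hp) : Euc p)‖ := by
  rw [EuclideanSpace.norm_eq, EuclideanSpace.norm_eq, ← sum_castLE hp]
  · simp [act_coordProj_apply]
  · intro i hi
    simp [act_coordProj_apply, hi.not_gt]

lemma act_submatrix_castLE (hp : p ≤ d) (M : Matrix (Fin d) (Fin d) ℝ) (v : Euc d) :
    act (M.submatrix (Fin.castLE hp) (Fin.castLE hp)) (WithLp.toLp 2 (v ∘ Fin.castLE hp)) =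
      WithLp.toLp 2 (act M (act (coordProj d p) v) ∘ Fin.castLE hp) := by
  ext i
  refine (act_apply ..).trans (Eq.trans ?_ (act_apply M _ (Fin.castLE hp i)).symm)
  rw [← sum_castLE hp]
  · simp [act_coordProj_apply]
  · intro j hj
    simp [act_coordProj_apply, hj.not_gt]

end LeadingBlock

namespace SVD

variable {d p : ℕ} {A B : Matrix (Fin d) (Fin d) ℝ} {ε : ℝ}

lemma prod_s_castLE (h : SVD A) (hp : p ≤ d) : ∏ i, h.s (Fin.castLE hp i) = maxVol A p :=
  Finset.prod_congr rfl fun i _ => (h.sv_eq (Fin.castLE hp i)).symm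

lemma diagonal_s (h : SVD A) : Matrix.diagonal h.s = star h.k * A * star h.l :=
  calc Matrix.diagonal h.s = (star h.k * h.k) * Matrix.diagonal h.s * (h.l * star h.l) := by
        rw [Unitary.star_mul_self_of_mem h.k_mem, Unitary.mul_star_self_of_mem h.l_mem, one_mul,
          mul_one]
    _ = star h.k * (h.k * Matrix.diagonal h.s * h.l) * star h.l := by simp only [mul_assoc]
    _ = star h.k * A * star h.l := congrArg (star h.k * · * star h.l) h.eq.symm

lemma s_le_mul_s (h : SVD A) (hp : p ≤ d) (hε : 0 ≤ ε) (hgap : sv A (p + 1) ≤ ε * sv A p)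
    (i j : Fin d) (hi : i < p) (hj : p ≤ j) : h.s j ≤ ε * h.s i :=
  calc h.s j ≤ sv A (p + 1) := h.s_le_sv hj
    _ ≤ ε * sv A p := hgap
    _ ≤ ε * h.s i := mul_le_mul_of_nonneg_left (h.sv_le_s hi hp) hε

lemma overlap_le_one (hB : SVD B) (hA : SVD A) (hp : p ≤ d) : hB.overlap hA hp ≤ 1 :=
  abs_det_le_one <| (norm_submatrix_le _ (Fin.castLEEmb hp)).trans
    (norm_le_one_of_mem_unitary (mul_mem hB.l_mem hA.k_mem))

lemma abs_det_submatrix_mul_diagonal_mul_le (hA : SVD A) (hp : p ≤ d)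
    {M Y : Matrix (Fin d) (Fin d) ℝ} (hM : M ∈ Matrix.unitaryGroup (Fin d) ℝ)
    (hY : Y ∈ Matrix.unitaryGroup (Fin d) ℝ) (hε : 0 ≤ ε)
    (hgap : ∀ i j : Fin d, i < p → p ≤ j → hA.s j ≤ ε * hA.s i) (f : Fin p → Fin d) :
    |((M * Matrix.diagonal hA.s * Y).submatrix f (Fin.castLE hp)).det| ≤
      d ^ p * (maxVol A p * (|(M.submatrix f (Fin.castLE hp)).det| + ε * p.factorial)) := by
  have htranspose : ((M * Matrix.diagonal hA.s * Y).submatrix f (Fin.castLE hp))ᵀ =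
      Yᵀ.submatrix (Fin.castLE hp) id * Matrix.diagonal hA.s * Mᵀ.submatrix id f := by
    rw [Matrix.transpose_submatrix, Matrix.transpose_mul, Matrix.transpose_mul,
      Matrix.diagonal_transpose, ← mul_assoc]
    rfl
  rw [← Matrix.det_transpose, htranspose, ← hA.prod_s_castLE hp,
    ← Matrix.det_transpose (M.submatrix f _)]
  exact abs_det_mul_diagonal_mul_le_of_gap hp
    (fun i j => abs_apply_le_one_of_mem_unitary hY j (Fin.castLE hp i)) hA.antitone hA.nonneg hε
    hgap fun e => by
      rw [← Matrix.det_transpose]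
      exact abs_det_submatrix_le hM f e

lemma maxVol_eq_abs_det (h : SVD A) (hp : p ≤ d) : maxVol A p =
    |((star h.k * A * star h.l).submatrix (Fin.castLE hp) (Fin.castLE hp)).det| := by
  rw [← h.diagonal_s, Matrix.submatrix_diagonal _ _ (Fin.castLE_injective hp), Matrix.det_diagonal,
    ← h.prod_s_castLE hp]
  exact (abs_of_nonneg (Finset.prod_nonneg fun i _ => h.nonneg _)).symm

lemma mul_mul_mul_eq_diagonal (hA : SVD A) (hB : SVD B) (a b : Matrix (Fin d) (Fin d) ℝ) :
    a * (B * A) * b = a * hB.k * Matrix.diagonal hB.s *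
      (hB.l * hA.k * Matrix.diagonal hA.s * (hA.l * b)) :=
  calc a * (B * A) * b = a * ((hB.k * Matrix.diagonal hB.s * hB.l) *
        (hA.k * Matrix.diagonal hA.s * hA.l)) * b :=
      congrArg (a * · * b) (congrArg₂ (· * ·) hB.eq hA.eq)
    _ = _ := by simp only [mul_assoc]

lemma maxVol_mul_le (hG : SVD (B * A)) (hA : SVD A) (hB : SVD B) (hp : p ≤ d) (hε : 0 ≤ ε)
    (hgapA : sv A (p + 1) ≤ ε * sv A p) (hgapB : sv B (p + 1) ≤ ε * sv B p) :
    maxVol (B * A) p ≤ (d ^ p) ^ 2 * (maxVol A p * maxVol B p) *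
      (hB.overlap hA hp + 3 * p.factorial * ε) := by
  set M := hB.l * hA.k
  set N := M * Matrix.diagonal hA.s * (hA.l * star hG.l)
  have hM : M ∈ Matrix.unitaryGroup (Fin d) ℝ := mul_mem hB.l_mem hA.k_mem
  have hY : hA.l * star hG.l ∈ Matrix.unitaryGroup (Fin d) ℝ :=
    mul_mem hA.l_mem (Unitary.star_mem hG.l_mem)
  have hX : star hG.k * hB.k ∈ Matrix.unitaryGroup (Fin d) ℝ :=
    mul_mem (Unitary.star_mem hG.k_mem) hB.k_mem
  have hvolA := maxVol_nonneg A p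
  have hvolB := maxVol_nonneg B p
  have hdet : maxVol (B * A) p = |((star hG.k * hB.k).submatrix (Fin.castLE hp) id *
      Matrix.diagonal hB.s * N.submatrix id (Fin.castLE hp)).det| := by
    rw [hG.maxVol_eq_abs_det hp, mul_mul_mul_eq_diagonal hA hB]
    rfl
  have hN (f : Fin p → Fin d) : |(N.submatrix f (Fin.castLE hp)).det| ≤
      d ^ p * (maxVol A p * (2 * p.factorial)) := by
    refine (hA.abs_det_submatrix_mul_diagonal_mul_le hp hM hY zero_le_one (fun i j hi hj =>
      (hA.antitone (hi.trans_le hj).le).trans_eq (one_mul _).symm) f).trans ?_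
    gcongr
    linarith [abs_det_submatrix_le hM f (Fin.castLE hp)]
  have hNtop : |(N.submatrix (Fin.castLE hp) (Fin.castLE hp)).det| ≤
      d ^ p * (maxVol A p * (hB.overlap hA hp + ε * p.factorial)) :=
    hA.abs_det_submatrix_mul_diagonal_mul_le hp hM hY hε (hA.s_le_mul_s hp hε hgapA) _
  have hdetN := abs_det_mul_diagonal_mul_le_of_gap hp
    (X := (star hG.k * hB.k).submatrix (Fin.castLE hp) id) (Z := N.submatrix id (Fin.castLE hp))
    (fun i j => abs_apply_le_one_of_mem_unitary hX _ _) hB.antitone hB.nonneg hε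
    (hB.s_le_mul_s hp hε hgapB) hN
  rw [← hdet, hB.prod_s_castLE hp] at hdetN
  refine hdetN.trans ?_
  calc _ ≤ d ^ p * (maxVol B p * (d ^ p * (maxVol A p * (hB.overlap hA hp + ε * p.factorial)) +
        ε * (d ^ p * (maxVol A p * (2 * p.factorial))))) := by
        gcongr
        exact hNtop
    _ = _ := by ring

lemma overlap_mul_norm_le (hB : SVD B) (hA : SVD A) (hp : p ≤ d) (u : Euc d) :
    hB.overlap hA hp * ‖u‖ ≤ 2 * ‖act (1 - hA.leftProj p) u‖ + ‖act (hB.rightProj p) u‖ := by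
  set M := hB.l * hA.k
  set J := coordProj d p
  set w := act (star hA.k) u
  set x : Euc p := WithLp.toLp 2 (w ∘ Fin.castLE hp)
  have hM : ‖M‖ ≤ 1 := norm_le_one_of_mem_unitary (mul_mem hB.l_mem hA.k_mem)
  have hJ : ‖J‖ ≤ 1 := isStarProjection_coordProj.norm_le
  have hleft : ‖act (1 - hA.leftProj p) u‖ = ‖act (1 - J) w‖ := by
    rw [one_sub_leftProj, act_mul, act_mul, norm_act_of_mem_unitary hA.k_mem]
  have hright : ‖act (hB.rightProj p) u‖ = ‖act J (act M w)‖ := by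
    rw [rightProj, mul_assoc, act_mul, norm_act_of_mem_unitary (Unitary.star_mem hB.l_mem), act_mul,
      act_mul, act_act_star hA.k_mem]
  have hblock : ‖act (M.submatrix (Fin.castLE hp) (Fin.castLE hp)) x‖ =
      ‖act J (act M (act J w))‖ := by
    rw [norm_act_coordProj hp, act_submatrix_castLE]
  have hsplit : act J w = w - act (1 - J) w := by rw [sub_act, act_one, sub_sub_cancel]
  calc hB.overlap hA hp * ‖u‖ = hB.overlap hA hp * ‖act (1 - J) w + act J w‖ := by
        rw [hsplit, add_sub_cancel, norm_act_of_mem_unitary (Unitary.star_mem hA.k_mem)]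
    _ ≤ hB.overlap hA hp * (‖act (1 - J) w‖ + ‖x‖) := by
        rw [← norm_act_coordProj hp]
        exact mul_le_mul_of_nonneg_left (norm_add_le _ _) (abs_nonneg _)
    _ ≤ 1 * ‖act (1 - J) w‖ + ‖act (M.submatrix (Fin.castLE hp) (Fin.castLE hp)) x‖ := by
        rw [mul_add]
        gcongr
        · exact hB.overlap_le_one hA hp
        · exact abs_det_mul_norm_le ((norm_submatrix_le _ (Fin.castLEEmb hp)).trans hM) x
    _ = ‖act (1 - J) w‖ + ‖act J (act M w) - act J (act M (act (1 - J) w))‖ := by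
        rw [one_mul, hblock, hsplit, act_sub, act_sub]
    _ ≤ ‖act (1 - J) w‖ + (‖act J (act M w)‖ + ‖act (1 - J) w‖) := by
        gcongr
        exact (norm_sub_le _ _).trans (add_le_add_right ((norm_act_le_of_norm_le_one hJ).trans
          (norm_act_le_of_norm_le_one hM)) _)
    _ = _ := by rw [hleft, hright]; ring

end SVD

section VolumeBounds

variable {d p : ℕ} {A B : Matrix (Fin d) (Fin d) ℝ} {r : ℝ}

lemma sv_le_norm (hA : IsUnit A) (hp : p < d) : sv A (p + 1) ≤ ‖A‖ := by
  obtain ⟨h⟩ := nonempty_svd hA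
  exact (h.sv_eq ⟨p, hp⟩).trans_le (h.s_le_norm _)

lemma inv_le_sv (hAB : A * B = 1) (hp : p < d) (hr : ‖B‖ ≤ r) : r⁻¹ ≤ sv A (p + 1) := by
  have hA : IsUnit A := IsUnit.of_mul_eq_one _ hAB
  have hB : IsUnit B := IsUnit.of_mul_eq_one _ (mul_eq_one_comm.1 hAB)
  have hle : (sv A (p + 1))⁻¹ ≤ r := by
    rw [← sv_of_mul_eq_one hAB hp, show d - p = d - (p + 1) + 1 by omega]
    exact (sv_le_norm hB (by omega)).trans hr
  exact inv_le_of_inv_le₀ (sv_pos hA hp) hle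

lemma maxVol_le_pow (hA : IsUnit A) (hp : p ≤ d) (hr : ‖A‖ ≤ r) : maxVol A p ≤ r ^ p := by
  have hsv (i : Fin p) : sv A (i + 1) ≤ r := (sv_le_norm hA (i.2.trans_le hp)).trans hr
  simpa [maxVol] using
    Finset.prod_le_prod (s := Finset.univ) (fun _ _ => sv_nonneg A _) fun i _ => hsv i

lemma inv_pow_le_maxVol (hAB : A * B = 1) (hp : p ≤ d) (hr : ‖B‖ ≤ r) :
    r⁻¹ ^ p ≤ maxVol A p := by
  have hr0 : 0 ≤ r⁻¹ := inv_nonneg.2 ((norm_nonneg B).trans hr)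
  have hsv (i : Fin p) : r⁻¹ ≤ sv A (i + 1) := inv_le_sv hAB (i.2.trans_le hp) hr
  simpa [maxVol] using Finset.prod_le_prod (s := Finset.univ) (fun _ _ => hr0) fun i _ => hsv i

lemma SVD.maxVol_mul_le_of_act_le (hA : SVD A) (hB : SVD B) (hBA : IsUnit (B * A)) (hp : p ≤ d)
    {ε ω : ℝ} (hε : 0 ≤ ε) (hgapA : sv A (p + 1) ≤ ε * sv A p)
    (hgapB : sv B (p + 1) ≤ ε * sv B p) {u : Euc d} (hu : u ≠ 0)
    (huA : ‖act (1 - hA.leftProj p) u‖ ≤ ω * ‖u‖) (huB : ‖act (hB.rightProj p) u‖ ≤ ω * ‖u‖) :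
    maxVol (B * A) p ≤ (d ^ p) ^ 2 * (maxVol A p * maxVol B p) * (3 * ω + 3 * p.factorial * ε) := by
  obtain ⟨hG⟩ := nonempty_svd hBA
  have hoverlap : hB.overlap hA hp ≤ 3 * ω := by
    refine le_of_mul_le_mul_right ?_ (norm_pos_iff.2 hu)
    linarith [hB.overlap_mul_norm_le hA hp u]
  have hvolA := maxVol_nonneg A p
  have hvolB := maxVol_nonneg B p
  refine (hG.maxVol_mul_le hA hB hp hε hgapA hgapB).trans ?_
  gcongr

end VolumeBounds

section GapComparison

variable {d p : ℕ} {A₁ A₂ D G D' G' : Matrix (Fin d) (Fin d) ℝ} {ε : ℝ}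

lemma SVD.norm_one_sub_leftProj_mul_mul_le_of_gap (h₁ : SVD A₁) (h₂ : SVD A₂) (hA₁ : IsUnit A₁)
    (hDG : D * A₁ = A₂ * G) (hG : G * G' = 1) (hp : p < d) (hε : 0 ≤ ε)
    (hgap : sv A₂ (p + 2) ≤ ε * sv A₂ (p + 1)) :
    ‖(1 - h₂.leftProj (p + 1)) * D * h₁.leftProj (p + 1)‖ ≤ ε * ‖D‖ * (‖G'‖ * ‖G‖) := by
  have hpos := sv_pos hA₁ hp
  have hsv : sv A₂ (p + 1) ≤ ‖D‖ * sv A₁ (p + 1) * ‖G'‖ := by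
    have hA₂ : A₂ = D * A₁ * G' := by rw [hDG, mul_assoc, hG, mul_one]
    exact (congrArg (sv · (p + 1)) hA₂).trans_le (sv_mul_mul_le_of_isUnit hA₁ D G' hp)
  calc _ ≤ sv A₂ (p + 2) / sv A₁ (p + 1) * ‖G‖ :=
        norm_one_sub_leftProj_mul_mul_le h₁ h₂ hA₁ hDG hp
    _ ≤ ε * (‖D‖ * sv A₁ (p + 1) * ‖G'‖) / sv A₁ (p + 1) * ‖G‖ := by
        gcongr
        exact hgap.trans (by gcongr)
    _ = ε * ‖D‖ * (‖G'‖ * ‖G‖) := by field_simp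

lemma SVD.norm_rightProj_mul_mul_le_of_gap (h₁ : SVD A₁) (h₂ : SVD A₂) (hA₂ : IsUnit A₂)
    (hDG : D * A₁ = A₂ * G) (hD : D' * D = 1) (hp : p < d) (hε : 0 ≤ ε)
    (hgap : sv A₁ (p + 2) ≤ ε * sv A₁ (p + 1)) :
    ‖h₂.rightProj (p + 1) * G * (1 - h₁.rightProj (p + 1))‖ ≤ ε * ‖G‖ * (‖D'‖ * ‖D‖) := by
  have hpos := sv_pos hA₂ hp
  have hsv : sv A₁ (p + 1) ≤ ‖D'‖ * sv A₂ (p + 1) * ‖G‖ := by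
    have hA₁ : A₁ = D' * A₂ * G := by rw [mul_assoc, ← hDG, ← mul_assoc, hD, one_mul]
    exact (congrArg (sv · (p + 1)) hA₁).trans_le (sv_mul_mul_le_of_isUnit hA₂ D' G hp)
  calc _ ≤ sv A₁ (p + 2) / sv A₂ (p + 1) * ‖D‖ :=
        norm_rightProj_mul_mul_le h₁ h₂ hA₂ hDG hp
    _ ≤ ε * (‖D'‖ * sv A₂ (p + 1) * ‖G‖) / sv A₂ (p + 1) * ‖D‖ := by
        gcongr
        exact hgap.trans (by gcongr)
    _ = ε * ‖G‖ * (‖D'‖ * ‖D‖) := by field_simp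

end GapComparison

/-! ### Dominated cocycles -/

/-- A family `P a b` of invertible matrices, to be thought of as the product of the factors with
index in `[a, b)`, which has the cocycle property for `n ≤ a ≤ b ≤ m`, grows at rate at most `Λ`
in both directions of time and is dominated with a gap of index `p`. -/
structure IsDominatedCocycle {d : ℕ} (p : ℕ) (Λ μ c : ℝ) (n m : ℤ) (P : ℤ → ℤ → GL (Fin d) ℝ) :
    Prop where
  mul {a b e : ℤ} : n ≤ a → a ≤ b → b ≤ e → e ≤ m → P b e * P a b = P a e
  norm_le {a b : ℤ} : n ≤ a → a ≤ b → b ≤ m → ‖mat (P a b)‖ ≤ Real.exp (Λ * (b - a))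
  norm_inv_le {a b : ℤ} : n ≤ a → a ≤ b → b ≤ m → ‖mat (P a b)⁻¹‖ ≤ Real.exp (Λ * (b - a))
  gap {a b : ℤ} : n ≤ a → a < b → b ≤ m →
    sv (mat (P a b)) (p + 1) ≤ c * Real.exp (-μ * (b - a)) * sv (mat (P a b)) p

section Mat

variable {d : ℕ} (g h : GL (Fin d) ℝ)

lemma isUnit_mat : IsUnit (mat g) := g.isUnit

lemma mat_mul : mat (g * h) = mat g * mat h := rfl

lemma mat_mul_mat_inv : mat g * mat g⁻¹ = 1 := g.mul_inv

lemma mat_inv_mul_mat : mat g⁻¹ * mat g = 1 := g.inv_mul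

/-- An arbitrary choice of singular value decomposition. -/
def svd : SVD (mat g) := Classical.choice (nonempty_svd (isUnit_mat g))

end Mat

namespace IsDominatedCocycle

variable {d p : ℕ} {Λ μ c : ℝ} {n m : ℤ} {P : ℤ → ℤ → GL (Fin d) ℝ}

lemma mat_mul_mat (hP : IsDominatedCocycle p Λ μ c n m P) {a b e : ℤ} (ha : n ≤ a) (hab : a ≤ b)
    (hbe : b ≤ e) (he : e ≤ m) : mat (P b e) * mat (P a b) = mat (P a e) :=
  congrArg mat (hP.mul ha hab hbe he)

lemma norm_one_sub_leftProj_mul_leftProj_succ_le (hP : IsDominatedCocycle (p + 1) Λ μ c n m P)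
    (hp : p < d) (hc : 0 ≤ c) {a t : ℤ} (ha : n < a) (hat : a < t) (ht : t ≤ m) :
    ‖(1 - (svd (P a t)).leftProj (p + 1)) * (svd (P (a - 1) t)).leftProj (p + 1)‖ ≤
      c * Real.exp (2 * Λ) * Real.exp (-μ * (t - a)) := by
  have hmul : 1 * mat (P (a - 1) t) = mat (P a t) * mat (P (a - 1) a) := by
    rw [one_mul, hP.mat_mul_mat (by omega) (by omega) hat.le ht]
  have hG : ‖mat (P (a - 1) a)‖ ≤ Real.exp Λ := by
    simpa using hP.norm_le (a := a - 1) (b := a) (by omega) (by omega) (by omega)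
  have hG' : ‖mat (P (a - 1) a)⁻¹‖ ≤ Real.exp Λ := by
    simpa using hP.norm_inv_le (a := a - 1) (b := a) (by omega) (by omega) (by omega)
  have hone : ‖(1 : Matrix (Fin d) (Fin d) ℝ)‖ ≤ 1 := norm_le_one_of_mem_unitary (one_mem _)
  calc _ = ‖(1 - (svd (P a t)).leftProj (p + 1)) * 1 * (svd (P (a - 1) t)).leftProj (p + 1)‖ := by
        rw [mul_one]
    _ ≤ c * Real.exp (-μ * (t - a)) * ‖(1 : Matrix (Fin d) (Fin d) ℝ)‖ *
        (‖mat (P (a - 1) a)⁻¹‖ * ‖mat (P (a - 1) a)‖) :=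
      SVD.norm_one_sub_leftProj_mul_mul_le_of_gap _ _ (isUnit_mat _) hmul (mat_mul_mat_inv _) hp
        (by positivity) (hP.gap ha.le hat ht)
    _ ≤ c * Real.exp (-μ * (t - a)) * 1 * (Real.exp Λ * Real.exp Λ) := by gcongr
    _ = c * Real.exp (2 * Λ) * Real.exp (-μ * (t - a)) := by rw [two_mul, Real.exp_add]; ring

lemma norm_rightProj_mul_one_sub_rightProj_succ_le (hP : IsDominatedCocycle (p + 1) Λ μ c n m P)
    (hp : p < d) (hc : 0 ≤ c) (hμ : 0 ≤ μ) {t e : ℤ} (ht : n ≤ t) (hte : t < e) (he : e < m) :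
    ‖(svd (P t e)).rightProj (p + 1) * (1 - (svd (P t (e + 1))).rightProj (p + 1))‖ ≤
      c * Real.exp (2 * Λ) * Real.exp (-μ * (e - t)) := by
  have hmul : mat (P e (e + 1))⁻¹ * mat (P t (e + 1)) = mat (P t e) * 1 := by
    rw [mul_one, ← hP.mat_mul_mat ht hte.le (by omega) (by omega), ← mul_assoc, mat_inv_mul_mat,
      one_mul]
  have hD : ‖mat (P e (e + 1))‖ ≤ Real.exp Λ := by
    simpa using hP.norm_le (a := e) (b := e + 1) (by omega) (by omega) (by omega)
  have hD' : ‖mat (P e (e + 1))⁻¹‖ ≤ Real.exp Λ := by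
    simpa using hP.norm_inv_le (a := e) (b := e + 1) (by omega) (by omega) (by omega)
  have hone : ‖(1 : Matrix (Fin d) (Fin d) ℝ)‖ ≤ 1 := norm_le_one_of_mem_unitary (one_mem _)
  have hgap := hP.gap (a := t) (b := e + 1) ht (by omega) (by omega)
  push_cast at hgap
  calc _ = ‖(svd (P t e)).rightProj (p + 1) * 1 *
        (1 - (svd (P t (e + 1))).rightProj (p + 1))‖ := by
        rw [mul_one]
    _ ≤ c * Real.exp (-μ * (e + 1 - t)) * ‖(1 : Matrix (Fin d) (Fin d) ℝ)‖ *
        (‖mat (P e (e + 1))‖ * ‖mat (P e (e + 1))⁻¹‖) :=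
      SVD.norm_rightProj_mul_mul_le_of_gap _ _ (isUnit_mat _) hmul (mat_mul_mat_inv _) hp
        (by positivity) hgap
    _ ≤ c * Real.exp (-μ * (e - t)) * 1 * (Real.exp Λ * Real.exp Λ) := by
      gcongr ?_ * ?_ * (?_ * ?_)
      exact mul_le_mul_of_nonneg_left (Real.exp_le_exp.2 (by nlinarith)) hc
    _ = c * Real.exp (2 * Λ) * Real.exp (-μ * (e - t)) := by
      rw [two_mul, Real.exp_add]
      ring

end IsDominatedCocycle

/-- The constant in the exponential rate at which the attracting subspace of `P a t`, as `a`
decreases, and the repelling subspace of `P t e`, as `e` increases, converge. -/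
def convergenceConst (Λ μ c : ℝ) : ℝ := c * Real.exp (2 * Λ) / (1 - Real.exp (-μ))

/-- The constant `M` for which a vector close to being in both the attracting subspace of the past
and the repelling subspace of the future forces a loss of volume by the factor `M * exp (-μ * ℓ)`
on a time interval of length `2 * ℓ`. -/
def volumeLossConst (d p : ℕ) (Λ μ c : ℝ) : ℝ :=
  (d ^ p) ^ 2 * (3 * (convergenceConst Λ μ c + 1) + 3 * p.factorial * c)

section Constants

variable {d p : ℕ} {Λ μ c : ℝ}

lemma convergenceConst_nonneg (hc : 0 ≤ c) (hμ : 0 < μ) : 0 ≤ convergenceConst Λ μ c := by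
  have hr : Real.exp (-μ) < 1 := Real.exp_lt_one_iff.2 (neg_lt_zero.2 hμ)
  exact div_nonneg (by positivity) (sub_nonneg.2 hr.le)

lemma volumeLossConst_nonneg (hc : 0 ≤ c) (hμ : 0 < μ) : 0 ≤ volumeLossConst d p Λ μ c := by
  have hK := convergenceConst_nonneg (Λ := Λ) hc hμ
  rw [volumeLossConst]
  positivity

lemma norm_one_sub_mul_le_convergenceConst {π : ℕ → Matrix (Fin d) (Fin d) ℝ}
    (hπ : ∀ i, IsStarProjection (π i)) {N : ℕ} {x : ℝ} (hc : 0 ≤ c) (hμ : 0 < μ)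
    (hstep : ∀ i < N, ‖(1 - π i) * π (i + 1)‖ ≤
      c * Real.exp (2 * Λ) * Real.exp (-μ * (x + i))) :
    ‖(1 - π 0) * π N‖ ≤ convergenceConst Λ μ c * Real.exp (-μ * x) := by
  have hgeom (i : ℕ) (hi : i < N) : ‖(1 - π i) * π (i + 1)‖ ≤
      c * Real.exp (2 * Λ) * Real.exp (-μ * x) * Real.exp (-μ) ^ i := by
    refine (hstep i hi).trans_eq ?_
    rw [mul_add, Real.exp_add, mul_comm (-μ) (i : ℝ), Real.exp_nat_mul]
    ring
  refine (norm_one_sub_mul_le_geometric hπ (by positivity) (by positivity)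
    (Real.exp_lt_one_iff.2 (neg_lt_zero.2 hμ)) hgeom).trans_eq ?_
  rw [convergenceConst]
  ring

end Constants

/-- The point is that `1 - π₀ = (1 - π₀) π₁ + (1 - π₀) (1 - π₁)`. -/
lemma norm_act_one_sub_le {d : ℕ} {π₀ π₁ : Matrix (Fin d) (Fin d) ℝ} (hπ₀ : IsStarProjection π₀)
    {κ ω : ℝ} {v : Euc d} (hπ : ‖(1 - π₀) * π₁‖ ≤ κ)
    (hv : ‖act (1 - π₁) v‖ ≤ ω * ‖v‖) : ‖act (1 - π₀) v‖ ≤ (κ + ω) * ‖v‖ :=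
  calc ‖act (1 - π₀) v‖ = ‖act ((1 - π₀) * π₁) v + act (1 - π₀) (act (1 - π₁) v)‖ := by
        rw [← act_mul, ← add_act, ← mul_add, add_sub_cancel, mul_one]
    _ ≤ κ * ‖v‖ + ω * ‖v‖ := (norm_add_le _ _).trans (add_le_add (norm_act_le_of_le hπ)
        ((norm_act_le_of_norm_le_one hπ₀.one_sub.norm_le).trans hv))
    _ = (κ + ω) * ‖v‖ := (add_mul ..).symm

namespace IsDominatedCocycle

variable {d p : ℕ} {Λ μ c : ℝ} {n m : ℤ} {P : ℤ → ℤ → GL (Fin d) ℝ}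

lemma norm_one_sub_leftProj_mul_leftProj_le (hP : IsDominatedCocycle (p + 1) Λ μ c n m P)
    (hp : p < d) (hc : 0 ≤ c) (hμ : 0 < μ) {a t : ℤ} (ha : n ≤ a) (hat : a < t) (ht : t ≤ m) :
    ‖(1 - (svd (P a t)).leftProj (p + 1)) * (svd (P n t)).leftProj (p + 1)‖ ≤
      convergenceConst Λ μ c * Real.exp (-μ * (t - a)) := by
  have hstep (i : ℕ) (hi : i < (a - n).toNat) :
      ‖(1 - (svd (P (a - i) t)).leftProj (p + 1)) *
        (svd (P (a - (i + 1 : ℕ)) t)).leftProj (p + 1)‖ ≤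
      c * Real.exp (2 * Λ) * Real.exp (-μ * ((t - a : ℝ) + i)) := by
    rw [show a - ((i + 1 : ℕ) : ℤ) = a - i - 1 by push_cast; ring,
      show (t - a : ℝ) + i = t - (a - i : ℤ) by push_cast; ring]
    exact hP.norm_one_sub_leftProj_mul_leftProj_succ_le hp hc (by omega) (by omega) ht
  have h := norm_one_sub_mul_le_convergenceConst
    (π := fun i : ℕ => (svd (P (a - i) t)).leftProj (p + 1))
    (fun i => SVD.isStarProjection_leftProj _) hc hμ hstep
  have hn : a - ((a - n).toNat : ℤ) = n := by omega
  beta_reduce at h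
  rwa [hn, Nat.cast_zero, sub_zero] at h

lemma norm_rightProj_mul_one_sub_rightProj_le (hP : IsDominatedCocycle (p + 1) Λ μ c n m P)
    (hp : p < d) (hc : 0 ≤ c) (hμ : 0 < μ) {t e : ℤ} (ht : n ≤ t) (hte : t < e) (he : e ≤ m) :
    ‖(svd (P t e)).rightProj (p + 1) * (1 - (svd (P t m)).rightProj (p + 1))‖ ≤
      convergenceConst Λ μ c * Real.exp (-μ * (e - t)) := by
  have hstep (i : ℕ) (hi : i < (m - e).toNat) :
      ‖(1 - (1 - (svd (P t (e + i))).rightProj (p + 1))) *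
        (1 - (svd (P t (e + (i + 1 : ℕ)))).rightProj (p + 1))‖ ≤
      c * Real.exp (2 * Λ) * Real.exp (-μ * ((e - t : ℝ) + i)) := by
    rw [sub_sub_cancel, show e + ((i + 1 : ℕ) : ℤ) = e + i + 1 by push_cast; ring,
      show (e - t : ℝ) + i = (e + i : ℤ) - t by push_cast; ring]
    exact hP.norm_rightProj_mul_one_sub_rightProj_succ_le hp hc hμ.le ht (by omega) (by omega)
  have h := norm_one_sub_mul_le_convergenceConst
    (π := fun i : ℕ => 1 - (svd (P t (e + i))).rightProj (p + 1))
    (fun i => (SVD.isStarProjection_rightProj _).one_sub) hc hμ hstep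
  have hm : e + ((m - e).toNat : ℤ) = m := by omega
  beta_reduce at h
  rwa [hm, Nat.cast_zero, add_zero, sub_sub_cancel] at h

lemma maxVol_le_of_act_le (hP : IsDominatedCocycle (p + 1) Λ μ c n m P) (hp : p < d) (hc : 0 ≤ c)
    (hμ : 0 < μ) {t ℓ : ℤ} (hℓ : 0 < ℓ) (hn : n ≤ t - ℓ) (hm : t + ℓ ≤ m) {v : Euc d} (hv : v ≠ 0)
    (hvl : ‖act (1 - (svd (P n t)).leftProj (p + 1)) v‖ ≤ Real.exp (-μ * ℓ) * ‖v‖)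
    (hvr : ‖act ((svd (P t m)).rightProj (p + 1)) v‖ ≤ Real.exp (-μ * ℓ) * ‖v‖) :
    maxVol (mat (P (t - ℓ) (t + ℓ))) (p + 1) ≤ volumeLossConst d (p + 1) Λ μ c *
      Real.exp (-μ * ℓ) *
        (maxVol (mat (P (t - ℓ) t)) (p + 1) * maxVol (mat (P t (t + ℓ))) (p + 1)) := by
  have hleft := hP.norm_one_sub_leftProj_mul_leftProj_le hp hc hμ hn (t := t) (by omega) (by omega)
  have hright := hP.norm_rightProj_mul_one_sub_rightProj_le hp hc hμ (t := t) (by omega)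
    (by omega) hm
  have hgapl := hP.gap hn (b := t) (by omega) (by omega)
  have hgapr := hP.gap (a := t) (by omega) (by omega) hm
  push_cast at hleft hright hgapl hgapr
  rw [sub_sub_cancel] at hleft hgapl
  rw [add_sub_cancel_left] at hright hgapr
  have hdefl := norm_act_one_sub_le (SVD.isStarProjection_leftProj _)
    hleft hvl
  rw [← sub_sub_cancel 1 ((svd (P t (t + ℓ))).rightProj (p + 1))] at hright
  rw [← sub_sub_cancel 1 ((svd (P t m)).rightProj (p + 1))] at hvr
  have hdefr := norm_act_one_sub_le (SVD.isStarProjection_rightProj _).one_sub hright hvr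
  rw [sub_sub_cancel] at hdefr
  have hmul := hP.mat_mul_mat hn (b := t) (by omega) (by omega) hm
  rw [← hmul]
  refine (SVD.maxVol_mul_le_of_act_le (p := p + 1) _ _ (hmul ▸ isUnit_mat _) hp (by positivity)
    hgapl hgapr hv hdefl hdefr).trans_eq ?_
  rw [volumeLossConst]
  ring

end IsDominatedCocycle

/-- Halving a dyadic interval `N` times: the exponent `2 ^ j * (D + κ - j * μ / 2) - κ` is the
solution of the recursion `x (j + 1) = 2 * x j + κ - μ * 2 ^ j`, `x 0 = D`. -/
lemma le_exp_of_dyadic {f : ℤ → ℤ → ℝ} {s e : ℤ} {D κ μ : ℝ} (hf : ∀ a b, 0 ≤ f a b)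
    (hunit : ∀ a, s ≤ a → a + 1 ≤ e → f a (a + 1) ≤ Real.exp D)
    (hdouble : ∀ t ℓ, 0 < ℓ → s ≤ t - ℓ → t + ℓ ≤ e →
      f (t - ℓ) (t + ℓ) ≤ Real.exp κ * Real.exp (-μ * ℓ) * (f (t - ℓ) t * f t (t + ℓ)))
    (j : ℕ) {a : ℤ} (ha : s ≤ a) (hj : a + 2 ^ j ≤ e) :
    f a (a + 2 ^ j) ≤ Real.exp (2 ^ j * (D + κ - j * μ / 2) - κ) := by
  induction j generalizing a with
  | zero => simpa using hunit a ha (by simpa using hj)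
  | succ j ih =>
    have hpos : (0 : ℤ) < 2 ^ j := by positivity
    rw [pow_succ] at hj
    have hd := hdouble (a + 2 ^ j) (2 ^ j) hpos (by omega) (by omega)
    rw [add_sub_cancel_right, add_assoc, ← mul_two, ← pow_succ] at hd
    have hleft := ih ha (by omega)
    have hright := ih (a := a + 2 ^ j) (by omega) (by omega)
    rw [add_assoc, ← mul_two, ← pow_succ] at hright
    refine hd.trans ((mul_le_mul_of_nonneg_left (mul_le_mul hleft hright (hf _ _)
      (Real.exp_nonneg _)) (by positivity)).trans_eq ?_)
    rw [← Real.exp_add, ← Real.exp_add, ← Real.exp_add]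
    push_cast
    ring_nf

namespace IsDominatedCocycle

variable {d p q : ℕ} {Λ μ c : ℝ} {n m : ℤ} {P : ℤ → ℤ → GL (Fin d) ℝ}

lemma norm_le_exp_mul_norm_act (hP : IsDominatedCocycle p Λ μ c n m P) {s t : ℤ} (hs : n ≤ s)
    (hst : s ≤ t) (ht : t ≤ m) (u : Euc d) :
    ‖u‖ ≤ Real.exp (Λ * (t - s)) * ‖act (mat (P s t)) u‖ :=
  calc ‖u‖ = ‖act (mat (P s t)⁻¹) (act (mat (P s t)) u)‖ := by
        rw [← act_mul, mat_inv_mul_mat, act_one]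
    _ ≤ Real.exp (Λ * (t - s)) * ‖act (mat (P s t)) u‖ :=
      norm_act_le_of_le (hP.norm_inv_le hs hst ht)

lemma norm_act_one_sub_leftProj_act_le (hP : IsDominatedCocycle (p + 1) Λ μ c n m P) (hp : p < d)
    (hc : 0 ≤ c) (hμ : 0 ≤ μ) {s t : ℤ} (hs : n < s) (hst : s ≤ t) (ht : t ≤ m) {ε : ℝ}
    (hε : c * Real.exp (-μ * (s - n)) ≤ ε) (hA : SVD (mat (P n s))) {u : Euc d}
    (hu : act (hA.leftProj (p + 1)) u = u) :
    ‖act (1 - (svd (P n t)).leftProj (p + 1)) (act (mat (P s t)) u)‖ ≤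
      Real.exp (Λ * (t - s)) * ε * ‖u‖ := by
  have hmul : mat (P s t) * mat (P n s) = mat (P n t) * 1 := by
    rw [mul_one, hP.mat_mul_mat le_rfl hs.le hst ht]
  have hst' : (s : ℝ) ≤ t := by exact_mod_cast hst
  have hε₀ : 0 ≤ ε := le_trans (by positivity) hε
  have hgap : sv (mat (P n t)) (p + 2) ≤ ε * sv (mat (P n t)) (p + 1) := by
    refine (hP.gap le_rfl (hs.trans_le hst) ht).trans
      (mul_le_mul_of_nonneg_right (le_trans ?_ hε) (sv_nonneg _ _))
    exact mul_le_mul_of_nonneg_left (Real.exp_le_exp.2 (by nlinarith)) hc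
  have hone : ‖(1 : Matrix (Fin d) (Fin d) ℝ)‖ ≤ 1 := norm_le_one_of_mem_unitary (one_mem _)
  have hnorm := SVD.norm_one_sub_leftProj_mul_mul_le_of_gap hA (svd (P n t)) (isUnit_mat _) hmul
    (one_mul 1) hp hε₀ hgap
  rw [← hu, ← act_mul, ← act_mul, hu]
  refine norm_act_le_of_le (hnorm.trans ?_)
  calc ε * ‖mat (P s t)‖ * (‖(1 : Matrix (Fin d) (Fin d) ℝ)‖ * ‖(1 : Matrix (Fin d) (Fin d) ℝ)‖)
      ≤ ε * Real.exp (Λ * (t - s)) * (1 * 1) := by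
        gcongr
        exact hP.norm_le hs.le hst ht
    _ = Real.exp (Λ * (t - s)) * ε := by ring

lemma norm_act_rightProj_act_le (hP : IsDominatedCocycle (p + 1) Λ μ c n m P) (hp : p < d)
    (hc : 0 ≤ c) {s t : ℤ} (hs : n ≤ s) (hst : s ≤ t) (ht : t ≤ m) (hsm : s < m) {ε η : ℝ}
    (hε : c * Real.exp (-μ * (m - s)) ≤ ε) (hB : SVD (mat (P s m))) {u y : Euc d}
    (hy : act (hB.rightProj (p + 1)) y = 0) (huy : ‖u - y‖ ≤ η) :
    ‖act ((svd (P t m)).rightProj (p + 1)) (act (mat (P s t)) u)‖ ≤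
      Real.exp (Λ * (t - s)) * (η + ε * ‖y‖) := by
  have hmul : 1 * mat (P s m) = mat (P t m) * mat (P s t) := by
    rw [one_mul, hP.mat_mul_mat hs hst ht le_rfl]
  have hε₀ : 0 ≤ ε := le_trans (by positivity) hε
  have hG := hP.norm_le hs hst ht
  have hgap := (hP.gap hs hsm le_rfl).trans (mul_le_mul_of_nonneg_right hε (sv_nonneg _ _))
  have hone : ‖(1 : Matrix (Fin d) (Fin d) ℝ)‖ ≤ 1 := norm_le_one_of_mem_unitary (one_mem _)
  set Q := (svd (P t m)).rightProj (p + 1)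
  have hnorm : ‖Q * mat (P s t) * (1 - hB.rightProj (p + 1))‖ ≤ Real.exp (Λ * (t - s)) * ε :=
    calc _ ≤ ε * ‖mat (P s t)‖ *
          (‖(1 : Matrix (Fin d) (Fin d) ℝ)‖ * ‖(1 : Matrix (Fin d) (Fin d) ℝ)‖) :=
        SVD.norm_rightProj_mul_mul_le_of_gap hB _ (isUnit_mat _) hmul (one_mul 1) hp hε₀ hgap
      _ ≤ ε * Real.exp (Λ * (t - s)) * (1 * 1) := by gcongr
      _ = Real.exp (Λ * (t - s)) * ε := by ring
  have hQy : act Q (act (mat (P s t)) y) =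
      act (Q * mat (P s t) * (1 - hB.rightProj (p + 1))) y := by
    rw [act_mul, sub_act, act_one, hy, sub_zero, act_mul]
  calc ‖act Q (act (mat (P s t)) u)‖
      = ‖act Q (act (mat (P s t)) (u - y)) + act Q (act (mat (P s t)) y)‖ := by
        rw [← act_add, ← act_add, sub_add_cancel]
    _ ≤ Real.exp (Λ * (t - s)) * η + Real.exp (Λ * (t - s)) * ε * ‖y‖ := by
        refine (norm_add_le _ _).trans (add_le_add ?_ (hQy ▸ norm_act_le_of_le hnorm))
        refine (norm_act_le_of_norm_le_one (SVD.isStarProjection_rightProj _).norm_le).trans ?_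
        exact (norm_act_le_of_le hG).trans (by gcongr)
    _ = Real.exp (Λ * (t - s)) * (η + ε * ‖y‖) := by ring

lemma norm_act_proj_act_le (hP : IsDominatedCocycle (p + 1) Λ μ c n m P) (hp : p < d)
    (hc : 0 ≤ c) (hμ : 0 ≤ μ) (hΛ : 0 ≤ Λ) {s t : ℤ} {T η : ℝ} (hs : n < s) (hst : s ≤ t)
    (htT : (t : ℝ) - s ≤ T) (ht : t ≤ m) (hsm : s < m) (hηl : c * Real.exp (-μ * (s - n)) ≤ η)
    (hηr : c * Real.exp (-μ * (m - s)) ≤ η)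
    (hη : Real.exp (2 * Λ * T) * (2 * η) ≤ Real.exp (-μ * T)) (hA : SVD (mat (P n s)))
    (hB : SVD (mat (P s m))) {u y : Euc d} (hu : act (hA.leftProj (p + 1)) u = u)
    (hy : act (hB.rightProj (p + 1)) y = 0) (hu₁ : ‖u‖ = 1) (hy₁ : ‖y‖ = 1) (huy : ‖u - y‖ ≤ η) :
    ‖act (1 - (svd (P n t)).leftProj (p + 1)) (act (mat (P s t)) u)‖ ≤
        Real.exp (-μ * T) * ‖act (mat (P s t)) u‖ ∧
      ‖act ((svd (P t m)).rightProj (p + 1)) (act (mat (P s t)) u)‖ ≤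
        Real.exp (-μ * T) * ‖act (mat (P s t)) u‖ := by
  have hη₀ : 0 ≤ η := (norm_nonneg _).trans huy
  have hv := hP.norm_le_exp_mul_norm_act hs.le hst ht u
  set v := act (mat (P s t)) u
  have hrel : Real.exp (Λ * (t - s)) * (2 * η) ≤ Real.exp (-μ * T) * ‖v‖ :=
    calc Real.exp (Λ * (t - s)) * (2 * η)
        ≤ Real.exp (Λ * (t - s)) * (2 * η) * (Real.exp (Λ * (t - s)) * ‖v‖) :=
          le_mul_of_one_le_right (by positivity) (hu₁ ▸ hv)
      _ = Real.exp (2 * Λ * (t - s)) * (2 * η) * ‖v‖ := by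
          rw [mul_assoc 2 Λ, two_mul (Λ * _), Real.exp_add]
          ring
      _ ≤ Real.exp (2 * Λ * T) * (2 * η) * ‖v‖ := by gcongr
      _ ≤ Real.exp (-μ * T) * ‖v‖ := by gcongr
  constructor
  · refine (hP.norm_act_one_sub_leftProj_act_le hp hc hμ hs hst ht hηl hA hu).trans
      (le_trans ?_ hrel)
    rw [hu₁, mul_one]
    gcongr
    exact le_mul_of_one_le_left hη₀ one_le_two
  · refine (hP.norm_act_rightProj_act_le hp hc hs.le hst ht hsm hηr hB hy huy).trans
      (le_trans (le_of_eq ?_) hrel)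
    rw [hy₁, mul_one, two_mul]

lemma maxVol_le_exp (hP : IsDominatedCocycle q Λ μ c n m P) (hq : q ≤ d) {a b : ℤ} (ha : n ≤ a)
    (hab : a ≤ b) (hb : b ≤ m) : maxVol (mat (P a b)) q ≤ Real.exp (q * Λ * (b - a)) := by
  rw [mul_assoc, Real.exp_nat_mul]
  exact maxVol_le_pow (isUnit_mat _) hq (hP.norm_le ha hab hb)

lemma exp_neg_le_maxVol (hP : IsDominatedCocycle q Λ μ c n m P) (hq : q ≤ d) {a b : ℤ} (ha : n ≤ a)
    (hab : a ≤ b) (hb : b ≤ m) : Real.exp (-(q * Λ * (b - a))) ≤ maxVol (mat (P a b)) q := by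
  rw [mul_assoc, ← mul_neg, Real.exp_nat_mul, Real.exp_neg]
  exact inv_pow_le_maxVol (mat_mul_mat_inv _) hq (hP.norm_inv_le ha hab hb)

lemma mul_half_le_of_doubling (hP : IsDominatedCocycle q Λ μ c n m P) (hq : q ≤ d) {s : ℤ} {N : ℕ}
    {κ : ℝ} (hκ : 0 ≤ κ) (hs : n ≤ s) (hsm : s + 2 ^ N ≤ m)
    (hdouble : ∀ t ℓ, 0 < ℓ → s ≤ t - ℓ → t + ℓ ≤ s + 2 ^ N →
      maxVol (mat (P (t - ℓ) (t + ℓ))) q ≤ Real.exp κ * Real.exp (-μ * ℓ) *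
        (maxVol (mat (P (t - ℓ) t)) q * maxVol (mat (P t (t + ℓ))) q)) :
    N * μ / 2 ≤ 2 * (q * Λ) + κ := by
  have hT : (0 : ℤ) < 2 ^ N := by positivity
  have hunit (a : ℤ) (hl : s ≤ a) (hr : a + 1 ≤ s + 2 ^ N) :
      maxVol (mat (P a (a + 1))) q ≤ Real.exp (q * Λ) := by
    simpa using hP.maxVol_le_exp hq (a := a) (b := a + 1) (by omega) (by omega) (by omega)
  have hupper := le_exp_of_dyadic (fun a b => maxVol_nonneg (mat (P a b)) q) hunit hdouble N
    le_rfl le_rfl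
  have hlower := hP.exp_neg_le_maxVol hq (a := s) (b := s + 2 ^ N) hs (by omega) hsm
  have hle := Real.exp_le_exp.1 (hlower.trans hupper)
  have hT' : (0 : ℝ) < 2 ^ N := by positivity
  push_cast at hle
  by_contra! hlt
  nlinarith

lemma lt_norm_sub (hP : IsDominatedCocycle (p + 1) Λ μ c n m P) (hp : p < d) (hc : 0 ≤ c)
    (hμ : 0 < μ) (hΛ : 0 ≤ Λ) {s : ℤ} {N : ℕ} {η : ℝ} (hs : n < s) (hsm : s + 2 ^ N ≤ m)
    (hN : 2 * ((p + 1 : ℕ) * Λ) + volumeLossConst d (p + 1) Λ μ c < N * μ / 2)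
    (hηl : c * Real.exp (-μ * (s - n)) ≤ η) (hηr : c * Real.exp (-μ * (m - s)) ≤ η)
    (hη : Real.exp (2 * Λ * 2 ^ N) * (2 * η) ≤ Real.exp (-μ * 2 ^ N)) (hA : SVD (mat (P n s)))
    (hB : SVD (mat (P s m))) {u y : Euc d} (hu : act (hA.leftProj (p + 1)) u = u)
    (hy : act (hB.rightProj (p + 1)) y = 0) (hu₁ : ‖u‖ = 1) (hy₁ : ‖y‖ = 1) : η < ‖u - y‖ := by
  by_contra! huy
  have hT : (0 : ℤ) < 2 ^ N := by positivity
  refine hN.not_ge (hP.mul_half_le_of_doubling hp (volumeLossConst_nonneg hc hμ) hs.le hsm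
    fun t ℓ hℓ hl hr => ?_)
  have htT : (t : ℝ) - s ≤ 2 ^ N := by exact_mod_cast (by omega : t - s ≤ 2 ^ N)
  have hℓT : (ℓ : ℝ) ≤ 2 ^ N := by exact_mod_cast (by omega : ℓ ≤ 2 ^ N)
  have hexp : Real.exp (-μ * 2 ^ N) ≤ Real.exp (-μ * ℓ) := Real.exp_le_exp.2 (by nlinarith)
  have hv : act (mat (P s t)) u ≠ 0 := by
    intro h
    have := hP.norm_le_exp_mul_norm_act (s := s) (t := t) (by omega) (by omega) (by omega) u
    norm_num [h, hu₁] at this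
  obtain ⟨hvl, hvr⟩ := hP.norm_act_proj_act_le hp hc hμ.le hΛ hs (t := t) (by omega) htT
    (by omega) (by omega) hηl hηr hη hA hB hu hy hu₁ hy₁ huy
  have hvol := mul_nonneg (maxVol_nonneg (mat (P (t - ℓ) t)) (p + 1))
    (maxVol_nonneg (mat (P t (t + ℓ))) (p + 1))
  refine (hP.maxVol_le_of_act_le hp hc hμ hℓ (by omega) (by omega) hv
    (hvl.trans (by gcongr)) (hvr.trans (by gcongr))).trans ?_
  gcongr
  linarith [Real.add_one_le_exp (volumeLossConst d (p + 1) Λ μ c)]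

lemma hasGap (hP : IsDominatedCocycle (p + 1) Λ μ c n m P) (hp : p < d) {a b : ℤ} (ha : n ≤ a)
    (hab : a < b) (hb : b ≤ m) (hc : c * Real.exp (-μ * (b - a)) < 1) :
    HasGap (mat (P a b)) (p + 1) :=
  (hP.gap ha hab hb).trans_lt (mul_lt_of_lt_one_left (sv_pos (isUnit_mat _) hp) hc)

lemma le_subAngle (hP : IsDominatedCocycle (p + 1) Λ μ c n m P) (hp : p + 1 < d) (hc : 0 ≤ c)
    (hμ : 0 < μ) (hΛ : 0 ≤ Λ) {s : ℤ} {N : ℕ} {η : ℝ} (hs : n < s) (hsm : s + 2 ^ N ≤ m)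
    (hN : 2 * ((p + 1 : ℕ) * Λ) + volumeLossConst d (p + 1) Λ μ c < N * μ / 2)
    (hηl : c * Real.exp (-μ * (s - n)) ≤ η) (hηr : c * Real.exp (-μ * (m - s)) ≤ η)
    (hη : Real.exp (2 * Λ * 2 ^ N) * (2 * η) ≤ Real.exp (-μ * 2 ^ N))
    {U V : Submodule ℝ (Euc d)} (hU : IsCartanAttractor (mat (P n s)) (p + 1) U)
    (hV : IsCartanAttractor (mat (P s m)⁻¹) (d - (p + 1)) V) : η ≤ subAngle U V := by
  refine le_subAngle_of_forall_le_norm_sub (by rw [hU.finrank_eq hp.le]; omega)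
    (by rw [hV.finrank_eq (by omega)]; omega) fun u hu y hy hu₁ hy₁ => ?_
  obtain ⟨hA, rfl⟩ := hU.exists_svd
  obtain ⟨hB, rfl⟩ := hV.exists_svd
  have hy₀ : act ((hB.inv (mat_inv_mul_mat _)).rightProj (p + 1)) y = 0 := by
    rw [SVD.rightProj_inv _ _ hp.le, sub_act, act_one, hB.act_leftProj_of_mem_colSpan hy, sub_self]
  exact (hP.lt_norm_sub (by omega) hc hμ hΛ hs hsm hN hηl hηr hη hA _
    (hA.act_leftProj_of_mem_colSpan hu) hy₀ hu₁ hy₁).le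

end IsDominatedCocycle

lemma exists_scale (κ Λ : ℝ) {μ c : ℝ} (hμ : 0 < μ) :
    ∃ (N L : ℕ) (η : ℝ), 0 < η ∧ η < 1 ∧ κ < N * μ / 2 ∧ 2 ^ N ≤ L ∧
      Real.exp (2 * Λ * 2 ^ N) * (2 * η) ≤ Real.exp (-μ * 2 ^ N) ∧
      ∀ x : ℝ, L ≤ x → c * Real.exp (-μ * x) ≤ η := by
  obtain ⟨N, hN⟩ := exists_nat_gt (κ / (μ / 2))
  obtain ⟨η, hη₀, hη⟩ : ∃ η, 0 < η ∧
      η < min 1 (Real.exp (-μ * 2 ^ N) / (Real.exp (2 * Λ * 2 ^ N) * 2)) :=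
    exists_between (by positivity)
  have hdecay : Tendsto (fun x : ℝ => c * Real.exp (-μ * x)) atTop (𝓝 0) := by
    simpa [Function.comp_def] using (Real.tendsto_exp_neg_atTop_nhds_zero.comp
      (tendsto_id.const_mul_atTop hμ)).const_mul c
  obtain ⟨x₀, hx₀⟩ := eventually_atTop.1 (hdecay.eventually_le_const hη₀)
  refine ⟨N, max (2 ^ N) ⌈x₀⌉₊, η, hη₀, hη.trans_le (min_le_left _ _), ?_, le_max_left _ _, ?_,
    fun x hx => hx₀ x ((Nat.le_ceil x₀).trans (le_trans ?_ hx))⟩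
  · rwa [div_lt_iff₀ (by positivity), ← mul_div_assoc] at hN
  · have hle := (le_div_iff₀' (by positivity)).1 (hη.le.trans (min_le_right _ _))
    rwa [mul_assoc] at hle
  · exact_mod_cast le_max_right _ _

theorem exists_lt_subAngle_of_isDominatedCocycle {d p : ℕ} (hp : p + 1 < d) {Λ μ c : ℝ}
    (hΛ : 0 ≤ Λ) (hμ : 0 < μ) (hc : 0 ≤ c) :
    ∃ L : ℕ, ∃ δ > 0, ∀ {n s m : ℤ} {P : ℤ → ℤ → GL (Fin d) ℝ},
      IsDominatedCocycle (p + 1) Λ μ c n m P → L < s - n → L < m - s →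
      HasGap (mat (P n s)) (p + 1) ∧ HasGap (mat (P s m)⁻¹) (d - (p + 1)) ∧
        δ < subAngle (cartanAttractor (mat (P n s)) (p + 1))
          (cartanAttractor (mat (P s m)⁻¹) (d - (p + 1))) := by
  obtain ⟨N, L, η, hη₀, hη₁, hN, hNL, hη, hL⟩ := exists_scale (c := c)
    (2 * ((p + 1 : ℕ) * Λ) + volumeLossConst d (p + 1) Λ μ c) Λ hμ
  refine ⟨L, η / 2, half_pos hη₀, fun {n s m P} hP hns hsm => ?_⟩
  have hηl : c * Real.exp (-μ * (s - n)) ≤ η := hL _ (by exact_mod_cast hns.le)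
  have hηr : c * Real.exp (-μ * (m - s)) ≤ η := hL _ (by exact_mod_cast hsm.le)
  have hNL' : (2 : ℤ) ^ N ≤ L := by exact_mod_cast hNL
  exact ⟨hP.hasGap (by omega) le_rfl (by omega) (by omega) (hηl.trans_lt hη₁),
    (hP.hasGap (by omega) (by omega) (by omega) le_rfl (hηr.trans_lt hη₁)).of_mul_eq_one
      (mat_mul_mat_inv _) hp,
    (half_lt_self hη₀).trans_le (hP.le_subAngle hp hc hμ hΛ (by omega) (by omega) hN hηl hηr hη
      (isCartanAttractor_cartanAttractor (isUnit_mat _) _)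
      (isCartanAttractor_cartanAttractor (isUnit_mat _) _))⟩

/-- The product `g (b - 1) * ⋯ * g (a + 1) * g a` of the factors with index in `[a, b)`. -/
def intervalProd {d : ℕ} (g : ℤ → GL (Fin d) ℝ) (a b : ℤ) : GL (Fin d) ℝ :=
  prodSeq g a (b - a).toNat

section ProdSeq

variable {d : ℕ} {g : ℤ → GL (Fin d) ℝ}

lemma prodSeq_add (g : ℤ → GL (Fin d) ℝ) (n : ℤ) (a b : ℕ) :
    prodSeq g n (a + b) = prodSeq g (n + a) b * prodSeq g n a := by
  induction b with
  | zero => simp [prodSeq]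
  | succ b ih =>
    rw [← add_assoc, prodSeq, ih, prodSeq, mul_assoc, Nat.cast_add, add_assoc n]

lemma norm_prodSeq_le {C : ℝ} (hC : 0 ≤ C) {n : ℤ} {j : ℕ}
    (hg : ∀ i : ℕ, i < j → ‖mat (g (n + i))‖ ≤ C) : ‖mat (prodSeq g n j)‖ ≤ C ^ j := by
  induction j with
  | zero =>
    rw [prodSeq, pow_zero]
    exact norm_le_one_of_mem_unitary (one_mem _)
  | succ j ih =>
    rw [prodSeq, mat_mul, pow_succ']
    exact (norm_mul_le _ _).trans (mul_le_mul (hg j j.lt_succ_self)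
      (ih fun i hi => hg i (hi.trans j.lt_succ_self)) (norm_nonneg _) hC)

lemma norm_prodSeq_inv_le {C : ℝ} (hC : 0 ≤ C) {n : ℤ} {j : ℕ}
    (hg : ∀ i : ℕ, i < j → ‖mat (g (n + i))⁻¹‖ ≤ C) : ‖mat (prodSeq g n j)⁻¹‖ ≤ C ^ j := by
  induction j with
  | zero =>
    rw [prodSeq, inv_one, pow_zero]
    exact norm_le_one_of_mem_unitary (one_mem _)
  | succ j ih =>
    rw [prodSeq, mul_inv_rev, mat_mul, pow_succ]
    exact (norm_mul_le _ _).trans (mul_le_mul (ih fun i hi => hg i (hi.trans j.lt_succ_self))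
      (hg j j.lt_succ_self) (norm_nonneg _) (by positivity))

lemma isDominatedCocycle_intervalProd {p : ℕ} (hp : p < d) {C μ c : ℝ} (hC : 0 < C) {I : Set ℤ}
    (hI : I.OrdConnected)
    (hg : ∀ i ∈ I, opNorm (mat (g i)) ≤ C ∧ opNorm (mat (g i)⁻¹) ≤ C)
    (hgap : ∀ n ∈ I, ∀ m ∈ I, n ≤ m →
      sv (mat (prodSeq g n (m - n + 1).toNat)) (p + 2) /
          sv (mat (prodSeq g n (m - n + 1).toNat)) (p + 1) ≤
        c * Real.exp (-μ * ((m : ℝ) - n + 1))) {n m : ℤ} (hn : n ∈ I) (hm : m ∈ I) :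
    IsDominatedCocycle (p + 1) (Real.log C) μ c n m (intervalProd g) := by
  have hmem {i : ℤ} (hni : n ≤ i) (him : i ≤ m) : i ∈ I := hI.out hn hm ⟨hni, him⟩
  have hexp {a b : ℤ} (hab : a ≤ b) : C ^ (b - a).toNat = Real.exp (Real.log C * (b - a)) := by
    lift b - a to ℕ using sub_nonneg.2 hab with j hj
    rw [← Real.rpow_natCast, Real.rpow_def_of_pos hC, Int.toNat_natCast]
    congr 2
    exact_mod_cast hj
  refine ⟨fun {a b e} _ hab hbe _ => ?_, fun ha hab hb => ?_, fun ha hab hb => ?_,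
    fun {a b} ha hab hb => ?_⟩
  · have hadd := prodSeq_add g a (b - a).toNat (e - b).toNat
    rw [show a + ((b - a).toNat : ℤ) = b by omega,
      show (b - a).toNat + (e - b).toNat = (e - a).toNat by omega] at hadd
    exact hadd.symm
  · exact (norm_prodSeq_le hC.le fun i hi => (hg _ (hmem (by omega) (by omega))).1).trans_eq
      (hexp hab)
  · exact (norm_prodSeq_inv_le hC.le fun i hi => (hg _ (hmem (by omega) (by omega))).2).trans_eq
      (hexp hab)
  · have hratio := hgap a (hmem ha (by omega)) (b - 1) (hmem (by omega) (by omega)) (by omega)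
    rw [show b - 1 - a + 1 = b - a by ring, div_le_iff₀ (sv_pos (isUnit_mat _) hp),
      show ((b - 1 : ℤ) : ℝ) - a + 1 = b - a by push_cast; ring] at hratio
    exact hratio

end ProdSeq

/-- Lemma 2.5 of [BPS]: transversality along dominated sequences. -/
theorem stmt9 {d : ℕ} (hd : 2 ≤ d) (p : ℕ) (hp1 : 1 ≤ p) (hpd : p ≤ d - 1)
    (C : ℝ) (hC : 1 < C) (μ : ℝ) (hμ : 0 < μ) (c : ℝ) (hc : 0 < c) :
    ∃ L : ℕ, ∃ δ > (0 : ℝ), ∀ I : Set ℤ, I.OrdConnected →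
      ∀ gseq : ℤ → GL (Fin d) ℝ,
        (∀ i ∈ I, opNorm (mat (gseq i)) ≤ C ∧ opNorm (mat ((gseq i)⁻¹)) ≤ C) →
        (∀ n ∈ I, ∀ m ∈ I, n ≤ m →
          sv (mat (prodSeq gseq n (m - n + 1).toNat)) (p + 1) /
              sv (mat (prodSeq gseq n (m - n + 1).toNat)) p ≤
            c * Real.exp (-μ * ((m : ℝ) - (n : ℝ) + 1))) →
        ∀ n ∈ I, ∀ k ∈ I, ∀ m ∈ I, n < k → k < m →
          (L : ℤ) < min (k - n) (m - k) →
          HasGap (mat (prodSeq gseq n (k - n).toNat)) p ∧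
          HasGap (mat ((prodSeq gseq k (m - k).toNat)⁻¹)) (d - p) ∧
          δ < subAngle (cartanAttractor (mat (prodSeq gseq n (k - n).toNat)) p)
                (cartanAttractor (mat ((prodSeq gseq k (m - k).toNat)⁻¹)) (d - p)) := by
  obtain ⟨q, rfl⟩ := Nat.exists_eq_add_of_le' hp1
  obtain ⟨L, δ, hδ, hmain⟩ := exists_lt_subAngle_of_isDominatedCocycle (by omega : q + 1 < d)
    (Real.log_nonneg hC.le) hμ hc.le
  refine ⟨L, δ, hδ, fun I hI g hg hgap n hn k _ m hm _ _ hL => ?_⟩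
  obtain ⟨hnk, hkm⟩ := lt_min_iff.1 hL
  have hP := isDominatedCocycle_intervalProd (p := q) (by omega) (by linarith) hI hg hgap hn hm
  simpa only [intervalProd] using hmain hP hnk hkm

end Paper
end
end

section
/- Let Γ be a group with a finite symmetric generating set S and let ρ: Γ → GL(d,ℝ) be an {a_p}-Anosov representation. Then there exist δ > 0 and L ∈ ℕ such that for every geodesic segment (α_i)_{i=0}^{k} in Γ passing through the identity (i.e. α_m = e for some 0 ≤ m ≤ k) with |α_0| ≥ L and |α_k| ≥ L, the matrices ρ(α_k) and ρ(α_0) have gaps of index p and the matrix ρ(α_0)⁻¹ has a gap of index d−p, and ∠(U_p(ρ(α_k)), U_{d−p}(ρ(α_0))) > δ, where U_{d−p}(ρ(α_0)) denotes the Cartan attractor of index d−p of ρ(α_0). -/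
noncomputable section

open scoped Matrix RealInnerProductSpace
open Filter Topology

namespace Paper

/-- The word length of `γ` with respect to the generating set `S`. -/
def wordLength {Γ : Type*} [Group Γ] (S : Set Γ) (γ : Γ) : ℕ :=
  sInf { n | ∃ l : List Γ, l.length = n ∧ (∀ x ∈ l, x ∈ S) ∧ l.prod = γ }

/-!
A gap of index `p` of `ρ γ` makes its `p`-th exterior power `T γ` close to a rank-one operator
`‖T γ‖ • ⟪r, ·⟫ l`, with relative error exponentially small in the word length. Consequently
`‖T (a * b)‖` is comparable to `‖T a‖ * ‖T b‖` times the overlap `|⟪r a, l b⟫|`, and along a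
geodesic this overlap at a point hardly depends on the window around the point. If the overlaps were
tiny at every point of a long window, then doubling the window repeatedly would make the norms of
`T` decay superexponentially, whereas they decay at most exponentially. So every long window
contains a point of definite overlap, and moving from that point to any other one in the window
costs only a bounded factor. For the segment through the identity this bounds below the overlap of
the axes of `T (α 0)⁻¹` and `T (α k)`. That overlap is the determinant of the inner products between
an orthonormal basis of `U_p(ρ(α_k))` and one of the orthogonal complement of `U_{d-p}(ρ(α_0))`,
and such a determinant bounds the angle between the two attractors from below.
-/

section Geometric

lemma dist_le_geometric_tail {X : Type*} [PseudoMetricSpace X] {f : ℕ → X} {C θ : ℝ} {m n : ℕ}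
    (hC : 0 ≤ C) (hθ₀ : 0 ≤ θ) (hθ₁ : θ < 1) (hmn : m ≤ n)
    (h : ∀ i, m ≤ i → i < n → dist (f i) (f (i + 1)) ≤ C * θ ^ i) :
    dist (f m) (f n) ≤ C / (1 - θ) * θ ^ m :=
  calc dist (f m) (f n) ≤ ∑ i ∈ Finset.Ico m n, C * θ ^ i :=
        dist_le_Ico_sum_of_dist_le hmn fun {i} h₁ h₂ => h i h₁ h₂
    _ = C * ∑ i ∈ Finset.Ico m n, θ ^ i := (Finset.mul_sum ..).symm
    _ ≤ C * (θ ^ m / (1 - θ)) :=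
        mul_le_mul_of_nonneg_left (geom_sum_Ico_le_of_lt_one hθ₀ hθ₁) hC
    _ = C / (1 - θ) * θ ^ m := by ring

lemma mul_le_pow_two_pow_of_doubling {N : ℕ → ℕ → ℝ} {B C η : ℝ} {a b : ℕ} (hN : ∀ i j, 0 ≤ N i j)
    (hC : 0 ≤ C) (hB : 0 ≤ B) (hη : 0 ≤ η)
    (hstep : ∀ x, a ≤ x → x + 1 ≤ b → C * N x (x + 1) ≤ B)
    (hdouble : ∀ x t, a ≤ x → x + 2 * t ≤ b →
      N x (x + 2 * t) ≤ C * η ^ (2 * t) * (N x (x + t) * N (x + t) (x + 2 * t)))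
    (r : ℕ) : ∀ x, a ≤ x → x + 2 ^ r ≤ b → C * N x (x + 2 ^ r) ≤ (B * η ^ r) ^ 2 ^ r := by
  induction r with
  | zero => simpa using hstep
  | succ r ih =>
    intro x hx hxb
    rw [pow_succ'] at hxb
    have hleft := ih x hx (by omega)
    have hright := ih (x + 2 ^ r) (by omega) (by omega)
    rw [show x + 2 ^ r + 2 ^ r = x + 2 * 2 ^ r by ring] at hright
    calc C * N x (x + 2 ^ (r + 1))
        ≤ C * (C * η ^ (2 * 2 ^ r) * (N x (x + 2 ^ r) * N (x + 2 ^ r) (x + 2 * 2 ^ r))) := by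
          rw [pow_succ']
          exact mul_le_mul_of_nonneg_left (hdouble x _ hx hxb) hC
      _ = η ^ (2 * 2 ^ r) *
            ((C * N x (x + 2 ^ r)) * (C * N (x + 2 ^ r) (x + 2 * 2 ^ r))) := by ring
      _ ≤ η ^ (2 * 2 ^ r) * ((B * η ^ r) ^ 2 ^ r * (B * η ^ r) ^ 2 ^ r) := by
          have := mul_nonneg hC (hN (x + 2 ^ r) (x + 2 * 2 ^ r))
          gcongr
      _ = (B * η ^ (r + 1)) ^ 2 ^ (r + 1) := by ring

end Geometric

section NearRankOne

open InnerProductSpace ContinuousLinearMap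

variable {E F G : Type*} [NormedAddCommGroup E] [InnerProductSpace ℝ E]
  [NormedAddCommGroup F] [InnerProductSpace ℝ F] [NormedAddCommGroup G] [InnerProductSpace ℝ G]

lemma abs_abs_inner_sub_abs_inner_le {u v : E} {t η : ℝ} (hu : ‖u‖ = 1) (hv : ‖v‖ = 1)
    (h : ‖v - t • u‖ ≤ η) (x : E) : |(|⟪x, v⟫|) - (|⟪x, u⟫|)| ≤ 2 * η * ‖x‖ := by
  have hinner : |⟪x, v⟫ - t * ⟪x, u⟫| ≤ η * ‖x‖ := by
    rw [← inner_smul_right, ← inner_sub_right, mul_comm]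
    exact (abs_real_inner_le_norm _ _).trans (mul_le_mul_of_nonneg_left h (norm_nonneg x))
  have ht : |1 - (|t|)| ≤ η := by
    simpa [norm_smul, hu, hv] using (abs_norm_sub_norm_le v (t • u)).trans h
  have hxu : |⟪x, u⟫| ≤ ‖x‖ := by simpa [hu] using abs_real_inner_le_norm x u
  have hscale : |(|t * ⟪x, u⟫|) - (|⟪x, u⟫|)| ≤ η * ‖x‖ :=
    calc |(|t * ⟪x, u⟫|) - (|⟪x, u⟫|)| = |1 - (|t|)| * |⟪x, u⟫| := by
          rw [abs_mul, abs_sub_comm, ← one_sub_mul, abs_mul, abs_abs]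
      _ ≤ η * ‖x‖ := mul_le_mul ht hxu (abs_nonneg _) ((abs_nonneg _).trans ht)
  have habs := (abs_abs_sub_abs_le_abs_sub ⟪x, v⟫ (t * ⟪x, u⟫)).trans hinner
  have htri := abs_sub_le (|⟪x, v⟫|) (|t * ⟪x, u⟫|) (|⟪x, u⟫|)
  linarith

/-- `A` is, up to a relative error `ε`, the rank-one operator `x ↦ ‖A‖ ⟪r, x⟫ l` with unit axes
`l` (attracting) and `r`. -/
structure NearRankOne (ε : ℝ) (A : E →L[ℝ] F) (l : F) (r : E) : Prop where
  norm_left : ‖l‖ = 1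
  norm_right : ‖r‖ = 1
  norm_sub_le : ‖A - ‖A‖ • rankOne ℝ l r‖ ≤ ε * ‖A‖

namespace NearRankOne

variable {ε ε' K : ℝ} {A : F →L[ℝ] G} {B : E →L[ℝ] F} {l l' : G} {r : F} {r' : E} {lB : F}

lemma mono (h : NearRankOne ε A l r) (hε : ε ≤ ε') : NearRankOne ε' A l r :=
  ⟨h.norm_left, h.norm_right, h.norm_sub_le.trans (by gcongr)⟩

lemma nonneg (h : NearRankOne ε A l r) (hA : A ≠ 0) : 0 ≤ ε :=
  nonneg_of_mul_nonneg_left ((norm_nonneg _).trans h.norm_sub_le) (norm_pos_iff.2 hA)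

lemma norm_pos_of_isUnit {T : E →L[ℝ] E} {u v : E} (h : NearRankOne ε T u v) (hT : IsUnit T) :
    0 < ‖T‖ := by
  have : Nontrivial E := ⟨u, 0, norm_ne_zero_iff.1 (h.norm_left.trans_ne one_ne_zero)⟩
  exact norm_pos_iff.2 hT.ne_zero

lemma adjoint [CompleteSpace F] [CompleteSpace G] (h : NearRankOne ε A l r) :
    NearRankOne ε (adjoint A) r l where
  norm_left := h.norm_right
  norm_right := h.norm_left
  norm_sub_le := by
    have : ContinuousLinearMap.adjoint A - ‖A‖ • rankOne ℝ r l =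
        ContinuousLinearMap.adjoint (A - ‖A‖ • rankOne ℝ l r) := by
      simp [map_sub, adjoint_rankOne]
    rw [LinearIsometryEquiv.norm_map, this, LinearIsometryEquiv.norm_map]
    exact h.norm_sub_le

lemma abs_norm_comp_sub_le (hA : NearRankOne ε A l r) (hB : NearRankOne ε' B lB r') :
    |‖A ∘L B‖ - ‖A‖ * ‖B‖ * (|⟪r, lB⟫|)| ≤ ‖A‖ * ‖B‖ * (ε + ε') := by
  have hrank : ‖rankOne ℝ lB r'‖ = 1 := by simp [hB.norm_left, hB.norm_right]
  have hmain : ‖(‖A‖ * ‖B‖ * ⟪r, lB⟫) • rankOne ℝ l r'‖ = ‖A‖ * ‖B‖ * |⟪r, lB⟫| := by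
    simp [norm_smul, hA.norm_left, hB.norm_right]
  have hsplit : A ∘L B - (‖A‖ * ‖B‖ * ⟪r, lB⟫) • rankOne ℝ l r' =
      A ∘L (B - ‖B‖ • rankOne ℝ lB r') +
        (A - ‖A‖ • rankOne ℝ l r) ∘L (‖B‖ • rankOne ℝ lB r') := by
    ext z
    simp only [sub_apply, add_apply, comp_apply, smul_apply, rankOne_apply, map_sub, map_smul]
    module
  calc |‖A ∘L B‖ - ‖A‖ * ‖B‖ * (|⟪r, lB⟫|)|
      ≤ ‖A ∘L B - (‖A‖ * ‖B‖ * ⟪r, lB⟫) • rankOne ℝ l r'‖ := by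
        rw [← hmain]; exact abs_norm_sub_norm_le _ _
    _ ≤ ‖A‖ * ‖B - ‖B‖ • rankOne ℝ lB r'‖ +
          ‖A - ‖A‖ • rankOne ℝ l r‖ * ‖‖B‖ • rankOne ℝ lB r'‖ := by
        rw [hsplit]
        exact norm_add_le_of_le (opNorm_comp_le _ _) (opNorm_comp_le _ _)
    _ ≤ ‖A‖ * (ε' * ‖B‖) + ε * ‖A‖ * ‖B‖ := by
        rw [norm_smul, hrank, norm_norm, mul_one]
        gcongr
        exacts [hB.norm_sub_le, hA.norm_sub_le]
    _ = ‖A‖ * ‖B‖ * (ε + ε') := by ring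

lemma le_abs_inner (hA : NearRankOne ε A l r) (hB : NearRankOne ε' B lB r') (hA₀ : 0 < ‖A‖)
    (hB₀ : 0 < ‖B‖) {q : ℝ} (h : (q + (ε + ε')) * (‖A‖ * ‖B‖) ≤ ‖A ∘L B‖) : q ≤ |⟪r, lB⟫| := by
  refine le_of_mul_le_mul_left ?_ (mul_pos hA₀ hB₀)
  linarith [(abs_le.1 (hA.abs_norm_comp_sub_le hB)).2]

/-- Both `l'` and `l` are close to the direction of `A (B r')`. -/
lemma abs_inner_left_sub_le (hA : NearRankOne ε A l r) (hAB : NearRankOne ε' (A ∘L B) l' r')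
    (hB : ‖B‖ ≤ K) (hAK : ‖A‖ ≤ K * ‖A ∘L B‖) (h₀ : A ∘L B ≠ 0) (x : G) :
    |(|⟪x, l'⟫|) - (|⟪x, l⟫|)| ≤ 2 * (ε' + K ^ 2 * ε) * ‖x‖ := by
  set n := ‖A ∘L B‖
  have hn : 0 < n := norm_pos_iff.2 h₀
  have hε : 0 ≤ ε := hA.nonneg (by rintro rfl; simp at h₀)
  have hK : 0 ≤ K := (norm_nonneg B).trans hB
  have hl' : ‖A (B r') - n • l'‖ ≤ ε' * n := by
    simpa [hAB.norm_right] using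
      (A ∘L B - n • rankOne ℝ l' r').le_of_opNorm_le hAB.norm_sub_le r'
  have hl : ‖A (B r') - (‖A‖ * ⟪r, B r'⟫) • l‖ ≤ K ^ 2 * ε * n :=
    calc ‖A (B r') - (‖A‖ * ⟪r, B r'⟫) • l‖ ≤ ε * ‖A‖ * ‖B r'‖ := by
          simpa [smul_smul] using (A - ‖A‖ • rankOne ℝ l r).le_of_opNorm_le hA.norm_sub_le (B r')
      _ ≤ ε * (K * n) * K := by
          gcongr
          simpa [hAB.norm_right] using B.le_of_opNorm_le hB r'
      _ = K ^ 2 * ε * n := by ring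
  refine abs_abs_inner_sub_abs_inner_le hA.norm_left hAB.norm_left
    (t := n⁻¹ * (‖A‖ * ⟪r, B r'⟫)) ?_ x
  have hdiff : l' - (n⁻¹ * (‖A‖ * ⟪r, B r'⟫)) • l =
      n⁻¹ • ((A (B r') - (‖A‖ * ⟪r, B r'⟫) • l) - (A (B r') - n • l')) := by
    rw [sub_sub_sub_cancel_left, smul_sub, inv_smul_smul₀ hn.ne', smul_smul]
  rw [hdiff, norm_smul, norm_inv, Real.norm_of_nonneg hn.le, inv_mul_le_iff₀ hn]
  linarith [_root_.norm_sub_le (A (B r') - (‖A‖ * ⟪r, B r'⟫) • l) (A (B r') - n • l')]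

lemma abs_inner_right_sub_le [CompleteSpace E] [CompleteSpace F] [CompleteSpace G]
    (hB : NearRankOne ε B lB r') {r'' : E} (hAB : NearRankOne ε' (A ∘L B) l' r'')
    (hA : ‖A‖ ≤ K) (hBK : ‖B‖ ≤ K * ‖A ∘L B‖) (h₀ : A ∘L B ≠ 0) (x : E) :
    |(|⟪r'', x⟫|) - (|⟪r', x⟫|)| ≤ 2 * (ε' + K ^ 2 * ε) * ‖x‖ := by
  have hAB' := hAB.adjoint
  rw [adjoint_comp] at hAB'
  rw [real_inner_comm, real_inner_comm x r']
  refine hB.adjoint.abs_inner_left_sub_le hAB' ?_ ?_ ?_ x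
  · rwa [LinearIsometryEquiv.norm_map]
  · rwa [← adjoint_comp, LinearIsometryEquiv.norm_map, LinearIsometryEquiv.norm_map]
  · rwa [← adjoint_comp, map_ne_zero_iff _ (LinearIsometryEquiv.injective _)]

end NearRankOne

end NearRankOne

section QuasiMultiplicative

open InnerProductSpace ContinuousLinearMap

variable {H : Type*} [NormedAddCommGroup H] [InnerProductSpace ℝ H]

/-- A cocycle of operators over the segment `{0, …, k}`, such as `A i j = T ((α i)⁻¹ * α j)` for a
representation `T` and a geodesic segment `α`: a step has norm at most `K` in either direction, and
`A i j` is nearly of rank one when `i ≤ j`, with error decaying like `θ ^ (j - i)` and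
axes `l i j`, `r i j`. -/
structure NearRankOneCocycle (K c θ : ℝ) (k : ℕ) (A : ℕ → ℕ → H →L[ℝ] H) (l r : ℕ → ℕ → H) :
    Prop where
  self (i) : A i i = 1
  comp (i j n) : A i j ∘L A j n = A i n
  norm_succ_le {i} : i + 1 ≤ k → ‖A i (i + 1)‖ ≤ K
  norm_succ_le' {i} : i + 1 ≤ k → ‖A (i + 1) i‖ ≤ K
  nearRankOne {i j} : i ≤ j → j ≤ k → NearRankOne (c * θ ^ (j - i)) (A i j) (l i j) (r i j)

namespace NearRankOneCocycle

variable {K c θ : ℝ} {k : ℕ} {A : ℕ → ℕ → H →L[ℝ] H} {l r : ℕ → ℕ → H}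

lemma nontrivial (h : NearRankOneCocycle K c θ k A l r) : Nontrivial H :=
  nontrivial_of_ne (l 0 0) 0 <| norm_ne_zero_iff.1 <| by
    simp [(h.nearRankOne le_rfl k.zero_le).norm_left]

lemma ne_zero (h : NearRankOneCocycle K c θ k A l r) (i j : ℕ) : A i j ≠ 0 := by
  have := h.nontrivial
  intro h₀
  have := h.comp i j i
  rw [h₀, zero_comp, h.self] at this
  exact zero_ne_one this

lemma norm_pos (h : NearRankOneCocycle K c θ k A l r) (i j : ℕ) : 0 < ‖A i j‖ :=
  norm_pos_iff.2 (h.ne_zero i j)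

lemma norm_le_mul (h : NearRankOneCocycle K c θ k A l r) (i j n : ℕ) :
    ‖A i n‖ ≤ ‖A i j‖ * ‖A j n‖ := by
  rw [← h.comp i j n]
  exact opNorm_comp_le _ _

lemma norm_le_pow_mul_right (h : NearRankOneCocycle K c θ k A l r) (hK : 0 ≤ K) (i : ℕ) {j t : ℕ}
    (hj : j + t ≤ k) : ‖A i j‖ ≤ K ^ t * ‖A i (j + t)‖ := by
  induction t with
  | zero => simp
  | succ t ih =>
    calc ‖A i j‖ ≤ K ^ t * ‖A i (j + t)‖ := ih (by omega)
      _ ≤ K ^ t * (‖A i (j + t + 1)‖ * K) := by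
        gcongr
        exact (h.norm_le_mul i (j + t + 1) (j + t)).trans <|
          mul_le_mul_of_nonneg_left (h.norm_succ_le' (by omega)) (norm_nonneg _)
      _ = K ^ (t + 1) * ‖A i (j + (t + 1))‖ := by rw [← add_assoc]; ring

lemma norm_le_pow_mul_left (h : NearRankOneCocycle K c θ k A l r) (hK : 0 ≤ K) (j : ℕ) {i t : ℕ}
    (hi : i + t ≤ k) : ‖A i j‖ ≤ K ^ t * ‖A (i + t) j‖ := by
  induction t with
  | zero => simp
  | succ t ih =>
    calc ‖A i j‖ ≤ K ^ t * ‖A (i + t) j‖ := ih (by omega)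
      _ ≤ K ^ t * (K * ‖A (i + t + 1) j‖) := by
        gcongr
        exact (h.norm_le_mul (i + t) (i + t + 1) j).trans <|
          mul_le_mul_of_nonneg_right (h.norm_succ_le (by omega)) (norm_nonneg _)
      _ = K ^ (t + 1) * ‖A (i + (t + 1)) j‖ := by rw [← add_assoc]; ring

lemma abs_norm_sub_le (h : NearRankOneCocycle K c θ k A l r) {i j n : ℕ} (hij : i ≤ j)
    (hjn : j ≤ n) (hnk : n ≤ k) :
    |‖A i n‖ - ‖A i j‖ * ‖A j n‖ * (|⟪r i j, l j n⟫|)| ≤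
      ‖A i j‖ * ‖A j n‖ * (c * θ ^ (j - i) + c * θ ^ (n - j)) := by
  have := (h.nearRankOne hij (hjn.trans hnk)).abs_norm_comp_sub_le (h.nearRankOne hjn hnk)
  rwa [h.comp] at this

lemma dist_overlap_succ_right_le (h : NearRankOneCocycle K c θ k A l r) (hc : 0 ≤ c) (hθ₀ : 0 ≤ θ)
    (hθ₁ : θ ≤ 1) {i j n : ℕ} (hij : i ≤ j) (hjn : j ≤ n) (hnk : n + 1 ≤ k) :
    dist |⟪r i j, l j n⟫| |⟪r i j, l j (n + 1)⟫| ≤ 2 * (1 + K ^ 2) * c * θ ^ (n - j) := by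
  have hnext := h.nearRankOne (i := j) (j := n + 1) (by omega) hnk
  rw [← h.comp j n (n + 1)] at hnext
  have hK : 0 ≤ K := (norm_nonneg _).trans (h.norm_succ_le hnk)
  have hle := (h.nearRankOne hjn (by omega)).abs_inner_left_sub_le hnext (h.norm_succ_le hnk)
    (by rw [h.comp]; simpa using h.norm_le_pow_mul_right hK j hnk)
    (by rw [h.comp]; exact h.ne_zero _ _) (r i j)
  rw [(h.nearRankOne hij (by omega)).norm_right, mul_one, abs_sub_comm] at hle
  calc dist |⟪r i j, l j n⟫| |⟪r i j, l j (n + 1)⟫|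
      ≤ 2 * (c * θ ^ (n + 1 - j) + K ^ 2 * (c * θ ^ (n - j))) := hle
    _ ≤ 2 * (c * θ ^ (n - j) + K ^ 2 * (c * θ ^ (n - j))) := by
        gcongr 2 * (c * ?_ + _)
        exact pow_le_pow_of_le_one hθ₀ hθ₁ (by omega)
    _ = 2 * (1 + K ^ 2) * c * θ ^ (n - j) := by ring

lemma dist_overlap_succ_left_le [CompleteSpace H] (h : NearRankOneCocycle K c θ k A l r)
    (hc : 0 ≤ c) (hθ₀ : 0 ≤ θ) (hθ₁ : θ ≤ 1) {i j n : ℕ} (hij : i + 1 ≤ j) (hjn : j ≤ n)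
    (hnk : n ≤ k) :
    dist |⟪r (i + 1) j, l j n⟫| |⟪r i j, l j n⟫| ≤ 2 * (1 + K ^ 2) * c * θ ^ (j - (i + 1)) := by
  have hnext := h.nearRankOne (i := i) (j := j) (by omega) (by omega)
  rw [← h.comp i (i + 1) j] at hnext
  have hik : i + 1 ≤ k := by omega
  have hle := (h.nearRankOne hij (by omega)).abs_inner_right_sub_le hnext (h.norm_succ_le hik)
    (by
      have := (h.norm_le_mul (i + 1) i j).trans
        (mul_le_mul_of_nonneg_right (h.norm_succ_le' hik) (norm_nonneg _))
      rwa [h.comp])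
    (by rw [h.comp]; exact h.ne_zero _ _) (l j n)
  rw [(h.nearRankOne hjn hnk).norm_left, mul_one, abs_sub_comm] at hle
  calc dist |⟪r (i + 1) j, l j n⟫| |⟪r i j, l j n⟫|
      ≤ 2 * (c * θ ^ (j - i) + K ^ 2 * (c * θ ^ (j - (i + 1)))) := hle
    _ ≤ 2 * (c * θ ^ (j - (i + 1)) + K ^ 2 * (c * θ ^ (j - (i + 1)))) := by
        gcongr 2 * (c * ?_ + _)
        exact pow_le_pow_of_le_one hθ₀ hθ₁ (by omega)
    _ = 2 * (1 + K ^ 2) * c * θ ^ (j - (i + 1)) := by ring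

/-- The constant in the comparison of the overlaps `|⟪r i j, l j n⟫|` over different windows around
`j`. -/
def overlapConst (K c θ : ℝ) : ℝ := 2 * (1 + K ^ 2) * c / (1 - θ)

lemma overlapConst_nonneg (hc : 0 ≤ c) (hθ₁ : θ < 1) : 0 ≤ overlapConst K c θ :=
  div_nonneg (by positivity) (sub_nonneg.2 hθ₁.le)

lemma dist_overlap_right_le (h : NearRankOneCocycle K c θ k A l r) (hc : 0 ≤ c) (hθ₀ : 0 ≤ θ)
    (hθ₁ : θ < 1) {i j n t : ℕ} (hij : i ≤ j) (htn : j + t ≤ n) (hnk : n ≤ k) :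
    dist |⟪r i j, l j (j + t)⟫| |⟪r i j, l j n⟫| ≤ overlapConst K c θ * θ ^ t := by
  have := dist_le_geometric_tail (f := fun s => |⟪r i j, l j (j + s)⟫|) (m := t) (n := n - j)
    (C := 2 * (1 + K ^ 2) * c) (by positivity) hθ₀ hθ₁ (by omega) fun s _ hs => by
      simpa [← add_assoc] using h.dist_overlap_succ_right_le hc hθ₀ hθ₁.le hij (n := j + s)
        (by omega) (by omega)
  rwa [show j + (n - j) = n by omega] at this

lemma dist_overlap_left_le [CompleteSpace H] (h : NearRankOneCocycle K c θ k A l r) (hc : 0 ≤ c)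
    (hθ₀ : 0 ≤ θ) (hθ₁ : θ < 1) {i j n t : ℕ} (htj : i + t ≤ j) (hjn : j ≤ n) (hnk : n ≤ k) :
    dist |⟪r (j - t) j, l j n⟫| |⟪r i j, l j n⟫| ≤ overlapConst K c θ * θ ^ t := by
  have := dist_le_geometric_tail (f := fun s => |⟪r (j - s) j, l j n⟫|) (m := t) (n := j - i)
    (C := 2 * (1 + K ^ 2) * c) (by positivity) hθ₀ hθ₁ (by omega) fun s _ hs => by
      have := h.dist_overlap_succ_left_le hc hθ₀ hθ₁.le (i := j - (s + 1)) (j := j) (by omega)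
        hjn hnk
      rwa [show j - (s + 1) + 1 = j - s by omega, show j - (j - s) = s by omega] at this
  rwa [show j - (j - i) = i by omega] at this

lemma norm_le_of_overlap_le [CompleteSpace H] (h : NearRankOneCocycle K c θ k A l r) (hc : 0 ≤ c)
    (hθ₀ : 0 ≤ θ) (hθ₁ : θ < 1) {x t : ℕ} (hx : x + 2 * t ≤ k)
    (hov : |⟪r 0 (x + t), l (x + t) k⟫| ≤ θ ^ t) :
    ‖A x (x + 2 * t)‖ ≤
      (1 + 2 * overlapConst K c θ + 2 * c) * θ ^ t * (‖A x (x + t)‖ * ‖A (x + t) (x + 2 * t)‖) := by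
  have hleft := h.dist_overlap_left_le hc hθ₀ hθ₁ (i := 0) (j := x + t) (n := x + 2 * t) (t := t)
    (by omega) (by omega) hx
  have hright := h.dist_overlap_right_le hc hθ₀ hθ₁ (i := 0) (j := x + t) (n := k) (t := t)
    (by omega) (by omega) le_rfl
  rw [show x + t - t = x by omega] at hleft
  rw [show x + t + t = x + 2 * t by omega] at hright
  have hlocal : |⟪r x (x + t), l (x + t) (x + 2 * t)⟫| ≤ (1 + 2 * overlapConst K c θ) * θ ^ t := by
    linarith [(abs_le.1 hleft).2, (abs_le.1 hright).2]
  have hnorm := h.abs_norm_sub_le (i := x) (j := x + t) (n := x + 2 * t) (by omega) (by omega) hx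
  rw [show x + t - x = t by omega, show x + 2 * t - (x + t) = t by omega] at hnorm
  have hpos := mul_pos (h.norm_pos x (x + t)) (h.norm_pos (x + t) (x + 2 * t))
  linarith [(abs_le.1 hnorm).2, mul_le_mul_of_nonneg_left hlocal hpos.le]

/-- Otherwise the norms would decay superexponentially along the window, against
`1 ≤ ‖A m (m + W)‖ * K ^ W`. -/
lemma exists_lt_overlap [CompleteSpace H] (hK : 1 ≤ K) (hc : 0 ≤ c) (hθ₀ : 0 < θ) (hθ₁ : θ < 1) :
    ∃ W : ℕ, ∀ (k : ℕ) (A : ℕ → ℕ → H →L[ℝ] H) (l r : ℕ → ℕ → H),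
      NearRankOneCocycle K c θ k A l r → ∀ m, m + W ≤ k →
        ∃ t ≤ W, θ ^ W < |⟪r 0 (m + t), l (m + t) k⟫| := by
  set C := 1 + 2 * overlapConst K c θ + 2 * c
  have hC : 1 ≤ C := by linarith [overlapConst_nonneg (K := K) hc hθ₁]
  obtain ⟨R, hR⟩ : ∃ R : ℕ, C * K ^ 2 * √θ ^ R < 1 := by
    have hlim := (tendsto_pow_atTop_nhds_zero_of_lt_one (Real.sqrt_nonneg θ)
      ((Real.sqrt_lt' one_pos).2 (by simpa using hθ₁))).const_mul (C * K ^ 2)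
    exact ((mul_zero (C * K ^ 2) ▸ hlim).eventually_lt_const one_pos).exists
  refine ⟨2 ^ R, fun k A l r h m hmk => ?_⟩
  by_contra! hsmall
  have := h.nontrivial
  have hdecay : C * ‖A m (m + 2 ^ R)‖ ≤ (C * K * √θ ^ R) ^ 2 ^ R := by
    refine mul_le_pow_two_pow_of_doubling (N := fun i j => ‖A i j‖) (fun _ _ => norm_nonneg _)
      (by positivity) (by positivity) (Real.sqrt_nonneg θ) (a := m) (b := m + 2 ^ R)
      (fun x _ hxb => by gcongr; exact h.norm_succ_le (by omega)) (fun x t hx hxt => ?_)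
      R m le_rfl le_rfl
    rw [pow_mul, Real.sq_sqrt hθ₀.le]
    refine h.norm_le_of_overlap_le hc hθ₀.le hθ₁ (by omega) ?_
    have := hsmall (x + t - m) (by omega)
    rw [show m + (x + t - m) = x + t by omega] at this
    exact this.trans (pow_le_pow_of_le_one hθ₀.le hθ₁.le (by omega))
  have hlower : 1 ≤ K ^ 2 ^ R * ‖A m (m + 2 ^ R)‖ := by
    simpa [h.self] using h.norm_le_pow_mul_right (by positivity) m hmk
  have : C < C :=
    calc C ≤ C * (K ^ 2 ^ R * ‖A m (m + 2 ^ R)‖) := le_mul_of_one_le_right (by positivity) hlower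
      _ = K ^ 2 ^ R * (C * ‖A m (m + 2 ^ R)‖) := by ring
      _ ≤ K ^ 2 ^ R * (C * K * √θ ^ R) ^ 2 ^ R := by gcongr
      _ = (C * K ^ 2 * √θ ^ R) ^ 2 ^ R := by rw [← mul_pow]; ring
      _ < 1 := pow_lt_one₀ (by positivity) hR (by positivity)
      _ ≤ C := hC
  exact this.false

lemma exists_mul_norm_le_norm [CompleteSpace H] (hK : 1 ≤ K) (hc : 0 ≤ c) (hθ₀ : 0 < θ)
    (hθ₁ : θ < 1) :
    ∃ q > 0, ∃ L : ℕ, ∀ (k : ℕ) (A : ℕ → ℕ → H →L[ℝ] H) (l r : ℕ → ℕ → H),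
      NearRankOneCocycle K c θ k A l r → ∀ m, L ≤ m → m + L ≤ k →
        q * (‖A 0 m‖ * ‖A m k‖) ≤ ‖A 0 k‖ := by
  obtain ⟨W, hW⟩ := exists_lt_overlap (H := H) hK hc hθ₀ hθ₁
  obtain ⟨L, hL⟩ : ∃ L : ℕ, 2 * c * θ ^ L < θ ^ W / 2 := by
    have hlim := (tendsto_pow_atTop_nhds_zero_of_lt_one hθ₀.le hθ₁).const_mul (2 * c)
    exact ((mul_zero (2 * c) ▸ hlim).eventually_lt_const (by positivity)).exists
  refine ⟨θ ^ W / 2 / K ^ (2 * W), by positivity, L + W, fun k A l r h m hm hmk => ?_⟩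
  obtain ⟨t, htW, ht⟩ := hW k A l r h m (by omega)
  have hshift : ‖A 0 m‖ * ‖A m k‖ ≤ K ^ (2 * W) * (‖A 0 (m + t)‖ * ‖A (m + t) k‖) :=
    calc ‖A 0 m‖ * ‖A m k‖ ≤ (K ^ t * ‖A 0 (m + t)‖) * (K ^ t * ‖A (m + t) k‖) := by
          gcongr
          exacts [h.norm_le_pow_mul_right (by positivity) 0 (by omega),
            h.norm_le_pow_mul_left (by positivity) k (by omega)]
      _ = K ^ (2 * t) * (‖A 0 (m + t)‖ * ‖A (m + t) k‖) := by ring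
      _ ≤ K ^ (2 * W) * (‖A 0 (m + t)‖ * ‖A (m + t) k‖) := by gcongr
  have herr : c * θ ^ (m + t - 0) + c * θ ^ (k - (m + t)) ≤ θ ^ W / 2 :=
    calc c * θ ^ (m + t - 0) + c * θ ^ (k - (m + t)) ≤ c * θ ^ L + c * θ ^ L := by
          gcongr c * ?_ + c * ?_ <;> exact pow_le_pow_of_le_one hθ₀.le hθ₁.le (by omega)
      _ ≤ θ ^ W / 2 := by linarith
  have hnorm := (abs_le.1 <| h.abs_norm_sub_le (i := 0) (j := m + t) (n := k) (by omega) (by omega)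
    le_rfl).1
  have hpos := mul_pos (h.norm_pos 0 (m + t)) (h.norm_pos (m + t) k)
  calc θ ^ W / 2 / K ^ (2 * W) * (‖A 0 m‖ * ‖A m k‖)
      ≤ θ ^ W / 2 / K ^ (2 * W) * (K ^ (2 * W) * (‖A 0 (m + t)‖ * ‖A (m + t) k‖)) := by gcongr
    _ = θ ^ W / 2 * (‖A 0 (m + t)‖ * ‖A (m + t) k‖) := by field_simp
    _ ≤ ‖A 0 k‖ := by
        linarith [mul_le_mul_of_nonneg_left herr hpos.le, mul_le_mul_of_nonneg_left ht.le hpos.le]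

end NearRankOneCocycle

/-- A sequence `α` restricts to a geodesic segment on `{0, …, k}` for the left-invariant distance
`w (g⁻¹ * h)` of a length function `w`. -/
def IsGeodesicSegment {Γ : Type*} [Group Γ] (w : Γ → ℕ) (k : ℕ) (α : ℕ → Γ) : Prop :=
  ∀ i j, i ≤ k → j ≤ k → w ((α i)⁻¹ * α j) = Nat.dist i j

variable {Γ : Type*} [Group Γ] {w : Γ → ℕ} {k : ℕ} {α : ℕ → Γ}

lemma IsGeodesicSegment.apply_ends_of_apply_eq_one (hα : IsGeodesicSegment w k α) {m : ℕ}
    (hmk : m ≤ k) (hm : α m = 1) : w (α 0) = m ∧ w (α 0)⁻¹ = m ∧ w (α k) = k - m := by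
  have h₀ := hα m 0 hmk k.zero_le
  have h₁ := hα 0 m k.zero_le hmk
  have hk := hα m k hmk le_rfl
  simp only [hm, inv_one, one_mul, mul_one] at h₀ h₁ hk
  exact ⟨h₀.trans m.dist_zero_right, h₁.trans m.dist_zero_left,
    hk.trans (Nat.dist_eq_sub_of_le hmk)⟩

lemma IsGeodesicSegment.eq_sub (hα : IsGeodesicSegment w k α) {i j : ℕ} (hij : i ≤ j)
    (hjk : j ≤ k) : w ((α i)⁻¹ * α j) = j - i := by
  rw [hα i j (hij.trans hjk) hjk, Nat.dist_eq_sub_of_le hij]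

theorem exists_mul_norm_le_norm_of_isGeodesicSegment [CompleteSpace H] {T : Γ →* (H →L[ℝ] H)}
    {K c θ : ℝ} (hK : 1 ≤ K) (hc : 0 ≤ c) (hθ₀ : 0 < θ) (hθ₁ : θ < 1)
    (hw : ∀ γ, w γ = 1 → ‖T γ‖ ≤ K) (hT : ∀ γ, ∃ l r, NearRankOne (c * θ ^ w γ) (T γ) l r) :
    ∃ q > 0, ∃ L : ℕ, ∀ k α, IsGeodesicSegment w k α → ∀ m, L ≤ m → m + L ≤ k →
      q * (‖T ((α 0)⁻¹ * α m)‖ * ‖T ((α m)⁻¹ * α k)‖) ≤ ‖T ((α 0)⁻¹ * α k)‖ := by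
  obtain ⟨q, hq, L, hL⟩ := NearRankOneCocycle.exists_mul_norm_le_norm (H := H) hK hc hθ₀ hθ₁
  choose l r hlr using hT
  refine ⟨q, hq, L, fun k α hα => hL k (fun i j => T ((α i)⁻¹ * α j))
    (fun i j => l ((α i)⁻¹ * α j)) (fun i j => r ((α i)⁻¹ * α j)) ?_⟩
  exact
    { self := fun i => by simp
      comp := fun i j n => by rw [← mul_def, ← map_mul, mul_assoc, mul_inv_cancel_left]
      norm_succ_le := fun {i} hi => hw _ (by simp [hα.eq_sub i.le_succ hi])
      norm_succ_le' := fun {i} hi => hw _ (by simp [hα _ _ hi (i.le_succ.trans hi), Nat.dist])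
      nearRankOne := fun {i j} hij hjk => by
        simpa [hα.eq_sub hij hjk] using hlr ((α i)⁻¹ * α j) }

end QuasiMultiplicative

section SingularValues

open Module

variable {E F : Type*} [NormedAddCommGroup E] [InnerProductSpace ℝ E]
  [NormedAddCommGroup F] [InnerProductSpace ℝ F]

lemma norm_sq_apply_eq_sum_of_diagonal {ι : Type*} [Fintype ι] {b : OrthonormalBasis ι ℝ E}
    {c : OrthonormalBasis ι ℝ F} {A : E →ₗ[ℝ] F} {τ : ι → ℝ} (h : ∀ i, A (b i) = τ i • c i)
    (v : E) : ‖A v‖ ^ 2 = ∑ i, (τ i * ⟪b i, v⟫) ^ 2 := by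
  have hAv : A v = ∑ i, (τ i * ⟪b i, v⟫) • c i := by
    conv_lhs => rw [← b.sum_repr' v]
    simp only [map_sum, map_smul, h, smul_smul, mul_comm]
  rw [← c.sum_sq_inner_right (A v)]
  refine Finset.sum_congr rfl fun i _ => ?_
  rw [hAv, c.orthonormal.inner_right_fintype]

lemma inner_eq_zero_of_mem_span_image {ι : Type*} {b : ι → E} (hb : Orthonormal ℝ b) {s : Set ι}
    {i : ι} (hi : i ∉ s) {v : E} (hv : v ∈ Submodule.span ℝ (b '' s)) : ⟪b i, v⟫ = 0 := by
  rw [Finsupp.mem_span_image_iff_linearCombination] at hv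
  obtain ⟨f, hf, rfl⟩ := hv
  rw [hb.inner_right_finsupp]
  exact Finsupp.notMem_support_iff.1 fun h => hi (hf h)

variable {d : ℕ}

/-- A singular value decomposition of `A`: orthonormal bases `b`, `c` and a nonincreasing list `σ`
of nonnegative numbers such that `A` maps `b i` to `σ i • c i`. -/
structure IsSVD (A : E →ₗ[ℝ] F) (σ : Fin d → ℝ) (b : OrthonormalBasis (Fin d) ℝ E)
    (c : OrthonormalBasis (Fin d) ℝ F) : Prop where
  antitone : Antitone σ
  nonneg (i) : 0 ≤ σ i
  apply_basis (i) : A (b i) = σ i • c i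

theorem exists_isSVD [FiniteDimensional ℝ E] [FiniteDimensional ℝ F] (hE : finrank ℝ E = d)
    (hF : finrank ℝ F = d) (A : E →ₗ[ℝ] F) :
    ∃ (σ : Fin d → ℝ) (b : OrthonormalBasis (Fin d) ℝ E) (c : OrthonormalBasis (Fin d) ℝ F),
      IsSVD A σ b c := by
  set σ : Fin d → ℝ := fun i => A.singularValues i
  have hσ : ∀ i, 0 ≤ σ i := fun i => A.singularValues_nonneg i
  obtain ⟨b, hb⟩ : ∃ b : OrthonormalBasis (Fin d) ℝ E,
      ∀ i, (LinearMap.adjoint A ∘ₗ A) (b i) = σ i ^ 2 • b i :=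
    ⟨A.isSymmetric_adjoint_comp_self.eigenvectorBasis hE, fun i => by
      rw [A.isSymmetric_adjoint_comp_self.apply_eigenvectorBasis hE i,
        ← A.sq_singularValues_fin hE]
      rfl⟩
  have hinner : ∀ i j, ⟪A (b i), A (b j)⟫ = if i = j then σ i ^ 2 else 0 := fun i j => by
    rw [← LinearMap.adjoint_inner_left, ← LinearMap.comp_apply, hb, real_inner_smul_left,
      b.inner_eq_ite, mul_ite, mul_one, mul_zero]
  obtain ⟨c, hc⟩ := Orthonormal.exists_orthonormalBasis_extension_of_card_eq
    (v := fun i => (σ i)⁻¹ • A (b i)) (s := {i | σ i ≠ 0}) (by simpa using hF) <| by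
      rw [orthonormal_iff_ite]
      rintro ⟨i, hi⟩ ⟨j, hj⟩
      simp only [Set.domRestrict_apply, real_inner_smul_left, real_inner_smul_right, hinner,
        Subtype.mk.injEq]
      split_ifs with hij
      · subst hij
        have : σ i ≠ 0 := hi
        field_simp
      · simp
  refine ⟨σ, b, c, fun i j hij => A.singularValues_antitone hij, hσ, fun i => ?_⟩
  by_cases hi : σ i = 0
  · have := hinner i i
    simp_all
  · rw [hc i hi, smul_inv_smul₀ hi]

namespace IsSVD

variable {A : E →ₗ[ℝ] F} {σ : Fin d → ℝ} {b : OrthonormalBasis (Fin d) ℝ E}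
  {c : OrthonormalBasis (Fin d) ℝ F}

lemma pos (h : IsSVD A σ b c) (hA : Function.Injective A) (i : Fin d) : 0 < σ i := by
  refine (h.nonneg i).lt_of_ne' fun h₀ => b.orthonormal.ne_zero i <| hA ?_
  rw [h.apply_basis, h₀, zero_smul, map_zero]

lemma leftInverse (h : IsSVD A σ b c) {B : F →ₗ[ℝ] E} (hB : Function.LeftInverse B A) :
    IsSVD B (fun i => (σ i.rev)⁻¹) (c.reindex Fin.revPerm) (b.reindex Fin.revPerm) where
  antitone i j hij :=
    inv_anti₀ (h.pos hB.injective _) (h.antitone (Fin.rev_le_rev.2 hij))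
  nonneg i := inv_nonneg.2 (h.nonneg _)
  apply_basis i := by
    have := congrArg B (h.apply_basis i.rev)
    rw [hB, map_smul] at this
    simp [this, inv_smul_smul₀ (h.pos hB.injective i.rev).ne']

lemma norm_apply_le (h : IsSVD A σ b c) {q : Fin d} {v : E} (hv : ∀ i < q, ⟪b i, v⟫ = 0) :
    ‖A v‖ ≤ σ q * ‖v‖ := by
  refine abs_le_of_sq_le_sq' ?_ (mul_nonneg (h.nonneg q) (norm_nonneg v)) |>.2
  rw [norm_sq_apply_eq_sum_of_diagonal h.apply_basis, mul_pow, ← b.sum_sq_inner_right v,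
    Finset.mul_sum]
  gcongr with i
  rw [mul_pow]
  rcases lt_or_ge i q with hi | hi
  · simp [hv i hi]
  · gcongr
    exacts [h.nonneg i, h.antitone hi]

lemma le_norm_apply (h : IsSVD A σ b c) {q : Fin d} {v : E} (hv : ∀ i, q < i → ⟪b i, v⟫ = 0) :
    σ q * ‖v‖ ≤ ‖A v‖ := by
  refine abs_le_of_sq_le_sq' ?_ (norm_nonneg _) |>.2
  rw [norm_sq_apply_eq_sum_of_diagonal h.apply_basis, mul_pow, ← b.sum_sq_inner_right v,
    Finset.mul_sum]
  gcongr with i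
  rw [mul_pow]
  rcases le_or_gt i q with hi | hi
  · gcongr
    exacts [h.nonneg q, h.antitone hi]
  · simp [hv i hi]

end IsSVD

end SingularValues

section Matrix

open Module

variable {d : ℕ} {g : Matrix (Fin d) (Fin d) ℝ} {σ : Fin d → ℝ}
  {b c : OrthonormalBasis (Fin d) ℝ (Euc d)}

lemma IsSVD.csInf_norm_act_le (h : IsSVD (Matrix.toEuclideanLin g) σ b c) (q : Fin d)
    {P : Submodule ℝ (Euc d)} (hP : finrank ℝ P = (q : ℕ) + 1) :
    sInf {t | ∃ v ∈ P, ‖v‖ = 1 ∧ t = ‖act g v‖} ≤ σ q := by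
  let φ : P →ₗ[ℝ] (Set.Iio q → ℝ) :=
    LinearMap.pi fun i => (innerₛₗ ℝ (b i)).comp P.subtype
  obtain ⟨v, hv, hv₀⟩ := (Submodule.ne_bot_iff _).1 <|
    φ.ker_ne_bot_of_finrank_lt (by simp [hP])
  have hv₁ : ‖(v : Euc d)‖ ≠ 0 := by simpa using hv₀
  have hort : ∀ i < q, ⟪b i, (‖(v : Euc d)‖⁻¹ • v : Euc d)⟫ = 0 := fun i hi => by
    have : ⟪b i, (v : Euc d)⟫ = 0 := congrFun (LinearMap.mem_ker.1 hv) ⟨i, hi⟩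
    rw [real_inner_smul_right, this, mul_zero]
  have hnorm : ‖(‖(v : Euc d)‖⁻¹ • v : Euc d)‖ = 1 := by
    rw [norm_smul, norm_inv, norm_norm, inv_mul_cancel₀ hv₁]
  have hle := h.norm_apply_le hort
  rw [hnorm, mul_one] at hle
  refine le_trans (csInf_le ⟨0, ?_⟩ ⟨_, P.smul_mem _ v.2, hnorm, rfl⟩) hle
  rintro _ ⟨_, _, _, rfl⟩
  exact norm_nonneg _

lemma IsSVD.csInf_norm_act_span (h : IsSVD (Matrix.toEuclideanLin g) σ b c) (q : Fin d) :
    sInf {t | ∃ v ∈ Submodule.span ℝ (b '' Set.Iic q), ‖v‖ = 1 ∧ t = ‖act g v‖} = σ q := by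
  refine IsLeast.csInf_eq
    ⟨⟨b q, Submodule.subset_span ⟨q, Set.self_mem_Iic, rfl⟩, b.norm_eq_one q, ?_⟩, ?_⟩
  · rw [show act g (b q) = σ q • c q from h.apply_basis q, norm_smul, c.norm_eq_one, mul_one,
      Real.norm_of_nonneg (h.nonneg q)]
  · rintro _ ⟨v, hv, hv₁, rfl⟩
    have := h.le_norm_apply (q := q) fun i hi =>
      inner_eq_zero_of_mem_span_image b.orthonormal (by simpa using hi) hv
    rwa [hv₁, mul_one] at this

theorem IsSVD.sv_eq (h : IsSVD (Matrix.toEuclideanLin g) σ b c) (q : Fin d) :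
    sv g (q + 1) = σ q := by
  refine IsGreatest.csSup_eq
    ⟨⟨Submodule.span ℝ (b '' Set.Iic q), ?_, (h.csInf_norm_act_span q).symm⟩, ?_⟩
  · have hli : LinearIndependent ℝ ((Set.Iic q).domRestrict b) :=
      b.orthonormal.linearIndependent.comp _ Subtype.val_injective
    rw [← Set.range_domRestrict, finrank_span_eq_card hli]
    simp
  · rintro _ ⟨P, hP, rfl⟩
    exact h.csInf_norm_act_le q hP

lemma IsSVD.hasGap (h : IsSVD (Matrix.toEuclideanLin g) σ b c) {n : ℕ} (hn : n + 1 < d)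
    (hσ : σ ⟨n + 1, hn⟩ < σ ⟨n, by omega⟩) : HasGap g (n + 1) := by
  rw [HasGap, h.sv_eq ⟨n + 1, hn⟩, h.sv_eq ⟨n, by omega⟩]
  exact hσ

lemma IsSVD.hasGap_of_leftInverse (h : IsSVD (Matrix.toEuclideanLin g) σ b c) {n : ℕ}
    (hn : n + 1 < d) (hσ : σ ⟨n + 1, hn⟩ < σ ⟨n, by omega⟩) {g' : Matrix (Fin d) (Fin d) ℝ}
    (hg : Function.LeftInverse (Matrix.toEuclideanLin g') (Matrix.toEuclideanLin g)) :
    HasGap g' (d - (n + 1)) := by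
  rw [show d - (n + 1) = d - (n + 2) + 1 by omega]
  refine (h.leftInverse hg).hasGap (by omega) ?_
  have h₁ : Fin.rev ⟨d - (n + 2) + 1, by omega⟩ = (⟨n, by omega⟩ : Fin d) := by
    ext; simp only [Fin.val_rev]; omega
  have h₂ : Fin.rev ⟨d - (n + 2), by omega⟩ = (⟨n + 1, hn⟩ : Fin d) := by
    ext; simp only [Fin.val_rev]; omega
  rw [h₁, h₂]
  exact inv_strictAnti₀ (h.pos hg.injective _) hσ

end Matrix

section CartanAttractor

variable {d : ℕ} {g : Matrix (Fin d) (Fin d) ℝ}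

lemma mem_unitaryGroup_iff_exists_orthonormalBasis {k : Matrix (Fin d) (Fin d) ℝ} :
    k ∈ Matrix.unitaryGroup (Fin d) ℝ ↔
      ∃ b : OrthonormalBasis (Fin d) ℝ (Euc d), ∀ i j, b i j = k j i := by
  let col (i : Fin d) : Euc d := WithLp.toLp 2 fun j => k j i
  have horth : k ∈ Matrix.unitaryGroup (Fin d) ℝ ↔ Orthonormal ℝ col := by
    rw [← Matrix.gram_eq_one_iff_orthonormal (𝕜 := ℝ), Matrix.mem_unitaryGroup_iff']
    refine Eq.congr (Matrix.ext fun i j => ?_) rfl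
    simp [col, Matrix.mul_apply, PiLp.inner_apply, mul_comm]
  refine horth.trans ⟨fun h => ?_, fun ⟨b, hb⟩ => ?_⟩
  · have huniv : Orthonormal ℝ (Set.univ.domRestrict col) := h.comp _ Subtype.val_injective
    obtain ⟨b, hb⟩ := huniv.exists_orthonormalBasis_extension_of_card_eq (by simp)
    exact ⟨b, fun i j => by rw [hb i trivial]⟩
  · have hcol : col = b := funext fun i => PiLp.ext fun j => (hb i j).symm
    exact hcol ▸ b.orthonormal

lemma toEuclideanLin_apply_eq_smul_iff {k l : Matrix (Fin d) (Fin d) ℝ} {σ : Fin d → ℝ}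
    {b c : OrthonormalBasis (Fin d) ℝ (Euc d)} (hl : l ∈ Matrix.unitaryGroup (Fin d) ℝ)
    (hb : ∀ i j, b i j = l i j) (hc : ∀ i j, c i j = k j i) :
    (∀ i, Matrix.toEuclideanLin g (b i) = σ i • c i) ↔ g = k * Matrix.diagonal σ * l := by
  have hcol : (∀ i, Matrix.toEuclideanLin g (b i) = σ i • c i) ↔
      g * star l = k * Matrix.diagonal σ := by
    rw [← Matrix.ext_iff, forall_comm]
    refine forall_congr' fun i => ?_
    simp [PiLp.ext_iff, Matrix.mul_diagonal, Matrix.mul_apply (M := g), Matrix.mulVec,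
      dotProduct, hb, hc, mul_comm (σ i)]
  rw [hcol]
  constructor <;> intro h
  · rw [← h, mul_assoc, Matrix.mem_unitaryGroup_iff'.1 hl, mul_one]
  · rw [h, mul_assoc _ l, Matrix.mem_unitaryGroup_iff.1 hl, mul_one]

theorem isCartanAttractor_iff {p : ℕ} {U : Submodule ℝ (Euc d)} :
    IsCartanAttractor g p U ↔ ∃ (σ : Fin d → ℝ) (b c : OrthonormalBasis (Fin d) ℝ (Euc d)),
      IsSVD (Matrix.toEuclideanLin g) σ b c ∧
      U = Submodule.span ℝ (c '' {i | (i : ℕ) < p}) := by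
  have hspan {k : Matrix (Fin d) (Fin d) ℝ} {c : OrthonormalBasis (Fin d) ℝ (Euc d)}
      (hc : ∀ i j, c i j = k j i) : c '' {i | (i : ℕ) < p} =
        {x | ∃ i : Fin d, (i : ℕ) < p ∧
          x = (EuclideanSpace.equiv (Fin d) ℝ).symm (fun j => k j i)} := by
    ext x
    refine exists_congr fun i => and_congr_right fun _ => eq_comm.trans ?_
    rw [show c i = (EuclideanSpace.equiv (Fin d) ℝ).symm (fun j => k j i) from
      PiLp.ext (hc i)]
  constructor
  · rintro ⟨k, l, σ, hk, hl, hσ, hσ₀, hg, rfl⟩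
    obtain ⟨c, hc⟩ := mem_unitaryGroup_iff_exists_orthonormalBasis.1 hk
    obtain ⟨b, hb⟩ :=
      mem_unitaryGroup_iff_exists_orthonormalBasis.1 (Matrix.transpose_mem_unitaryGroup_iff.2 hl)
    exact ⟨σ, b, c, ⟨hσ, hσ₀, (toEuclideanLin_apply_eq_smul_iff hl hb hc).2 hg⟩, by
      rw [hspan hc]⟩
  · rintro ⟨σ, b, c, h, rfl⟩
    let k : Matrix (Fin d) (Fin d) ℝ := .of fun j i => c i j
    let l : Matrix (Fin d) (Fin d) ℝ := .of fun i j => b i j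
    have hk : k ∈ Matrix.unitaryGroup (Fin d) ℝ :=
      mem_unitaryGroup_iff_exists_orthonormalBasis.2 ⟨c, fun _ _ => rfl⟩
    have hl : l ∈ Matrix.unitaryGroup (Fin d) ℝ := Matrix.transpose_mem_unitaryGroup_iff.1 <|
      mem_unitaryGroup_iff_exists_orthonormalBasis.2 ⟨b, fun _ _ => rfl⟩
    refine ⟨k, l, σ, hk, hl, h.antitone, h.nonneg, ?_, by rw [hspan (k := k) fun _ _ => rfl]⟩
    exact (toEuclideanLin_apply_eq_smul_iff hl (fun _ _ => rfl) fun _ _ => rfl).1 h.apply_basis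

theorem exists_isSVD_cartanAttractor (g : Matrix (Fin d) (Fin d) ℝ) (p : ℕ) :
    ∃ (σ : Fin d → ℝ) (b c : OrthonormalBasis (Fin d) ℝ (Euc d)),
      IsSVD (Matrix.toEuclideanLin g) σ b c ∧
      cartanAttractor g p = Submodule.span ℝ (c '' {i | (i : ℕ) < p}) := by
  rw [← isCartanAttractor_iff]
  have hex : ∃ U, IsCartanAttractor g p U := by
    obtain ⟨σ, b, c, h⟩ := exists_isSVD finrank_euclideanSpace_fin finrank_euclideanSpace_fin
      (Matrix.toEuclideanLin g)
    exact ⟨_, isCartanAttractor_iff.2 ⟨σ, b, c, h, rfl⟩⟩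
  rw [cartanAttractor, dif_pos hex]
  exact hex.choose_spec

end CartanAttractor

section ExteriorPower

open Module InnerProductSpace

variable {E F : Type*} [NormedAddCommGroup E] [InnerProductSpace ℝ E]
  [NormedAddCommGroup F] [InnerProductSpace ℝ F]

lemma norm_apply_le_of_diagonal {ι : Type*} [Fintype ι] {b : OrthonormalBasis ι ℝ E}
    {c : OrthonormalBasis ι ℝ F} {A : E →ₗ[ℝ] F} {τ : ι → ℝ} (h : ∀ i, A (b i) = τ i • c i)
    {K : ℝ} (hK : 0 ≤ K) (hτ : ∀ i, |τ i| ≤ K) (v : E) : ‖A v‖ ≤ K * ‖v‖ := by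
  refine (abs_le_of_sq_le_sq' ?_ (mul_nonneg hK (norm_nonneg v))).2
  rw [norm_sq_apply_eq_sum_of_diagonal h, mul_pow, ← b.sum_sq_inner_right v, Finset.mul_sum]
  gcongr with i
  rw [mul_pow, ← sq_abs (τ i)]
  gcongr
  exact hτ i

lemma nearRankOne_of_diagonal {ι : Type*} [Fintype ι] {b : OrthonormalBasis ι ℝ E}
    {c : OrthonormalBasis ι ℝ F} {A : E →L[ℝ] F} {τ : ι → ℝ} (h : ∀ i, A (b i) = τ i • c i)
    {ε : ℝ} (hε₀ : 0 ≤ ε) (hε₁ : ε ≤ 1) {i₀ : ι} (hi₀ : 0 ≤ τ i₀)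
    (hτ : ∀ i ≠ i₀, |τ i| ≤ ε * τ i₀) : NearRankOne ε A (c i₀) (b i₀) := by
  classical
  have hnorm : ‖A‖ = τ i₀ := by
    refine le_antisymm (A.opNorm_le_bound hi₀ <| norm_apply_le_of_diagonal (A := A.toLinearMap) h
      hi₀ fun i => ?_) ?_
    · rcases eq_or_ne i i₀ with rfl | hi
      · rw [abs_of_nonneg hi₀]
      · exact (hτ i hi).trans (mul_le_of_le_one_left hi₀ hε₁)
    · simpa [h, norm_smul, abs_of_nonneg hi₀] using A.le_opNorm (b i₀)
  refine ⟨c.norm_eq_one i₀, b.norm_eq_one i₀, ?_⟩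
  rw [hnorm]
  have hdiag : ∀ i, (A - τ i₀ • rankOne ℝ (c i₀) (b i₀)).toLinearMap (b i) =
      (if i = i₀ then 0 else τ i) • c i := fun i => by
    rcases eq_or_ne i i₀ with rfl | hi
    · simp [h]
    · simp [h, hi, b.inner_eq_zero hi.symm]
  refine ContinuousLinearMap.opNorm_le_bound _ (mul_nonneg hε₀ hi₀) <|
    norm_apply_le_of_diagonal hdiag (mul_nonneg hε₀ hi₀) fun i => ?_
  split_ifs with hi
  · simpa using mul_nonneg hε₀ hi₀
  · exact hτ i hi

lemma le_orderEmbedding_apply {d m : ℕ} (f : Fin m ↪o Fin d) (i : Fin m) : (i : ℕ) ≤ f i := by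
  obtain ⟨i, hi⟩ := i
  induction i with
  | zero => exact Nat.zero_le _
  | succ i ih =>
    exact (ih (by omega)).trans_lt (f.strictMono (Fin.mk_lt_mk.2 i.lt_succ_self))

lemma le_orderEmbedding_last {d n : ℕ} (hn : n + 1 ≤ d) {f : Fin (n + 1) ↪o Fin d}
    (hf : f ≠ Fin.castLEOrderEmb hn) : n + 1 ≤ (f (Fin.last n) : ℕ) := by
  by_contra! hlt
  refine hf <| DFunLike.coe_injective <|
    (f.strictMono.range_inj (Fin.castLEOrderEmb hn).strictMono).1 <|
    Set.eq_of_subset_of_ncard_le ?_ ?_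
  · rintro _ ⟨i, rfl⟩
    exact ⟨⟨f i, (Fin.val_le_of_le (f.monotone i.le_last)).trans_lt hlt⟩, rfl⟩
  · rw [← Set.image_univ, ← Set.image_univ, Set.ncard_image_of_injective _ f.injective,
      Set.ncard_image_of_injective _ (Fin.castLEOrderEmb hn).injective]

lemma prod_orderEmbedding_le_of_antitone {d n : ℕ} {σ : Fin d → ℝ} (hσ : Antitone σ)
    (hσ₀ : ∀ i, 0 ≤ σ i) (hn : n + 1 < d) {ε : ℝ}
    (hgap : σ ⟨n + 1, hn⟩ ≤ ε * σ ⟨n, by omega⟩) {f : Fin (n + 1) ↪o Fin d}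
    (hf : f ≠ Fin.castLEOrderEmb hn.le) :
    ∏ i, σ (f i) ≤ ε * ∏ i, σ (Fin.castLEOrderEmb hn.le i) := by
  rw [Fin.prod_univ_castSucc, Fin.prod_univ_castSucc, mul_left_comm]
  gcongr with i
  · exact hσ₀ _
  · exact Finset.prod_nonneg fun i _ => hσ₀ _
  · exact fun i _ => hσ₀ _
  · exact hσ (le_orderEmbedding_apply f i.castSucc)
  · exact (hσ (le_orderEmbedding_last hn.le hf)).trans hgap

variable [FiniteDimensional ℝ E] [FiniteDimensional ℝ F] {d n : ℕ}

open Set.powersetCard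

lemma orthonormalBasis_exteriorPower_apply (b : OrthonormalBasis (Fin d) ℝ E)
    (s : Set.powersetCard (Fin d) n) :
    b.exteriorPower n s = exteriorPower.ιMulti ℝ n (b ∘ ofFinEmbEquiv.symm s) := by
  rw [← OrthonormalBasis.coe_toBasis, OrthonormalBasis.toBasis_exteriorPower,
    exteriorPower.basis_apply, exteriorPower.ιMulti_family, OrthonormalBasis.coe_toBasis]

lemma exteriorPower_map_apply_orthonormalBasis {A : E →ₗ[ℝ] F} {σ : Fin d → ℝ}
    {b : OrthonormalBasis (Fin d) ℝ E} {c : OrthonormalBasis (Fin d) ℝ F}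
    (h : ∀ i, A (b i) = σ i • c i) (s : Set.powersetCard (Fin d) n) :
    exteriorPower.map n A (b.exteriorPower n s) =
      (∏ i, σ (ofFinEmbEquiv.symm s i)) • c.exteriorPower n s := by
  rw [orthonormalBasis_exteriorPower_apply, orthonormalBasis_exteriorPower_apply,
    exteriorPower.map_apply_ιMulti, ← AlternatingMap.map_smul_univ]
  exact congrArg _ (funext fun i => h _)

theorem IsSVD.nearRankOne_exteriorPower_map {A : E →ₗ[ℝ] F} {σ : Fin d → ℝ}
    {b : OrthonormalBasis (Fin d) ℝ E} {c : OrthonormalBasis (Fin d) ℝ F} (h : IsSVD A σ b c)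
    (hn : n + 1 < d) {ε : ℝ} (hε₀ : 0 ≤ ε) (hε₁ : ε ≤ 1)
    (hgap : σ ⟨n + 1, hn⟩ ≤ ε * σ ⟨n, by omega⟩) :
    NearRankOne ε (exteriorPower.map (n + 1) A).toContinuousLinearMap
      (exteriorPower.ιMulti ℝ (n + 1) (c ∘ Fin.castLE hn.le))
      (exteriorPower.ιMulti ℝ (n + 1) (b ∘ Fin.castLE hn.le)) := by
  have hprod (s : Set.powersetCard (Fin d) (n + 1)) : 0 ≤ ∏ i, σ (ofFinEmbEquiv.symm s i) :=
    Finset.prod_nonneg fun i _ => h.nonneg _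
  have := nearRankOne_of_diagonal (A := (exteriorPower.map (n + 1) A).toContinuousLinearMap)
    (exteriorPower_map_apply_orthonormalBasis h.apply_basis) hε₀ hε₁
    (i₀ := ofFinEmbEquiv (Fin.castLEOrderEmb hn.le)) (hprod _) fun s hs => ?_
  · simp only [orthonormalBasis_exteriorPower_apply, Equiv.symm_apply_apply] at this
    exact this
  · rw [abs_of_nonneg (hprod s), Equiv.symm_apply_apply]
    exact prod_orderEmbedding_le_of_antitone h.antitone h.nonneg hn hgap
      fun h => hs (ofFinEmbEquiv.symm_apply_eq.1 h)

variable (E n) in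
/-- The representation of the endomorphisms of `E` on `⋀[ℝ]^n E`, through which gaps of index `n`
become gaps of index one. -/
def exteriorPowerHom : (E →ₗ[ℝ] E) →* (⋀[ℝ]^n E →L[ℝ] ⋀[ℝ]^n E) where
  toFun A := (exteriorPower.map n A).toContinuousLinearMap
  map_one' := by
    ext x
    simp [Module.End.one_eq_id]
  map_mul' A B := by
    ext x
    simp [Module.End.mul_eq_comp]

end ExteriorPower

section Angle

open Module

variable {E F : Type*} [NormedAddCommGroup E] [InnerProductSpace ℝ E]
  [NormedAddCommGroup F] [InnerProductSpace ℝ F]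

lemma arccos_le_angle {v w : E} (hv : v ≠ 0) (hw : w ≠ 0) {q : ℝ}
    (h : ⟪v, w⟫ ^ 2 ≤ (1 - q ^ 2) * (‖v‖ ^ 2 * ‖w‖ ^ 2)) :
    Real.arccos √(1 - q ^ 2) ≤ InnerProductGeometry.angle v w := by
  have hv' := norm_pos_iff.2 hv
  have hw' := norm_pos_iff.2 hw
  refine Real.arccos_le_arccos (Real.le_sqrt_of_sq_le ?_)
  rwa [div_pow, div_le_iff₀ (pow_pos (mul_pos hv' hw') 2), mul_pow]

variable {n : ℕ} {u e : Fin n → E}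

lemma exists_orthonormalBasis_span (hu : Orthonormal ℝ u) :
    ∃ b : OrthonormalBasis (Fin n) ℝ (Submodule.span ℝ (Set.range u)), ∀ i, (b i : E) = u i := by
  refine ⟨(Basis.span hu.linearIndependent).toOrthonormalBasis ?_, fun i => ?_⟩
  · rw [show ⇑(Basis.span hu.linearIndependent) = _ from
      funext (Basis.span_apply hu.linearIndependent)]
    exact orthonormal_span hu
  · rw [Basis.coe_toOrthonormalBasis, Basis.span_apply]

variable [FiniteDimensional ℝ E]

lemma IsSVD.normDet_eq_prod {d : ℕ} {A : E →ₗ[ℝ] F} {σ : Fin d → ℝ}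
    {b : OrthonormalBasis (Fin d) ℝ E} {c : OrthonormalBasis (Fin d) ℝ F} (h : IsSVD A σ b c) :
    A.normDet = ∏ i, σ i := by
  have hA : A.toMatrix b.toBasis c.toBasis = Matrix.diagonal σ := by
    ext i j
    rw [LinearMap.toMatrix_apply, OrthonormalBasis.coe_toBasis, h.apply_basis, map_smul,
      Finsupp.smul_apply, OrthonormalBasis.coe_toBasis_repr_apply, c.repr_self]
    rcases eq_or_ne i j with rfl | hij
    · simp
    · simp [hij]
  rw [A.normDet_eq_norm_det_toMatrix b c, hA, Matrix.det_diagonal,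
    Real.norm_of_nonneg (Finset.prod_nonneg fun i _ => h.nonneg i)]

lemma normDet_mul_norm_le_norm_apply [FiniteDimensional ℝ F] (hEF : finrank ℝ E = finrank ℝ F)
    {A : E →ₗ[ℝ] F} (hA : ∀ x, ‖A x‖ ≤ ‖x‖) (x : E) : A.normDet * ‖x‖ ≤ ‖A x‖ := by
  obtain ⟨σ, b, c, h⟩ := exists_isSVD rfl hEF.symm A
  have hσ (i) : σ i ≤ 1 := by
    simpa [h.apply_basis, norm_smul, abs_of_nonneg (h.nonneg i)] using hA (b i)
  rcases Nat.eq_zero_or_pos (finrank ℝ E) with h₀ | h₀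
  · have := finrank_zero_iff.1 h₀
    simp [Subsingleton.elim x 0]
  have hle : A.normDet ≤ σ ⟨finrank ℝ E - 1, by omega⟩ := by
    rw [h.normDet_eq_prod, ← Finset.mul_prod_erase _ _ (Finset.mem_univ _)]
    exact mul_le_of_le_one_right (h.nonneg _)
      (Finset.prod_le_one (fun i _ => h.nonneg i) fun i _ => hσ i)
  refine (mul_le_mul_of_nonneg_right hle (norm_nonneg x)).trans (h.le_norm_apply fun i hi => ?_)
  exact absurd hi (not_lt.2 (Nat.le_sub_one_of_lt i.2))

lemma abs_det_inner_mul_norm_le_norm_starProjection (hu : Orthonormal ℝ u) (he : Orthonormal ℝ e)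
    {v : E} (hv : v ∈ Submodule.span ℝ (Set.range u)) :
    |(Matrix.of fun i j => ⟪u j, e i⟫).det| * ‖v‖ ≤
      ‖(Submodule.span ℝ (Set.range e)).starProjection v‖ := by
  obtain ⟨bu, hbu⟩ := exists_orthonormalBasis_span hu
  obtain ⟨be, hbe⟩ := exists_orthonormalBasis_span he
  let W := Submodule.span ℝ (Set.range e)
  let P : Submodule.span ℝ (Set.range u) →ₗ[ℝ] W :=
    W.orthogonalProjectionOnto.toLinearMap ∘ₗ Submodule.subtype _
  have hP : P.normDet = |(Matrix.of fun i j => ⟪u j, e i⟫).det| := by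
    rw [P.normDet_eq_norm_det_toMatrix bu be, Real.norm_eq_abs]
    congr 2
    ext i j
    simp [LinearMap.toMatrix_apply, be.repr_apply_apply, P, W, ← hbu, ← hbe, real_inner_comm]
  rw [← hP]
  refine normDet_mul_norm_le_norm_apply (A := P) ?_
    (fun x => W.norm_orthogonalProjectionOnto_apply_le x) ⟨v, hv⟩
  rw [finrank_eq_card_basis bu.toBasis, finrank_eq_card_basis be.toBasis]

lemma sq_inner_le_of_mem_span (hu : Orthonormal ℝ u) (he : Orthonormal ℝ e) {v w : E}
    (hv : v ∈ Submodule.span ℝ (Set.range u)) (hw : w ∈ (Submodule.span ℝ (Set.range e))ᗮ) :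
    ⟪v, w⟫ ^ 2 ≤ (1 - (Matrix.of fun i j => ⟪u j, e i⟫).det ^ 2) * (‖v‖ ^ 2 * ‖w‖ ^ 2) := by
  let W := Submodule.span ℝ (Set.range e)
  have hinner : ⟪v, w⟫ = ⟪Wᗮ.starProjection v, w⟫ := by
    rw [Submodule.inner_starProjection_left_eq_right, Submodule.starProjection_eq_self_iff.2 hw]
  have hproj := abs_det_inner_mul_norm_le_norm_starProjection hu he hv
  calc ⟪v, w⟫ ^ 2 ≤ ‖Wᗮ.starProjection v‖ ^ 2 * ‖w‖ ^ 2 := by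
        rw [hinner, ← mul_pow, ← sq_abs]
        gcongr
        exact abs_real_inner_le_norm _ _
    _ = (‖v‖ ^ 2 - ‖W.starProjection v‖ ^ 2) * ‖w‖ ^ 2 := by
        rw [W.norm_sq_eq_add_norm_sq_starProjection v, add_sub_cancel_left]
    _ ≤ (‖v‖ ^ 2 - (|(Matrix.of fun i j => ⟪u j, e i⟫).det| * ‖v‖) ^ 2) * ‖w‖ ^ 2 := by
        gcongr
    _ = _ := by rw [mul_pow, sq_abs]; ring

theorem arccos_le_subAngle {d n : ℕ} {u e : Fin n → Euc d} (hu : Orthonormal ℝ u)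
    (he : Orthonormal ℝ e) {P Q : Submodule ℝ (Euc d)} (hP : P ≤ Submodule.span ℝ (Set.range u))
    (hQ : Q ≤ (Submodule.span ℝ (Set.range e))ᗮ) (hP₀ : P ≠ ⊥) (hQ₀ : Q ≠ ⊥) {q : ℝ} (hq₀ : 0 ≤ q)
    (hq : q ≤ |(Matrix.of fun i j => ⟪u j, e i⟫).det|) :
    Real.arccos √(1 - q ^ 2) ≤ subAngle P Q := by
  obtain ⟨v₀, hv₀⟩ := P.ne_bot_iff.1 hP₀
  obtain ⟨w₀, hw₀⟩ := Q.ne_bot_iff.1 hQ₀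
  refine le_csInf ⟨_, v₀, hv₀.1, hv₀.2, w₀, hw₀.1, hw₀.2, rfl⟩ ?_
  rintro _ ⟨v, hv, hv0, w, hw, hw0, rfl⟩
  refine arccos_le_angle hv0 hw0 <| (sq_inner_le_of_mem_span hu he (hP hv) (hQ hw)).trans ?_
  rw [← sq_abs (Matrix.det _)]
  gcongr

end Angle

section Anosov

variable {d n : ℕ}

variable (d n) in
/-- The exterior power representation of `GL (Fin d) ℝ` on `⋀[ℝ]^n (Euc d)`. -/
def exteriorPowerGL : GL (Fin d) ℝ →* (⋀[ℝ]^n (Euc d) →L[ℝ] ⋀[ℝ]^n (Euc d)) :=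
  (exteriorPowerHom (Euc d) n).comp <|
    (Matrix.toLpLinAlgEquiv 2 : _ ≃ₐ[ℝ] (Euc d →ₗ[ℝ] Euc d)).toMonoidHom.comp
      (Units.coeHom (Matrix (Fin d) (Fin d) ℝ))

lemma leftInverse_toEuclideanLin_mat_inv (g : GL (Fin d) ℝ) :
    Function.LeftInverse (Matrix.toEuclideanLin (mat g⁻¹)) (Matrix.toEuclideanLin (mat g)) := by
  intro x
  rw [← LinearMap.comp_apply, ← Matrix.toLpLin_mul_same, mat, mat, Units.inv_mul,
    Matrix.toLpLin_one, LinearMap.id_apply]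

variable {g h : GL (Fin d) ℝ} {σ : Fin d → ℝ} {b c : OrthonormalBasis (Fin d) ℝ (Euc d)} {ε : ℝ}

lemma IsSVD.le_mul_of_sv_div_sv_le (hσ : IsSVD (Matrix.toEuclideanLin (mat g)) σ b c)
    (hn : n + 1 < d) (hε : sv (mat g) (n + 2) / sv (mat g) (n + 1) ≤ ε) :
    σ ⟨n + 1, hn⟩ ≤ ε * σ ⟨n, by omega⟩ := by
  rw [← div_le_iff₀ (hσ.pos (leftInverse_toEuclideanLin_mat_inv g).injective _)]
  rwa [← hσ.sv_eq, ← hσ.sv_eq]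

lemma IsSVD.nearRankOne_exteriorPowerGL (hσ : IsSVD (Matrix.toEuclideanLin (mat g)) σ b c)
    (hn : n + 1 < d) (hε : sv (mat g) (n + 2) / sv (mat g) (n + 1) ≤ ε) :
    NearRankOne ε (exteriorPowerGL d (n + 1) g)
      (exteriorPower.ιMulti ℝ (n + 1) (c ∘ Fin.castLE hn.le))
      (exteriorPower.ιMulti ℝ (n + 1) (b ∘ Fin.castLE hn.le)) := by
  have hpos := hσ.pos (leftInverse_toEuclideanLin_mat_inv g).injective
  refine .mono (hσ.nearRankOne_exteriorPower_map hn (div_nonneg (hpos _).le (hpos _).le)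
    ((div_le_one (hpos _)).2 (hσ.antitone ?_)) (div_mul_cancel₀ _ (hpos _).ne').ge)
    ((div_le_iff₀ (hpos _)).2 (hσ.le_mul_of_sv_div_sv_le hn hε))
  exact Fin.mk_le_mk.2 n.le_succ

lemma exists_nearRankOne_exteriorPowerGL (hn : n + 1 < d)
    (hε : sv (mat g) (n + 2) / sv (mat g) (n + 1) ≤ ε) :
    ∃ l r, NearRankOne ε (exteriorPowerGL d (n + 1) g) l r :=
  have ⟨_, _, _, hσ⟩ := exists_isSVD finrank_euclideanSpace_fin finrank_euclideanSpace_fin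
    (Matrix.toEuclideanLin (mat g))
  ⟨_, _, hσ.nearRankOne_exteriorPowerGL hn hε⟩

lemma norm_exteriorPowerGL_pos (hn : n + 1 < d) (g : GL (Fin d) ℝ) :
    0 < ‖exteriorPowerGL d (n + 1) g‖ :=
  have ⟨_, _, h⟩ := exists_nearRankOne_exteriorPowerGL hn (g := g) le_rfl
  h.norm_pos_of_isUnit ((Group.isUnit g).map _)

lemma hasGap_of_sv_div_sv_lt_one (hn : n + 1 < d)
    (hg : sv (mat g) (n + 2) / sv (mat g) (n + 1) < 1) :
    HasGap (mat g) (n + 1) ∧ HasGap (mat g⁻¹) (d - (n + 1)) := by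
  obtain ⟨σ, b, c, hσ⟩ := exists_isSVD finrank_euclideanSpace_fin finrank_euclideanSpace_fin
    (Matrix.toEuclideanLin (mat g))
  have hpos := hσ.pos (leftInverse_toEuclideanLin_mat_inv g).injective
  have hlt : σ ⟨n + 1, hn⟩ < σ ⟨n, by omega⟩ :=
    (hσ.le_mul_of_sv_div_sv_le hn le_rfl).trans_lt (mul_lt_of_lt_one_left (hpos _) hg)
  exact ⟨hσ.hasGap hn hlt, hσ.hasGap_of_leftInverse hn hlt (leftInverse_toEuclideanLin_mat_inv g)⟩

lemma span_image_ne_bot (b : OrthonormalBasis (Fin d) ℝ (Euc d)) {p : ℕ} (hp : 0 < p)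
    (hd : 0 < d) : Submodule.span ℝ (b '' {i | (i : ℕ) < p}) ≠ ⊥ :=
  Submodule.ne_bot_iff _ |>.2 ⟨b ⟨0, hd⟩, Submodule.subset_span ⟨_, hp, rfl⟩,
    b.orthonormal.ne_zero _⟩

lemma span_image_le_orthogonal_span_rev (b : OrthonormalBasis (Fin d) ℝ (Euc d)) (hn : n ≤ d) :
    Submodule.span ℝ (b '' {i | (i : ℕ) < d - n}) ≤
      (Submodule.span ℝ (Set.range (b.reindex Fin.revPerm ∘ Fin.castLE hn)))ᗮ := by
  refine Submodule.isOrtho_span.2 ?_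
  rintro _ ⟨i, hi, rfl⟩ _ ⟨j, rfl⟩
  rw [Function.comp_apply, b.reindex_apply]
  refine b.orthonormal.2 fun hij => ?_
  subst hij
  have : d - (j + 1) < d - n := hi
  omega

theorem arccos_le_subAngle_cartanAttractor (hn : n + 1 < d)
    (hg : sv (mat g⁻¹) (n + 2) / sv (mat g⁻¹) (n + 1) ≤ ε)
    (hh : sv (mat h) (n + 2) / sv (mat h) (n + 1) ≤ ε) {q : ℝ} (hq : 0 ≤ q)
    (hgh : (q + (ε + ε)) *
      (‖exteriorPowerGL d (n + 1) g⁻¹‖ * ‖exteriorPowerGL d (n + 1) h‖) ≤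
        ‖exteriorPowerGL d (n + 1) (g⁻¹ * h)‖) :
    Real.arccos √(1 - q ^ 2) ≤
      subAngle (cartanAttractor (mat h) (n + 1)) (cartanAttractor (mat g) (d - (n + 1))) := by
  obtain ⟨σ, b, c, hσ, hU⟩ := exists_isSVD_cartanAttractor (mat h) (n + 1)
  obtain ⟨τ, b', c', hτ, hU'⟩ := exists_isSVD_cartanAttractor (mat g) (d - (n + 1))
  have hτ' := hτ.leftInverse (leftInverse_toEuclideanLin_mat_inv g)
  have hspan : Submodule.span ℝ (c '' {i | (i : ℕ) < n + 1}) ≤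
      Submodule.span ℝ (Set.range (c ∘ Fin.castLE hn.le)) := by
    refine Submodule.span_mono ?_
    rintro _ ⟨i, hi, rfl⟩
    exact ⟨⟨i, hi⟩, rfl⟩
  rw [hU, hU']
  refine arccos_le_subAngle (c.orthonormal.comp _ (Fin.castLE_injective _))
    ((c'.reindex _).orthonormal.comp _ (Fin.castLE_injective _)) hspan
    (span_image_le_orthogonal_span_rev c' hn.le) (span_image_ne_bot c (by omega) (by omega))
    (span_image_ne_bot c' (by omega) (by omega)) hq ?_
  rw [← exteriorPower.inner_ιMulti_ιMulti, real_inner_comm]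
  rw [map_mul] at hgh
  exact (hτ'.nearRankOne_exteriorPowerGL hn hg).le_abs_inner (hσ.nearRankOne_exteriorPowerGL hn hh)
    (norm_exteriorPowerGL_pos hn _) (norm_exteriorPowerGL_pos hn _) hgh

theorem exists_mul_norm_exteriorPowerGL_le {Γ : Type*} [Group Γ] {w : Γ → ℕ}
    (hw : {γ | w γ = 1}.Finite) (hn : n + 1 < d) (ρ : Γ →* GL (Fin d) ℝ) {c θ : ℝ} (hc : 0 ≤ c)
    (hθ₀ : 0 < θ) (hθ₁ : θ < 1)
    (hρ : ∀ γ, sv (mat (ρ γ)) (n + 2) / sv (mat (ρ γ)) (n + 1) ≤ c * θ ^ w γ) :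
    ∃ q > 0, ∃ L, ∀ k α, IsGeodesicSegment w k α → ∀ m, L ≤ m → m + L ≤ k → α m = 1 →
      q * (‖exteriorPowerGL d (n + 1) (ρ (α 0))⁻¹‖ * ‖exteriorPowerGL d (n + 1) (ρ (α k))‖) ≤
        ‖exteriorPowerGL d (n + 1) ((ρ (α 0))⁻¹ * ρ (α k))‖ := by
  have : CompleteSpace (⋀[ℝ]^(n + 1) (Euc d)) := FiniteDimensional.complete ℝ _
  obtain ⟨K, hK⟩ := (hw.image fun γ => ‖exteriorPowerGL d (n + 1) (ρ γ)‖).bddAbove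
  obtain ⟨q, hq, L, hL⟩ := exists_mul_norm_le_norm_of_isGeodesicSegment
    (T := (exteriorPowerGL d (n + 1)).comp ρ) (le_max_left 1 K) hc hθ₀ hθ₁
    (fun γ hγ => (hK ⟨γ, hγ, rfl⟩).trans (le_max_right 1 K))
    fun γ => exists_nearRankOne_exteriorPowerGL hn (hρ γ)
  refine ⟨q, hq, L, fun k α hα m hLm hmk hm => ?_⟩
  simpa only [hm, mul_one, inv_one, one_mul, MonoidHom.comp_apply, map_mul, map_inv] using
    hL k α hα m hLm hmk

lemma mem_of_wordLength_eq_one {Γ : Type*} [Group Γ] {S : Set Γ} {γ : Γ}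
    (h : wordLength S γ = 1) : γ ∈ S := by
  obtain ⟨l, hl, hlS, rfl⟩ := Nat.sInf_mem (Nat.nonempty_of_sInf_eq_succ h)
  rw [← wordLength, h] at hl
  obtain ⟨s, rfl⟩ := List.length_eq_one_iff.1 hl
  simpa using hlS

end Anosov

theorem stmt10_general {Γ : Type*} [Group Γ] {w : Γ → ℕ} (hw : {γ | w γ = 1}.Finite)
    {d : ℕ} (p : ℕ) (hp1 : 1 ≤ p) (hpd : p ≤ d - 1) (ρ : Γ →* GL (Fin d) ℝ)
    (c μ : ℝ) (hc : 0 ≤ c) (hμ : 0 < μ)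
    (hAnosov : ∀ γ : Γ, sv (mat (ρ γ)) (p + 1) / sv (mat (ρ γ)) p ≤
      c * Real.exp (-μ * w γ)) :
    ∃ δ > (0 : ℝ), ∃ L : ℕ, ∀ k : ℕ, ∀ α : ℕ → Γ,
      (∀ i j : ℕ, i ≤ k → j ≤ k → w ((α i)⁻¹ * α j) = Nat.dist i j) →
      (∃ m ≤ k, α m = 1) → L ≤ w (α 0) → L ≤ w (α k) →
      HasGap (mat (ρ (α k))) p ∧ HasGap (mat (ρ (α 0))) p ∧
      HasGap (mat ((ρ (α 0))⁻¹)) (d - p) ∧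
      δ < subAngle (cartanAttractor (mat (ρ (α k))) p)
            (cartanAttractor (mat (ρ (α 0))) (d - p)) := by
  obtain ⟨n, rfl⟩ := Nat.exists_eq_add_of_le' hp1
  have hn : n + 1 < d := by omega
  have hθ (m : ℕ) : Real.exp (-μ * m) = Real.exp (-μ) ^ m := by rw [← Real.exp_nat_mul, mul_comm]
  simp only [hθ] at hAnosov
  have hθ₁ : Real.exp (-μ) < 1 := Real.exp_lt_one_iff.2 (neg_neg_of_pos hμ)
  obtain ⟨q, hq, L₀, hL₀⟩ :=
    exists_mul_norm_exteriorPowerGL_le hw hn ρ hc (Real.exp_pos _) hθ₁ hAnosov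
  have hlim := (tendsto_pow_atTop_nhds_zero_of_lt_one (Real.exp_pos _).le hθ₁).const_mul c
  obtain ⟨L₁, hL₁⟩ := eventually_atTop.1 <|
    hlim.eventually_lt_const (show c * 0 < min (q / 4) 1 by rw [mul_zero]; positivity)
  have hsv {γ} (hγ : max L₀ L₁ ≤ w γ) :=
    lt_min_iff.1 ((hAnosov γ).trans_lt (hL₁ _ ((le_max_right _ _).trans hγ)))
  have hδ : 0 < Real.arccos √(1 - (q / 2) ^ 2) := by
    rw [Real.arccos_pos, Real.sqrt_lt' one_pos]
    nlinarith
  refine ⟨_, half_pos hδ, max L₀ L₁, fun k α hα ⟨m, hmk, hm⟩ h₀ hk => ?_⟩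
  obtain ⟨hα₀, hα₀', hαk⟩ := IsGeodesicSegment.apply_ends_of_apply_eq_one hα hmk hm
  have hgap := hasGap_of_sv_div_sv_lt_one hn (hsv h₀).2
  refine ⟨(hasGap_of_sv_div_sv_lt_one hn (hsv hk).2).1, hgap.1, hgap.2, ?_⟩
  have hinv := (hsv (γ := (α 0)⁻¹) (by omega)).1
  rw [map_inv] at hinv
  refine (half_lt_self hδ).trans_le (arccos_le_subAngle_cartanAttractor hn hinv.le (hsv hk).1.le
    (half_pos hq).le ?_)
  rw [show q / 2 + (q / 4 + q / 4) = q by ring]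
  exact hL₀ k α hα m (by omega) (by omega) hm

/-- Proposition 3.4 (`weakmorselemma`) of the paper. -/
theorem stmt10 {Γ : Type*} [Group Γ] (S : Finset Γ)
    (hSsymm : ∀ s ∈ S, s⁻¹ ∈ S) (hSgen : Subgroup.closure (S : Set Γ) = ⊤)
    {d : ℕ} (p : ℕ) (hp1 : 1 ≤ p) (hpd : p ≤ d - 1)
    (ρ : Γ →* GL (Fin d) ℝ)
    (c μ : ℝ) (hc : 0 < c) (hμ : 0 < μ)
    (hAnosov : ∀ γ : Γ, sv (mat (ρ γ)) (p + 1) / sv (mat (ρ γ)) p ≤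
      c * Real.exp (-μ * (wordLength (S : Set Γ) γ : ℝ))) :
    ∃ δ > (0 : ℝ), ∃ L : ℕ, ∀ k : ℕ, ∀ α : ℕ → Γ,
      (∀ i j : ℕ, i ≤ k → j ≤ k →
        wordLength (S : Set Γ) ((α i)⁻¹ * α j) = Nat.dist i j) →
      (∃ m ≤ k, α m = 1) →
      L ≤ wordLength (S : Set Γ) (α 0) → L ≤ wordLength (S : Set Γ) (α k) →
      HasGap (mat (ρ (α k))) p ∧ HasGap (mat (ρ (α 0))) p ∧
      HasGap (mat ((ρ (α 0))⁻¹)) (d - p) ∧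
      δ < subAngle (cartanAttractor (mat (ρ (α k))) p)
            (cartanAttractor (mat (ρ (α 0))) (d - p)) :=
  stmt10_general (S.finite_toSet.subset fun _ => mem_of_wordLength_eq_one) p hp1 hpd ρ c μ hc.le hμ
    hAnosov

end Paper
end
end
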